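/- Fix real κ > 0 and η > 0. For every ε > 0 there exists f₀ > 0 such that for all f ∈ (0, f₀) and all real R_l, R_u with f^{1/100} < R_l and 2R_l < R_u, the number N of zeros of D_f, counted with multiplicity (each zero weighted by its order of vanishing), lying in the set {z ∈ ℂ : Re z > 0, R_l ≤ |z| < R_u}, is finite and satisfies ((1−ε)/(2πf))·(R_u^{3/2} − (5/3)·R_l^{3/2}) < N < ((1+ε)/(2πf))·((5/3)·R_u^{3/2} − R_l^{3/2}). -/

import Mathlib

open Real

/-- Taylor coefficients of the Airy function `Ai`:
`a₀ = 3^{−2/3}/Γ(2/3)`, `a₁ = −3^{−1/3}/Γ(1/3)`, `a₂ = 0`,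
`a_{k+3} = a_k/((k+3)(k+2))`. -/
noncomputable def airyCoeff : ℕ → ℂ
  | 0 => (3 : ℂ) ^ (-(2 : ℂ) / 3) / Complex.Gamma (2 / 3)
  | 1 => -((3 : ℂ) ^ (-(1 : ℂ) / 3) / Complex.Gamma (1 / 3))
  | 2 => 0
  | (k + 3) => airyCoeff k / (((k : ℂ) + 3) * ((k : ℂ) + 2))

/-- The Airy function `Ai`, as the entire function with the above Taylor
coefficients at `0`. -/
noncomputable def Ai (z : ℂ) : ℂ := ∑' k : ℕ, airyCoeff k * z ^ k

/-- `ω = e^{2πi/3}` -/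
noncomputable def ωc : ℂ := Complex.exp (2 * π * Complex.I / 3)

/-- `W = f^{1/3}·e^{−iπ/6}/(2π)` -/
noncomputable def Wf (f : ℝ) : ℂ :=
  ((f ^ ((1 : ℝ) / 3) : ℝ) : ℂ) * Complex.exp (-(π : ℂ) * Complex.I / 6) / (2 * π)

/-- `α₊(z) = Ai(−ω(z − κf)f^{−2/3})·Ai(−(z − κf)f^{−2/3})` -/
noncomputable def alphaP (κ f : ℝ) (z : ℂ) : ℂ :=
  Ai (-ωc * (z - κ * f) * ((f ^ (-(2 : ℝ) / 3) : ℝ) : ℂ)) *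
    Ai (-(z - κ * f) * ((f ^ (-(2 : ℝ) / 3) : ℝ) : ℂ))

/-- `α₋(z) = Ai(−ω(z + κf)f^{−2/3})·Ai(−(z + κf)f^{−2/3})` -/
noncomputable def alphaM (κ f : ℝ) (z : ℂ) : ℂ :=
  Ai (-ωc * (z + κ * f) * ((f ^ (-(2 : ℝ) / 3) : ℝ) : ℂ)) *
    Ai (-(z + κ * f) * ((f ^ (-(2 : ℝ) / 3) : ℝ) : ℂ))

/-- `β₊(z) = Ai(−ω(z + κf)f^{−2/3})·Ai(−(z − κf)f^{−2/3})` -/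
noncomputable def betaP (κ f : ℝ) (z : ℂ) : ℂ :=
  Ai (-ωc * (z + κ * f) * ((f ^ (-(2 : ℝ) / 3) : ℝ) : ℂ)) *
    Ai (-(z - κ * f) * ((f ^ (-(2 : ℝ) / 3) : ℝ) : ℂ))

/-- `β₋(z) = Ai(−ω(z − κf)f^{−2/3})·Ai(−(z + κf)f^{−2/3})` -/
noncomputable def betaM (κ f : ℝ) (z : ℂ) : ℂ :=
  Ai (-ωc * (z - κ * f) * ((f ^ (-(2 : ℝ) / 3) : ℝ) : ℂ)) *
    Ai (-(z + κ * f) * ((f ^ (-(2 : ℝ) / 3) : ℝ) : ℂ))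

/-- The resonance determinant `D_f` of the Stark Hamiltonian
`p² + fx + η⁻¹(δ_κ + δ_{−κ})`:
`D_f(z) = 1 + (α₊ + α₋)/(ηW) + β₊(β₋ − β₊)/(η²W²)`. -/
noncomputable def Df (κ η f : ℝ) (z : ℂ) : ℂ :=
  1 + (alphaP κ f z + alphaM κ f z) / (η * Wf f)
    + betaP κ f z * (betaM κ f z - betaP κ f z) / (η ^ 2 * (Wf f) ^ 2)

/-- The order of vanishing of `g` at `z`: the least `n` with
`(d/dz)ⁿ g(z) ≠ 0` (for an analytic function not vanishing identically near
`z`, this is the multiplicity of `z` as a zero of `g`). -/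
noncomputable def vanishingOrder (g : ℂ → ℂ) (z : ℂ) : ℕ :=
  sInf {n : ℕ | iteratedDeriv n g z ≠ 0}

/-! Put `z = k²`. The saddle point expansion of `Ai` turns `D_f(k²)`, up to relative errors that
are small powers of `f`, into `steadyPart + e^{4ik³/(3f)} · oscPart`, whose coefficients are
polynomials in `1 / (2ηk)` and `e^{2iκk}`. The oscillating factor is negligible when `arg k` is
bounded away from `0` above and dominates when it is bounded away from `0` below; close to the
real axis there are circles `|k| = r` on which both parts have nearly the same argument, so that
`D_f` has no zeros there. Between two such circles the argument principle, applied in the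
coordinate `p = log k`, counts the zeros: the logarithm of the steady part, used on the upper half
of the boundary, and that of the oscillating part, used on the lower half, differ on the real axis
by `4ik³/(3f)` up to a bounded error, which gives `4(b³ - a³)/(3f) + O(1)` for `2πN`. Good circles
are so dense that the given annulus is sandwiched between two regions of this kind. -/

noncomputable section

open Complex (I)
open MeasureTheory Set Filter Topology

/-! ### The Airy function as a Laplace transform -/

/-- The moments `∫₀^∞ sⁿ e^{-s³/3} ds`, which carry the Gamma factors of the Taylor coefficients
of `Ai`. -/
def cubicMoment (n : ℕ) : ℝ :=
  ∫ s in Ioi (0 : ℝ), s ^ n * Real.exp (-(s ^ 3 / 3))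

/-- The Laplace transform of `e^{-s³/3}`; `Ai` is a combination of two rotations of it. -/
def cubicLaplace (x : ℂ) : ℂ :=
  ∫ s in Ioi (0 : ℝ), Complex.exp (-(s : ℂ) ^ 3 / 3 - x * s)

lemma cubicMoment_eq (n : ℕ) :
    cubicMoment n =
      (1 / 3 : ℝ) ^ (-((n : ℝ) + 1) / 3) * (1 / 3) * Real.Gamma (((n : ℝ) + 1) / 3) := by
  have hn : (-1 : ℝ) < n := by linarith [(n.cast_nonneg : (0 : ℝ) ≤ n)]
  rw [← integral_rpow_mul_exp_neg_mul_rpow (p := 3) (q := n) (b := 1 / 3) (by norm_num) hn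
    (by norm_num), cubicMoment]
  refine setIntegral_congr_fun measurableSet_Ioi fun s _ => ?_
  have hs : s ^ (3 : ℝ) = s ^ 3 := by exact_mod_cast Real.rpow_natCast s 3
  simp only [hs, Real.rpow_natCast]
  ring_nf

lemma cubicMoment_add_three (n : ℕ) : cubicMoment (n + 3) = (n + 1) * cubicMoment n := by
  have hn : (0 : ℝ) < ((n : ℝ) + 1) / 3 := by positivity
  have hΓ : (((n + 3 : ℕ) : ℝ) + 1) / 3 = ((n : ℝ) + 1) / 3 + 1 := by push_cast; ring
  have hpow : -(((n + 3 : ℕ) : ℝ) + 1) / 3 = -((n : ℝ) + 1) / 3 - 1 := by push_cast; ring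
  rw [cubicMoment_eq, cubicMoment_eq, hΓ, hpow, Real.Gamma_add_one hn.ne',
    Real.rpow_sub_one (by norm_num)]
  ring

lemma cubicMoment_zero : cubicMoment 0 = 3 ^ (-(2 : ℝ) / 3) * Real.Gamma (1 / 3) := by
  rw [cubicMoment_eq, one_div, Real.inv_rpow (by norm_num), ← Real.rpow_neg (by norm_num),
    ← Real.rpow_neg_one, ← Real.rpow_add (by norm_num)]
  norm_num

lemma cubicMoment_one : cubicMoment 1 = 3 ^ (-(1 : ℝ) / 3) * Real.Gamma (2 / 3) := by
  rw [cubicMoment_eq, one_div, Real.inv_rpow (by norm_num), ← Real.rpow_neg (by norm_num),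
    ← Real.rpow_neg_one, ← Real.rpow_add (by norm_num)]
  norm_num

lemma integrableOn_exp_mul_sub_cube (r : ℝ) :
    IntegrableOn (fun s : ℝ => Real.exp (r * s - s ^ 3 / 3)) (Ioi 0) := by
  have hdom : IntegrableOn (fun s : ℝ => Real.exp ((|r| + 2) ^ 2) * Real.exp (-s)) (Ioi 0) :=
    (integrableOn_exp_neg_Ioi 0).const_mul _
  refine Integrable.mono' hdom (by fun_prop) ?_
  filter_upwards [ae_restrict_mem measurableSet_Ioi] with s hs
  have hs : 0 < s := hs
  rw [Real.norm_eq_abs, Real.abs_exp, ← Real.exp_add]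
  apply Real.exp_le_exp.2
  have hr := le_abs_self r
  have hr0 := abs_nonneg r
  nlinarith [mul_le_mul_of_nonneg_right hr hs.le, mul_nonneg hs.le (sq_nonneg (s - 2)),
    mul_nonneg hr0 hs.le, sq_nonneg (s - (|r| + 2)), sq_nonneg (s - 2), sq_nonneg (s - 1)]

lemma hasSum_cubicLaplace (x : ℂ) :
    HasSum (fun n : ℕ => (-x) ^ n / (n.factorial : ℂ) * cubicMoment n) (cubicLaplace x) := by
  have hterm (n : ℕ) : (∫ s in Ioi (0 : ℝ),
      (-x * s) ^ n / (n.factorial : ℂ) * Complex.exp (-(s : ℂ) ^ 3 / 3)) =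
      (-x) ^ n / (n.factorial : ℂ) * cubicMoment n := by
    rw [cubicMoment, ← integral_complex_ofReal, ← integral_const_mul]
    refine setIntegral_congr_fun measurableSet_Ioi fun s _ => ?_
    push_cast
    rw [mul_pow, neg_div]
    ring
  have key := hasSum_integral_of_dominated_convergence (μ := volume.restrict (Ioi (0 : ℝ)))
    (F := fun (n : ℕ) (s : ℝ) => (-x * s) ^ n / (n.factorial : ℂ) * Complex.exp (-(s : ℂ) ^ 3 / 3))
    (f := fun s : ℝ => Complex.exp (-(s : ℂ) ^ 3 / 3 - x * s))
    (fun n s => (‖x‖ * s) ^ n / n.factorial * Real.exp (-(s ^ 3 / 3))) (fun n => by fun_prop)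
  simp only [hterm] at key
  refine key ?_ ?_ ?_ ?_
  · intro n
    filter_upwards [ae_restrict_mem measurableSet_Ioi] with s hs
    rw [norm_mul, Complex.norm_exp, norm_div, norm_pow, norm_mul, norm_neg, Complex.norm_real,
      Real.norm_of_nonneg (le_of_lt hs), Complex.norm_natCast]
    norm_cast
    rw [neg_div]
  · filter_upwards with s
    exact (NormedSpace.expSeries_div_summable (𝔸 := ℝ) (‖x‖ * s)).mul_right _
  · refine (integrableOn_exp_mul_sub_cube ‖x‖).congr_fun (fun s _ => ?_) measurableSet_Ioi
    beta_reduce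
    rw [tsum_mul_right, sub_eq_add_neg, Real.exp_add, Real.exp_eq_exp_ℝ,
      NormedSpace.exp_eq_tsum_div]
  · filter_upwards with s
    have h := (NormedSpace.expSeries_div_hasSum_exp (𝔸 := ℂ) (-x * s)).mul_right
      (Complex.exp (-(s : ℂ) ^ 3 / 3))
    rw [← Complex.exp_eq_exp_ℂ, ← Complex.exp_add] at h
    rwa [show -(s : ℂ) ^ 3 / 3 - x * s = -x * s + -(s : ℂ) ^ 3 / 3 by ring]

/-- The sixth root of unity `e^{iπ/3}`, the direction of the steepest descent rays of the Airy
integral. -/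
def sixthRoot : ℂ := Complex.exp (π * I / 3)

lemma sixthRoot_eq_exp_ofReal_mul_I : sixthRoot = Complex.exp ((π / 3 : ℝ) * I) := by
  rw [sixthRoot]
  push_cast
  ring_nf

lemma norm_sixthRoot : ‖sixthRoot‖ = 1 := by
  rw [sixthRoot_eq_exp_ofReal_mul_I, Complex.norm_exp_ofReal_mul_I]

lemma sixthRoot_eq : sixthRoot = 1 / 2 + (√3 / 2 : ℝ) * I := by
  rw [sixthRoot_eq_exp_ofReal_mul_I, Complex.exp_mul_I, ← Complex.ofReal_cos,
    ← Complex.ofReal_sin, Real.cos_pi_div_three, Real.sin_pi_div_three]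
  push_cast
  ring

lemma sixthRoot_cube : sixthRoot ^ 3 = -1 := by
  rw [sixthRoot, ← Complex.exp_nat_mul, Nat.cast_ofNat, mul_div_cancel₀ _ three_ne_zero,
    Complex.exp_pi_mul_I]

lemma conj_sixthRoot : (starRingEnd ℂ) sixthRoot = sixthRoot⁻¹ := by
  rw [Complex.inv_def, Complex.normSq_eq_norm_sq, norm_sixthRoot]
  simp

lemma sixthRoot_inv : sixthRoot⁻¹ = 1 / 2 - (√3 / 2 : ℝ) * I := by
  rw [← conj_sixthRoot, sixthRoot_eq]
  simp [sub_eq_add_neg, Complex.conj_ofNat]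

lemma Gamma_one_third_mul_Gamma_two_thirds :
    Real.Gamma (1 / 3) * Real.Gamma (2 / 3) * √3 = 2 * π := by
  have h := Real.Gamma_mul_Gamma_one_sub (1 / 3)
  rw [show (1 : ℝ) - 1 / 3 = 2 / 3 by norm_num, show π * (1 / 3) = π / 3 by ring,
    Real.sin_pi_div_three] at h
  have h3 : √3 ≠ 0 := by positivity
  rw [h]
  field_simp

lemma airyCoeff_zero : airyCoeff 0 = (√3 / (2 * π) * cubicMoment 0 : ℝ) := by
  have h : airyCoeff 0 = (3 ^ (-(2 : ℝ) / 3) / Real.Gamma (2 / 3) : ℝ) := by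
    rw [airyCoeff, Complex.ofReal_div, Complex.ofReal_cpow (by norm_num), ← Complex.Gamma_ofReal]
    push_cast
    rfl
  have hΓ : Real.Gamma (2 / 3) ≠ 0 := (Real.Gamma_pos_of_pos (by norm_num)).ne'
  have hΓ' : Real.Gamma (1 / 3) ≠ 0 := (Real.Gamma_pos_of_pos (by norm_num)).ne'
  rw [h, cubicMoment_zero, ← Gamma_one_third_mul_Gamma_two_thirds]
  congr 1
  field_simp

lemma airyCoeff_one : airyCoeff 1 = (-(√3 / (2 * π) * cubicMoment 1) : ℝ) := by
  have h : airyCoeff 1 = (-(3 ^ (-(1 : ℝ) / 3) / Real.Gamma (1 / 3)) : ℝ) := by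
    rw [airyCoeff, Complex.ofReal_neg, Complex.ofReal_div, Complex.ofReal_cpow (by norm_num),
      ← Complex.Gamma_ofReal]
    push_cast
    rfl
  have hΓ : Real.Gamma (2 / 3) ≠ 0 := (Real.Gamma_pos_of_pos (by norm_num)).ne'
  have hΓ' : Real.Gamma (1 / 3) ≠ 0 := (Real.Gamma_pos_of_pos (by norm_num)).ne'
  rw [h, cubicMoment_one, ← Gamma_one_third_mul_Gamma_two_thirds]
  congr 2
  field_simp

/-- The angular factor of the `n`th Taylor coefficient of `Ai`; it has period three. -/
def airyAngle (n : ℕ) : ℂ :=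
  (sixthRoot * (-sixthRoot) ^ n - sixthRoot⁻¹ * (-sixthRoot⁻¹) ^ n) / (2 * π * I)

lemma airyAngle_zero : airyAngle 0 = (√3 / (2 * π) : ℝ) := by
  have hπ : (π : ℂ) ≠ 0 := by exact_mod_cast Real.pi_ne_zero
  rw [airyAngle, sixthRoot_inv, sixthRoot_eq]
  push_cast
  field_simp [Complex.I_ne_zero]
  ring

lemma airyAngle_one : airyAngle 1 = (-(√3 / (2 * π)) : ℝ) := by
  have hπ : (π : ℂ) ≠ 0 := by exact_mod_cast Real.pi_ne_zero
  rw [airyAngle, sixthRoot_inv, sixthRoot_eq]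
  push_cast
  field_simp [Complex.I_ne_zero]
  ring

lemma airyAngle_two : airyAngle 2 = 0 := by
  have h : sixthRoot⁻¹ ^ 3 = -1 := by rw [inv_pow, sixthRoot_cube]; norm_num
  rw [airyAngle]
  linear_combination (sixthRoot_cube - h) / (2 * π * I)

lemma airyAngle_add_three (n : ℕ) : airyAngle (n + 3) = airyAngle n := by
  have h : sixthRoot⁻¹ ^ 3 = -1 := by rw [inv_pow, sixthRoot_cube]; norm_num
  have h₁ : (-sixthRoot) ^ 3 = 1 := by linear_combination -sixthRoot_cube
  have h₂ : (-sixthRoot⁻¹) ^ 3 = 1 := by linear_combination -h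
  rw [airyAngle, airyAngle, pow_add, pow_add, h₁, h₂, mul_one, mul_one]

lemma airyCoeff_eq (n : ℕ) :
    airyCoeff n = airyAngle n / (n.factorial : ℂ) * cubicMoment n := by
  induction n using airyCoeff.induct with
  | case1 => simp [airyCoeff_zero, airyAngle_zero]
  | case2 => simp [airyCoeff_one, airyAngle_one]
  | case3 => simp [airyCoeff, airyAngle_two]
  | case4 k ih =>
    rw [airyCoeff, ih, cubicMoment_add_three, airyAngle_add_three]
    have h₁ : (k : ℂ) + 1 ≠ 0 := by exact_mod_cast k.succ_ne_zero
    simp only [Nat.factorial_succ]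
    push_cast
    rw [show (k : ℂ) + 2 + 1 = k + 3 by ring, show (k : ℂ) + 1 + 1 = k + 2 by ring]
    field_simp

lemma hasSum_Ai (w : ℂ) : HasSum (fun n : ℕ => airyCoeff n * w ^ n)
    ((sixthRoot * cubicLaplace (sixthRoot * w) - sixthRoot⁻¹ * cubicLaplace (sixthRoot⁻¹ * w)) /
      (2 * π * I)) := by
  have h := (((hasSum_cubicLaplace (sixthRoot * w)).mul_left sixthRoot).sub
    ((hasSum_cubicLaplace (sixthRoot⁻¹ * w)).mul_left sixthRoot⁻¹)).div_const (2 * π * I)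
  refine h.congr_fun fun n => ?_
  rw [airyCoeff_eq, airyAngle, ← neg_mul, ← neg_mul, mul_pow, mul_pow]
  ring

theorem Ai_eq_cubicLaplace (w : ℂ) : Ai w =
    (sixthRoot * cubicLaplace (sixthRoot * w) - sixthRoot⁻¹ * cubicLaplace (sixthRoot⁻¹ * w)) /
      (2 * π * I) :=
  (hasSum_Ai w).tsum_eq

lemma differentiable_Ai : Differentiable ℂ Ai := by
  intro z
  have hd : DifferentiableOn ℂ (fun w => ∑' n : ℕ, airyCoeff n * w ^ n)
      (Metric.ball 0 (‖z‖ + 1)) := by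
    refine Complex.differentiableOn_tsum_of_summable_norm
      (u := fun n => ‖airyCoeff n * ((‖z‖ + 1 : ℝ) : ℂ) ^ n‖) (hasSum_Ai _).summable.norm
      (fun n => by fun_prop) Metric.isOpen_ball fun n w hw => ?_
    rw [norm_mul, norm_mul, norm_pow, norm_pow, Complex.norm_real,
      Real.norm_of_nonneg (by positivity)]
    gcongr
    exact (mem_ball_zero_iff.1 hw).le
  exact (hd z (by simp)).differentiableAt (Metric.isOpen_ball.mem_nhds (by simp))

lemma ωc_cube : ωc ^ 3 = 1 := by
  rw [ωc, ← Complex.exp_nat_mul, Nat.cast_ofNat, mul_div_cancel₀ _ three_ne_zero,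
    Complex.exp_two_pi_mul_I]

lemma ωc_eq : ωc = sixthRoot ^ 2 := by
  rw [ωc, sixthRoot, ← Complex.exp_nat_mul]
  push_cast
  ring_nf

lemma one_add_ωc_add_ωc_sq : 1 + ωc + ωc ^ 2 = 0 := by
  have h₃ : ((√3 : ℝ) : ℂ) ^ 2 = 3 := by exact_mod_cast Real.sq_sqrt (by norm_num)
  have hσ : sixthRoot ^ 2 - sixthRoot + 1 = 0 := by
    rw [sixthRoot_eq]
    push_cast
    linear_combination h₃ / 4 * I ^ 2 + 3 / 4 * Complex.I_sq
  rw [ωc_eq]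
  linear_combination (sixthRoot ^ 2 + sixthRoot + 1) * hσ

lemma airyCoeff_mul_one_add_ωc_pow (n : ℕ) :
    airyCoeff n * (1 + ωc ^ (n + 1) + (ωc ^ 2) ^ (n + 1)) = 0 := by
  induction n using airyCoeff.induct with
  | case1 => linear_combination airyCoeff 0 * one_add_ωc_add_ωc_sq
  | case2 => linear_combination airyCoeff 1 * one_add_ωc_add_ωc_sq + airyCoeff 1 * ωc * ωc_cube
  | case3 => simp [airyCoeff]
  | case4 k ih =>
    have h : ωc ^ (k + 3 + 1) = ωc ^ (k + 1) := by
      rw [show k + 3 + 1 = k + 1 + 3 by ring, pow_add, ωc_cube, mul_one]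
    rw [pow_right_comm] at ih ⊢
    rw [airyCoeff, h, div_mul_eq_mul_div, ih, zero_div]

theorem Ai_connection (z : ℂ) : Ai z + ωc * Ai (ωc * z) + ωc⁻¹ * Ai (ωc⁻¹ * z) = 0 := by
  have hinv : ωc⁻¹ = ωc ^ 2 := inv_eq_of_mul_eq_one_left (by linear_combination ωc_cube)
  have hs (w : ℂ) : HasSum (fun n : ℕ => airyCoeff n * w ^ n) (Ai w) :=
    (hasSum_Ai w).summable.hasSum
  refine (((hs z).add ((hs (ωc * z)).mul_left ωc)).add
    ((hs (ωc⁻¹ * z)).mul_left ωc⁻¹)).unique (hasSum_zero.congr_fun fun n => ?_)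
  rw [hinv, mul_pow, mul_pow]
  linear_combination z ^ n * airyCoeff_mul_one_add_ωc_pow n

/-! ### Saddle point form of the Airy function -/

/-- The integrand `e^{t³/3 - wt}` of the contour integral for `2πi Ai(w)`. -/
def airyKernel (w t : ℂ) : ℂ :=
  Complex.exp (t ^ 3 / 3 - w * t)

lemma differentiable_airyKernel (w : ℂ) : Differentiable ℂ (airyKernel w) := by
  unfold airyKernel
  fun_prop

lemma continuous_airyKernel (w : ℂ) : Continuous (airyKernel w) :=
  (differentiable_airyKernel w).continuous

lemma airyKernel_sixthRoot_mul (w : ℂ) (r : ℝ) :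
    airyKernel w (sixthRoot * r) = Complex.exp (-(r : ℂ) ^ 3 / 3 - sixthRoot * w * r) := by
  rw [airyKernel, mul_pow, sixthRoot_cube]
  ring_nf

lemma norm_airyKernel (s x v : ℝ) :
    ‖airyKernel ((s : ℂ) ^ 2) (x + v * I)‖ = Real.exp (x ^ 3 / 3 - x * v ^ 2 - s ^ 2 * x) := by
  have h : ((x : ℂ) + v * I) ^ 3 / 3 - (s : ℂ) ^ 2 * (x + v * I) =
      ((x ^ 3 / 3 - x * v ^ 2 - s ^ 2 * x : ℝ) : ℂ) +
        ((x ^ 2 * v - v ^ 3 / 3 - s ^ 2 * v : ℝ) : ℂ) * I := by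
    push_cast
    linear_combination ((x : ℂ) * v ^ 2 + (v : ℂ) ^ 3 * I / 3) * Complex.I_sq
  rw [airyKernel, h, Complex.norm_exp, Complex.add_re, Complex.ofReal_re, Complex.re_ofReal_mul,
    Complex.I_re, mul_zero, add_zero]

lemma airyKernel_saddle_add_I_mul (s r : ℝ) :
    airyKernel ((s : ℂ) ^ 2) (s + I * r) =
      (Real.exp (-(2 / 3) * s ^ 3) * Real.exp (-s * r ^ 2) : ℝ) *
        Complex.exp ((-(r ^ 3 / 3) : ℝ) * I) := by
  rw [airyKernel, Complex.ofReal_mul, Complex.ofReal_exp, Complex.ofReal_exp, ← Complex.exp_add,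
    ← Complex.exp_add]
  congr 1
  push_cast
  linear_combination ((s : ℂ) * r ^ 2 + I * (r : ℂ) ^ 3 / 3) * Complex.I_sq

lemma norm_airyKernel_le_of_mem_segment {s Y : ℝ} (hs : 0 < s) (hY : 2 * s ≤ Y) {t : ℂ}
    (ht : t ∈ segment ℝ (sixthRoot * Y) (s + I * Y)) :
    ‖airyKernel ((s : ℂ) ^ 2) t‖ ≤ Real.exp (-(2 / 3 * s * Y ^ 2)) := by
  obtain ⟨a, b, ha, hb, hab, rfl⟩ := ht
  obtain rfl : b = 1 - a := by linarith
  have hY0 : 0 < Y := by linarith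
  set x : ℝ := a * (Y / 2) + (1 - a) * s with hx
  set v : ℝ := a * (√3 / 2 * Y) + (1 - a) * Y with hv
  have hxv : a • (sixthRoot * (Y : ℂ)) + (1 - a) • ((s : ℂ) + I * Y) = (x : ℂ) + v * I := by
    rw [sixthRoot_eq, hx, hv, Complex.real_smul, Complex.real_smul]
    push_cast
    ring
  rw [hxv, norm_airyKernel]
  apply Real.exp_le_exp.2
  have h3 : √3 ^ 2 = 3 := Real.sq_sqrt (by norm_num)
  have h3' : √3 ≤ 2 := by nlinarith [Real.sqrt_nonneg 3]
  have hsx : s ≤ x := by rw [hx]; nlinarith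
  have hxY : x ≤ Y / 2 := by rw [hx]; nlinarith
  have hv1 : √3 / 2 * Y ≤ v := by rw [hv]; nlinarith [mul_nonneg hb hY0.le]
  have hv2 : 3 / 4 * Y ^ 2 ≤ v ^ 2 := by
    have : (√3 / 2 * Y) ^ 2 ≤ v ^ 2 := by gcongr
    nlinarith
  have hx2 : x ^ 2 ≤ Y ^ 2 / 4 := by nlinarith
  have : x * (x ^ 2 / 3 - v ^ 2) ≤ x * (-(2 / 3 * Y ^ 2)) :=
    mul_le_mul_of_nonneg_left (by linarith) (by linarith)
  nlinarith [mul_nonneg (sq_nonneg s) (hs.le.trans hsx),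
    mul_le_mul_of_nonneg_right hsx (sq_nonneg Y)]

lemma integrableOn_airyKernel_sixthRoot_mul (w : ℂ) :
    IntegrableOn (fun r : ℝ => sixthRoot * airyKernel w (sixthRoot * r)) (Ioi 0) := by
  simp only [airyKernel_sixthRoot_mul]
  refine Integrable.const_mul (Integrable.mono'
    (integrableOn_exp_mul_sub_cube ‖sixthRoot * w‖) (by fun_prop) ?_) _
  filter_upwards [ae_restrict_mem measurableSet_Ioi] with r hr
  have hre : (-(r : ℂ) ^ 3 / 3 - sixthRoot * w * r).re =
      -r ^ 3 / 3 - (sixthRoot * w).re * r := by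
    rw [Complex.sub_re, Complex.re_mul_ofReal]
    norm_cast
  rw [Complex.norm_exp, hre]
  apply Real.exp_le_exp.2
  nlinarith [neg_abs_le (sixthRoot * w).re, Complex.abs_re_le_norm (sixthRoot * w), mem_Ioi.1 hr]

lemma integrableOn_airyKernel_saddle_add_I_mul {s : ℝ} (hs : 0 < s) :
    IntegrableOn (fun r : ℝ => I * airyKernel ((s : ℂ) ^ 2) (s + I * r)) (Ioi 0) := by
  refine Integrable.mono' ((integrable_exp_neg_mul_sq hs).integrableOn.const_mul
    (Real.exp (-(2 / 3) * s ^ 3)))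
    ((continuous_airyKernel _).comp (by fun_prop) |>.const_mul I).aestronglyMeasurable ?_
  filter_upwards with r
  rw [airyKernel_saddle_add_I_mul, norm_mul, norm_mul, Complex.norm_I, one_mul,
    Complex.norm_exp_ofReal_mul_I, mul_one, Complex.norm_real, Real.norm_of_nonneg (by positivity)]

lemma tendsto_primitive_comp_ray {G g : ℂ → ℂ} (hG : ∀ z, HasDerivAt G (g z) z) (a c : ℂ)
    (hg : IntegrableOn (fun r : ℝ => c * g (a + c * r)) (Ioi 0)) :
    Tendsto (fun Y : ℝ => G (a + c * Y)) atTop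
      (𝓝 (G a + ∫ r in Ioi (0 : ℝ), c * g (a + c * r))) := by
  have hderiv (r : ℝ) : HasDerivAt (fun r : ℝ => G (a + c * r)) (c * g (a + c * r)) r := by
    have h := ((hasDerivAt_id (r : ℂ)).const_mul c).const_add a
    have h' := (hG (a + c * r)).comp (r : ℂ) h
    simpa [mul_comm, Function.comp_def] using h'.comp_ofReal
  have hlim := tendsto_limUnder_of_hasDerivAt_of_integrableOn_Ioi (fun r _ => hderiv r) hg
  have hint := integral_Ioi_of_hasDerivAt_of_tendsto (hderiv 0).continuousAt.continuousWithinAt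
    (fun r _ => hderiv r) hg hlim
  rw [hint]
  simpa using hlim

lemma tendsto_primitive_airyKernel_sub {s : ℝ} (hs : 0 < s) {G : ℂ → ℂ}
    (hG : ∀ z, HasDerivAt G (airyKernel ((s : ℂ) ^ 2) z) z) :
    Tendsto (fun Y : ℝ => G (s + I * Y) - G (sixthRoot * Y)) atTop (𝓝 0) := by
  refine squeeze_zero_norm' (a := fun Y => 9 / (2 * s) * Y⁻¹) ?_
    (by simpa using tendsto_inv_atTop_zero.const_mul (9 / (2 * s)))
  filter_upwards [eventually_ge_atTop (2 * s)] with Y hY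
  have hY0 : 0 < Y := by linarith
  have hmean := (convex_segment (𝕜 := ℝ) (sixthRoot * (Y : ℂ))
    (s + I * Y)).norm_image_sub_le_of_norm_hasDerivWithin_le
    (fun t _ => (hG t).hasDerivWithinAt) (fun t ht => norm_airyKernel_le_of_mem_segment hs hY ht)
    (left_mem_segment ℝ _ _) (right_mem_segment ℝ _ _)
  have hlength : ‖(s + I * Y) - sixthRoot * (Y : ℂ)‖ ≤ 3 * Y := by
    refine (norm_sub_le_of_le (norm_add_le _ _) le_rfl).trans ?_
    rw [norm_mul, norm_mul, norm_sixthRoot, Complex.norm_I, Complex.norm_real, Complex.norm_real,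
      Real.norm_of_nonneg hY0.le, Real.norm_of_nonneg hs.le]
    linarith
  have hexp : Real.exp (-(2 / 3 * s * Y ^ 2)) ≤ (2 / 3 * s * Y ^ 2)⁻¹ := by
    rw [Real.exp_neg]
    exact inv_anti₀ (by positivity) (by linarith [Real.add_one_le_exp (2 / 3 * s * Y ^ 2)])
  calc ‖G (s + I * Y) - G (sixthRoot * Y)‖
      ≤ (2 / 3 * s * Y ^ 2)⁻¹ * (3 * Y) := hmean.trans (by gcongr)
    _ = 9 / (2 * s) * Y⁻¹ := by field_simp; ring

/-- Cauchy's theorem moves the ray `e^{iπ/3}ℝ₊` to the segment `[0, s]` followed by the vertical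
half line through the saddle point `s`. -/
lemma integral_airyKernel_ray_eq {s : ℝ} (hs : 0 < s) :
    ∫ r in Ioi (0 : ℝ), sixthRoot * airyKernel ((s : ℂ) ^ 2) (sixthRoot * r) =
      (∫ x in (0 : ℝ)..s, airyKernel ((s : ℂ) ^ 2) x) +
        ∫ r in Ioi (0 : ℝ), I * airyKernel ((s : ℂ) ^ 2) (s + I * r) := by
  obtain ⟨G, hG⟩ := (differentiable_airyKernel ((s : ℂ) ^ 2)).isExactOn_univ
  have hG (z : ℂ) : HasDerivAt G (airyKernel ((s : ℂ) ^ 2) z) z := hG z (mem_univ z)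
  have hseg : ∫ x in (0 : ℝ)..s, airyKernel ((s : ℂ) ^ 2) x = G s - G 0 := by
    rw [intervalIntegral.integral_eq_sub_of_hasDerivAt fun x _ => (hG x).comp_ofReal,
      Complex.ofReal_zero]
    exact ((continuous_airyKernel _).comp Complex.continuous_ofReal).intervalIntegrable _ _
  have hvert := tendsto_primitive_comp_ray hG s I (integrableOn_airyKernel_saddle_add_I_mul hs)
  have hray := tendsto_primitive_comp_ray hG 0 sixthRoot
    (by simpa using integrableOn_airyKernel_sixthRoot_mul ((s : ℂ) ^ 2))
  simp only [zero_add] at hray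
  have h := tendsto_nhds_unique (hvert.sub hray) (tendsto_primitive_airyKernel_sub hs hG)
  rw [hseg]
  linear_combination -h

/-- The integral `∫₀^∞ e^{-sr²} cos(r³/3) dr`, for `Re s > 0`: what remains of the Airy integral
after the value of the integrand at the saddle point is factored out. -/
def saddleIntegral (s : ℂ) : ℂ :=
  ∫ r in Ioi (0 : ℝ), Complex.exp (-s * (r : ℂ) ^ 2) * (Real.cos (r ^ 3 / 3) : ℂ)

lemma Ai_ofReal (x : ℝ) :
    Ai x = ((∫ r in Ioi (0 : ℝ), sixthRoot * airyKernel x (sixthRoot * r)).im / π : ℝ) := by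
  have hray : ∫ r in Ioi (0 : ℝ), sixthRoot * airyKernel x (sixthRoot * r) =
      sixthRoot * cubicLaplace (sixthRoot * x) := by
    simp only [airyKernel_sixthRoot_mul]
    rw [integral_const_mul, cubicLaplace]
  have hconj : sixthRoot⁻¹ * cubicLaplace (sixthRoot⁻¹ * x) =
      (starRingEnd ℂ) (sixthRoot * cubicLaplace (sixthRoot * x)) := by
    rw [map_mul, conj_sixthRoot, cubicLaplace, cubicLaplace, ← integral_conj]
    congr 2
    funext r
    rw [← Complex.exp_conj]
    simp [conj_sixthRoot, Complex.conj_ofNat]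
  have hπ : (π : ℂ) ≠ 0 := by exact_mod_cast Real.pi_ne_zero
  rw [Ai_eq_cubicLaplace, hconj, Complex.sub_conj, hray]
  push_cast
  field_simp [Complex.I_ne_zero]

lemma integral_im_airyKernel_saddle {s : ℝ} (hs : 0 < s) :
    (∫ r in Ioi (0 : ℝ), I * airyKernel ((s : ℂ) ^ 2) (s + I * r)).im =
      Real.exp (-(2 / 3) * s ^ 3) *
        ∫ r in Ioi (0 : ℝ), Real.exp (-s * r ^ 2) * Real.cos (r ^ 3 / 3) := by
  rw [← integral_const_mul]
  refine (integral_im (integrableOn_airyKernel_saddle_add_I_mul hs)).symm.trans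
    (integral_congr_ae (ae_of_all _ fun r => ?_))
  simp only [RCLike.im_to_complex]
  rw [Complex.I_mul_im, airyKernel_saddle_add_I_mul, Complex.re_ofReal_mul,
    Complex.exp_ofReal_mul_I_re, Real.cos_neg, mul_assoc]

lemma Ai_sq_of_pos {s : ℝ} (hs : 0 < s) :
    Ai ((s : ℂ) ^ 2) = Complex.exp (-(2 / 3) * (s : ℂ) ^ 3) / π * saddleIntegral s := by
  have hseg : (∫ x in (0 : ℝ)..s, airyKernel ((s : ℂ) ^ 2) x).im = 0 := by
    have h (x : ℝ) : airyKernel ((s : ℂ) ^ 2) x = (Real.exp (x ^ 3 / 3 - s ^ 2 * x) : ℝ) := by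
      rw [airyKernel]
      push_cast
      rfl
    simp only [h, intervalIntegral.integral_ofReal, Complex.ofReal_im]
  have hsaddle : saddleIntegral s =
      ((∫ r in Ioi (0 : ℝ), Real.exp (-s * r ^ 2) * Real.cos (r ^ 3 / 3) : ℝ) : ℂ) := by
    rw [saddleIntegral, ← integral_complex_ofReal]
    push_cast
    rfl
  have h := Ai_ofReal (s ^ 2)
  push_cast at h
  rw [h, integral_airyKernel_ray_eq hs, Complex.add_im, hseg, zero_add,
    integral_im_airyKernel_saddle hs, hsaddle]
  push_cast
  ring

lemma norm_saddleIntegrand_le (s : ℂ) (r : ℝ) :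
    ‖Complex.exp (-s * (r : ℂ) ^ 2) * (Real.cos (r ^ 3 / 3) : ℂ)‖ ≤ Real.exp (-s.re * r ^ 2) := by
  rw [norm_mul, norm_cexp_neg_mul_sq, Complex.norm_real]
  exact mul_le_of_le_one_right (Real.exp_pos _).le (Real.abs_cos_le_one _)

lemma integrableOn_saddleIntegrand {s : ℂ} (hs : 0 < s.re) :
    IntegrableOn (fun r : ℝ => Complex.exp (-s * (r : ℂ) ^ 2) * (Real.cos (r ^ 3 / 3) : ℂ))
      (Ioi 0) :=
  Integrable.mono' (integrable_exp_neg_mul_sq hs).integrableOn (by fun_prop)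
    (ae_of_all _ (norm_saddleIntegrand_le s))

lemma pow_mul_exp_neg_mul_sq_le {c : ℝ} (hc : 0 < c) (n : ℕ) (r : ℝ) :
    (r ^ 2) ^ n * Real.exp (-c * r ^ 2) ≤
      n.factorial * (2 / c) ^ n * Real.exp (-(c / 2) * r ^ 2) := by
  have hexp : Real.exp (-c * r ^ 2) =
      Real.exp (-(c / 2) * r ^ 2) * (Real.exp (c / 2 * r ^ 2))⁻¹ := by
    rw [← Real.exp_neg, ← Real.exp_add]
    ring_nf
  have hpow := Real.pow_div_factorial_le_exp (c / 2 * r ^ 2) (by positivity) n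
  rw [hexp, mul_left_comm, mul_comm (_ * _) (Real.exp (-(c / 2) * r ^ 2))]
  refine mul_le_mul_of_nonneg_left ?_ (Real.exp_pos _).le
  rw [← div_eq_mul_inv, div_le_iff₀ (Real.exp_pos _)]
  calc (r ^ 2) ^ n
      = n.factorial * (2 / c) ^ n * ((c / 2 * r ^ 2) ^ n / n.factorial) := by
        rw [mul_pow, div_pow, div_pow]
        field_simp
    _ ≤ n.factorial * (2 / c) ^ n * Real.exp (c / 2 * r ^ 2) := by gcongr

lemma differentiableAt_saddleIntegral {s : ℂ} (hs : 0 < s.re) :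
    DifferentiableAt ℂ saddleIntegral s := by
  have hball : {t : ℂ | s.re / 2 < t.re} ∈ 𝓝 s :=
    (isOpen_lt continuous_const Complex.continuous_re).mem_nhds (half_lt_self hs)
  refine (hasDerivAt_integral_of_dominated_loc_of_deriv_le
    (F := fun (t : ℂ) (r : ℝ) => Complex.exp (-t * (r : ℂ) ^ 2) * (Real.cos (r ^ 3 / 3) : ℂ))
    (F' := fun (t : ℂ) (r : ℝ) => -(r : ℂ) ^ 2 *
      (Complex.exp (-t * (r : ℂ) ^ 2) * (Real.cos (r ^ 3 / 3) : ℂ)))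
    (bound := fun r => 2 / (s.re / 2) * Real.exp (-(s.re / 2 / 2) * r ^ 2))
    hball (.of_forall fun t => by fun_prop) (integrableOn_saddleIntegrand hs) (by fun_prop)
    (.of_forall fun r t ht => ?_)
    ((integrable_exp_neg_mul_sq (by linarith)).integrableOn.const_mul _)
    (.of_forall fun r t _ => ?_)).2.differentiableAt
  · have ht : s.re / 2 < t.re := ht
    have hr := pow_mul_exp_neg_mul_sq_le (half_pos hs) 1 r
    simp only [pow_one, Nat.factorial_one, Nat.cast_one, one_mul] at hr
    refine le_trans ?_ hr
    rw [norm_mul, norm_neg, norm_pow, Complex.norm_real, Real.norm_eq_abs, sq_abs]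
    refine mul_le_mul_of_nonneg_left ((norm_saddleIntegrand_le t r).trans ?_) (sq_nonneg r)
    apply Real.exp_le_exp.2
    nlinarith [sq_nonneg r]
  · have h : HasDerivAt (fun t : ℂ => -t * (r : ℂ) ^ 2) (-(r : ℂ) ^ 2) t := by
      simpa using (hasDerivAt_id t).neg.mul_const ((r : ℂ) ^ 2)
    exact (h.cexp.mul_const (Real.cos (r ^ 3 / 3) : ℂ)).congr_deriv (by ring)

theorem Ai_sq {s : ℂ} (hs : 0 < s.re) :
    Ai (s ^ 2) = Complex.exp (-(2 / 3) * s ^ 3) / π * saddleIntegral s := by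
  have hU : IsOpen {t : ℂ | 0 < t.re} := isOpen_lt continuous_const Complex.continuous_re
  have hUc : IsPreconnected {t : ℂ | 0 < t.re} := (convex_halfSpace_re_gt 0).isPreconnected
  have hf : AnalyticOnNhd ℂ (fun t : ℂ => Ai (t ^ 2)) {t : ℂ | 0 < t.re} :=
    (differentiable_Ai.comp (by fun_prop)).differentiableOn.analyticOnNhd hU
  have hg : AnalyticOnNhd ℂ (fun t : ℂ => Complex.exp (-(2 / 3) * t ^ 3) / π * saddleIntegral t)
      {t : ℂ | 0 < t.re} :=
    DifferentiableOn.analyticOnNhd (fun t ht => (DifferentiableAt.mul (by fun_prop)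
      (differentiableAt_saddleIntegral ht)).differentiableWithinAt) hU
  refine hf.eqOn_of_preconnected_of_frequently_eq hg hUc (z₀ := ((1 : ℝ) : ℂ)) (by simp) ?_ hs
  have htend : Tendsto (fun x : ℝ => (x : ℂ)) (𝓝[≠] 1) (𝓝[≠] ((1 : ℝ) : ℂ)) :=
    Complex.continuous_ofReal.continuousAt.continuousWithinAt.tendsto_nhdsWithin
      fun x hx => by simpa using hx
  refine htend.frequently (Eventually.frequently ?_)
  filter_upwards [nhdsWithin_le_nhds (lt_mem_nhds one_pos)] with x hx using Ai_sq_of_pos hx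

lemma norm_saddleIntegral_sub_le {s : ℂ} (hs : 0 < s.re) :
    ‖saddleIntegral s - (π / s) ^ (1 / 2 : ℂ) / 2‖ ≤
      48 / s.re ^ 3 * (√(π / (s.re / 2)) / 2) := by
  rw [← integral_gaussian_complex_Ioi hs, saddleIntegral, ← integral_sub
    (integrableOn_saddleIntegrand hs) (integrable_cexp_neg_mul_sq hs).integrableOn,
    ← integral_gaussian_Ioi, ← integral_const_mul]
  refine norm_integral_le_of_norm_le
    ((integrable_exp_neg_mul_sq (by linarith)).integrableOn.const_mul _)
    (.of_forall fun r => ?_)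
  have hpow : r ^ 6 * Real.exp (-s.re * r ^ 2) ≤
      48 / s.re ^ 3 * Real.exp (-(s.re / 2) * r ^ 2) := by
    have h := pow_mul_exp_neg_mul_sq_le hs 3 r
    rwa [← pow_mul, div_pow, ← mul_div_assoc,
      show ((Nat.factorial 3 : ℕ) : ℝ) * 2 ^ 3 = 48 by norm_num [Nat.factorial]] at h
  have hcos : |Real.cos (r ^ 3 / 3) - 1| ≤ r ^ 6 := by
    have h₁ := Real.one_sub_sq_div_two_le_cos (x := r ^ 3 / 3)
    have h₂ := Real.cos_le_one (r ^ 3 / 3)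
    rw [abs_le]
    constructor <;> nlinarith [sq_nonneg (r ^ 3)]
  refine le_trans ?_ hpow
  rw [← mul_sub_one, ← Complex.ofReal_one, ← Complex.ofReal_sub, norm_mul, norm_cexp_neg_mul_sq,
    Complex.norm_real, Real.norm_eq_abs, mul_comm]
  gcongr

lemma pi_div_exp_cpow_half {q : ℂ} (hq : |q.im| < π) :
    (π / Complex.exp q) ^ (1 / 2 : ℂ) = √π * Complex.exp (-q / 2) := by
  have hdiv : (π : ℂ) / Complex.exp q = Complex.exp ((Real.log π : ℝ) - q) := by
    rw [Complex.exp_sub, ← Complex.ofReal_exp, Real.exp_log Real.pi_pos]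
  have hlog : Complex.log (Complex.exp ((Real.log π : ℝ) - q)) = (Real.log π : ℝ) - q := by
    have := abs_lt.1 hq
    apply Complex.log_exp <;> simp <;> linarith
  have hsqrt : ((√π : ℝ) : ℂ) = Complex.exp ((Real.log π : ℝ) / 2) := by
    rw [Real.sqrt_eq_rpow, Real.rpow_def_of_pos Real.pi_pos, Complex.ofReal_exp]
    push_cast
    ring_nf
  rw [hdiv, Complex.cpow_def_of_ne_zero (Complex.exp_ne_zero _), hlog, hsqrt, ← Complex.exp_add]
  ring_nf

lemma norm_saddleIntegral_exp_sub_le {c : ℝ} (hc : 0 < c) {q : ℂ} (hq : c ≤ Real.cos q.im)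
    (hq' : |q.im| < π / 2) :
    ‖saddleIntegral (Complex.exp q) - √π * Complex.exp (-q / 2) / 2‖ ≤
      24 / c ^ 3 * √(2 * π / c) * Real.exp (-3 * q.re) * Real.exp (-(q.re / 2)) := by
  have hre : c * Real.exp q.re ≤ (Complex.exp q).re := by
    rw [Complex.exp_re, mul_comm]
    gcongr
  have hs : 0 < (Complex.exp q).re := lt_of_lt_of_le (by positivity) hre
  rw [← pi_div_exp_cpow_half (hq'.trans (half_lt_self Real.pi_pos))]
  have hsqrt : √(π / ((Complex.exp q).re / 2)) ≤ √(2 * π / c) * Real.exp (-(q.re / 2)) := by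
    have h : Real.exp (-(q.re / 2)) = √(Real.exp (-q.re)) := by
      rw [← neg_div, Real.exp_half]
    rw [h, ← Real.sqrt_mul (by positivity), Real.exp_neg, ← div_eq_mul_inv, div_div,
      div_div_eq_mul_div, mul_comm π 2]
    gcongr
  have hcube : 48 / (Complex.exp q).re ^ 3 ≤ 48 / c ^ 3 * Real.exp (-3 * q.re) := by
    have h : Real.exp (-3 * q.re) = (Real.exp q.re ^ 3)⁻¹ := by
      rw [← Real.exp_nat_mul, ← Real.exp_neg, Nat.cast_ofNat, neg_mul]
    rw [h, ← div_eq_mul_inv, div_div, ← mul_pow]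
    gcongr
  calc _ ≤ 48 / (Complex.exp q).re ^ 3 * (√(π / ((Complex.exp q).re / 2)) / 2) :=
        norm_saddleIntegral_sub_le hs
    _ ≤ 48 / c ^ 3 * Real.exp (-3 * q.re) * (√(2 * π / c) * Real.exp (-(q.re / 2)) / 2) := by
        gcongr
    _ = _ := by ring

/-- Parametrizing the argument as `e^{2q}` fixes the branches of `s³` and `s^{-1/2}` in
`Ai(s²) ~ e^{-2s³/3} s^{-1/2} / (2√π)`. -/
theorem exists_Ai_exp_sq_eq {c : ℝ} (hc : 0 < c) : ∃ C > 0, ∀ q : ℂ,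
    c ≤ Real.cos q.im → |q.im| < π / 2 → ∃ ρ : ℂ, ‖ρ‖ ≤ C * Real.exp (-3 * q.re) ∧
      Ai (Complex.exp q ^ 2) =
        Complex.exp (-(2 / 3) * Complex.exp q ^ 3) * Complex.exp (-q / 2) / (2 * √π) *
          (1 + ρ) := by
  refine ⟨48 / c ^ 3 * √(2 * π / c) / √π, by positivity, fun q hq hq' => ?_⟩
  have hs : 0 < (Complex.exp q).re := by
    rw [Complex.exp_re]
    exact mul_pos (Real.exp_pos _) (hc.trans_le hq)
  have hπ : (0 : ℝ) < √π := Real.sqrt_pos.2 Real.pi_pos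
  have hπ0 : ((√π : ℝ) : ℂ) ≠ 0 := by exact_mod_cast hπ.ne'
  have hπsq : ((√π : ℝ) : ℂ) ^ 2 = π := by exact_mod_cast Real.sq_sqrt Real.pi_pos.le
  refine ⟨(saddleIntegral (Complex.exp q) - √π * Complex.exp (-q / 2) / 2) *
    (2 / √π * Complex.exp (q / 2)), ?_, ?_⟩
  · have hcancel : Real.exp (-(q.re / 2)) * Real.exp (q.re / 2) = 1 := by
      rw [← Real.exp_add]; simp
    rw [norm_mul, norm_mul, norm_div, Complex.norm_real, Real.norm_of_nonneg hπ.le,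
      Complex.norm_exp, Complex.norm_ofNat, show (q / 2).re = q.re / 2 by simp]
    calc _ ≤ 24 / c ^ 3 * √(2 * π / c) * Real.exp (-3 * q.re) * Real.exp (-(q.re / 2)) *
          (2 / √π * Real.exp (q.re / 2)) := by
          gcongr
          exact norm_saddleIntegral_exp_sub_le hc hq hq'
      _ = 48 / c ^ 3 * √(2 * π / c) / √π * Real.exp (-3 * q.re) *
          (Real.exp (-(q.re / 2)) * Real.exp (q.re / 2)) := by ring
      _ = _ := by rw [hcancel, mul_one]
  · rw [Ai_sq hs, ← hπsq, neg_div, Complex.exp_neg]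
    field_simp
    ring

/-! ### Semiclassical form of `D_f` -/

/-- The relative size of the corrections to the semiclassical Airy asymptotics for field strength
`f` at a wave number of modulus `r`. -/
def relError (f r : ℝ) : ℝ := f / r + f / r ^ 2 + f / r ^ 3

lemma div_le_relError {f r : ℝ} (hf : 0 < f) (hr : 0 < r) : f / r ≤ relError f r := by
  have h₂ : 0 < f / r ^ 2 := by positivity
  have h₃ : 0 < f / r ^ 3 := by positivity
  rw [relError]
  linarith

lemma div_sq_le_relError {f r : ℝ} (hf : 0 < f) (hr : 0 < r) : f / r ^ 2 ≤ relError f r := by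
  have h₁ : 0 < f / r := by positivity
  have h₃ : 0 < f / r ^ 3 := by positivity
  rw [relError]
  linarith

lemma div_cube_le_relError {f r : ℝ} (hf : 0 < f) (hr : 0 < r) : f / r ^ 3 ≤ relError f r := by
  have h₁ : 0 < f / r := by positivity
  have h₂ : 0 < f / r ^ 2 := by positivity
  rw [relError]
  linarith

lemma relError_pos {f r : ℝ} (hf : 0 < f) (hr : 0 < r) : 0 < relError f r :=
  (div_pos hf hr).trans_le (div_le_relError hf hr)

lemma norm_half_log_one_sub_le {μ : ℂ} (hμ : ‖μ‖ ≤ 1 / 2) :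
    ‖Complex.log (1 - μ) / 2‖ ≤ ‖μ‖ := by
  have h := Complex.norm_log_one_add_half_le_self (z := -μ) (by simpa using hμ)
  rw [norm_neg, ← sub_eq_add_neg] at h
  rw [norm_div, Complex.norm_ofNat]
  linarith [norm_nonneg μ]

lemma exp_half_log_sq {z : ℂ} (hz : z ≠ 0) : Complex.exp (Complex.log z / 2) ^ 2 = z := by
  rw [← Complex.exp_nat_mul, Nat.cast_ofNat, mul_div_cancel₀ _ two_ne_zero, Complex.exp_log hz]

lemma norm_cube_sub_le {x μ : ℂ} (hx : 0 ≤ x.re) (hxμ : x ^ 2 = 1 - μ) (hμ : ‖μ‖ ≤ 1 / 2) :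
    ‖x ^ 3 - (1 - 3 / 2 * μ)‖ ≤ 2 * ‖μ‖ ^ 2 := by
  have hadd : 1 ≤ ‖x + 1‖ := by
    refine le_trans ?_ (Complex.re_le_norm _)
    simpa using hx
  have hsub : ‖x - 1‖ ≤ ‖μ‖ := by
    have h : ‖x - 1‖ * ‖x + 1‖ = ‖μ‖ := by
      rw [← norm_mul, ← norm_neg μ]
      congr 1
      linear_combination hxμ
    nlinarith [norm_nonneg (x - 1)]
  have hhalf : ‖x + 1 / 2‖ ≤ 2 :=
    calc ‖x + 1 / 2‖ = ‖(x - 1) + 3 / 2‖ := by ring_nf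
      _ ≤ ‖x - 1‖ + ‖(3 / 2 : ℂ)‖ := norm_add_le _ _
      _ ≤ 2 := by norm_num; linarith
  have hfactor : x ^ 3 - (1 - 3 / 2 * μ) = (x - 1) ^ 2 * (x + 1 / 2) := by
    linear_combination (3 / 2) * hxμ
  rw [hfactor, norm_mul, norm_pow, mul_comm]
  gcongr

lemma norm_exp_mul_one_add_sub_one_le {y ρ : ℂ} {d : ℝ} (hy : ‖y‖ ≤ d) (hρ : ‖ρ‖ ≤ d)
    (hd : d ≤ 1) : ‖Complex.exp y * (1 + ρ) - 1‖ ≤ 5 * d := by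
  have hd₀ : 0 ≤ d := (norm_nonneg _).trans hy
  have hexp : ‖Complex.exp y - 1‖ ≤ 2 * d :=
    (Complex.norm_exp_sub_one_le (hy.trans hd)).trans (by gcongr)
  have hone : ‖1 + ρ‖ ≤ 2 := by
    refine (norm_add_le _ _).trans ?_
    rw [norm_one]
    linarith
  calc ‖Complex.exp y * (1 + ρ) - 1‖ = ‖(Complex.exp y - 1) * (1 + ρ) + ρ‖ := by ring_nf
    _ ≤ ‖Complex.exp y - 1‖ * ‖1 + ρ‖ + ‖ρ‖ := (norm_add_le _ _).trans_eq (by rw [norm_mul])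
    _ ≤ 2 * d * 2 + d := by gcongr
    _ = 5 * d := by ring

/-- Half the logarithm of the argument `e^{-iσπ/3} k² (1 - μ) f^{-2/3}` of an Airy function at wave
number `k = e^p`. -/
def airyExponent (σ f : ℝ) (p μ : ℂ) : ℂ :=
  p - σ * π * I / 6 - (Real.log f / 3 : ℝ) + Complex.log (1 - μ) / 2

lemma exp_airyExponent_sq (σ : ℝ) {f : ℝ} (hf : 0 < f) (p : ℂ) {μ : ℂ} (hμ : 1 - μ ≠ 0) :
    Complex.exp (airyExponent σ f p μ) ^ 2 =
      Complex.exp (-(σ * π * I / 3)) * (Complex.exp p ^ 2 * (1 - μ)) *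
        ((f ^ (-(2 : ℝ) / 3) : ℝ) : ℂ) := by
  conv_rhs => rw [← Complex.exp_log hμ]
  rw [Real.rpow_def_of_pos hf, Complex.ofReal_exp, airyExponent]
  simp only [← Complex.exp_nat_mul, ← Complex.exp_add]
  congr 1
  push_cast
  ring

lemma exp_airyExponent_cube {σ : ℝ} (hσ : σ = 1 ∨ σ = -1) {f : ℝ} (hf : 0 < f) (p μ : ℂ) :
    Complex.exp (airyExponent σ f p μ) ^ 3 =
      -σ * I * (Complex.exp p ^ 3 / f) * Complex.exp (Complex.log (1 - μ) / 2) ^ 3 := by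
  have hI : Complex.exp (-σ * (π / 2 * I)) = -σ * I := by
    rcases hσ with rfl | rfl <;> simp [Complex.exp_neg, Complex.exp_pi_div_two_mul_I]
  have hlog : (f : ℂ) = Complex.exp (Real.log f) := by
    rw [← Complex.ofReal_exp, Real.exp_log hf]
  rw [← hI, hlog, airyExponent]
  simp only [← Complex.exp_nat_mul, ← Complex.exp_add, ← Complex.exp_sub]
  congr 1
  push_cast
  ring

lemma abs_im_airyExponent_le {σ : ℝ} (hσ : σ = 1 ∨ σ = -1) (f : ℝ) {p μ : ℂ}
    (hp : |p.im| ≤ π / 4) (hμ : ‖μ‖ ≤ 1 / 20) : |(airyExponent σ f p μ).im| ≤ 11 * π / 24 := by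
  have hm := abs_le.1 ((Complex.abs_im_le_norm _).trans
    (norm_half_log_one_sub_le (hμ.trans (by norm_num))))
  have him : (airyExponent σ f p μ).im =
      p.im - σ * (π / 6) + (Complex.log (1 - μ) / 2).im := by
    simp [airyExponent]
    ring
  have hp' := abs_le.1 hp
  have hπ := Real.pi_gt_three
  rw [him, abs_le]
  rcases hσ with rfl | rfl <;> constructor <;> linarith

lemma exp_neg_three_mul_re_airyExponent_le (σ : ℝ) {f : ℝ} (hf : 0 < f) (p : ℂ) {μ : ℂ}
    (hμ : ‖μ‖ ≤ 1 / 2) : Real.exp (-3 * (airyExponent σ f p μ).re) ≤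
      Real.exp 3 * (f / Real.exp p.re ^ 3) := by
  have hm := abs_le.1 ((Complex.abs_re_le_norm _).trans (norm_half_log_one_sub_le hμ))
  have hre : (airyExponent σ f p μ).re =
      p.re - Real.log f / 3 + (Complex.log (1 - μ) / 2).re := by
    simp [airyExponent]
  have hrhs : Real.exp 3 * (f / Real.exp p.re ^ 3) =
      Real.exp (3 + (Real.log f - 3 * p.re)) := by
    rw [Real.exp_add, Real.exp_sub, Real.exp_log hf, ← Real.exp_nat_mul, Nat.cast_ofNat]
  rw [hrhs, hre, Real.exp_le_exp]
  linarith

/-- The difference between the exact exponent of the Airy asymptotics at shift `μ` and its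
first-order expansion in `μ`. -/
def phaseError (σ f : ℝ) (k μ : ℂ) : ℂ :=
  σ * (2 / 3 * (k ^ 3 / f)) * (Complex.exp (Complex.log (1 - μ) / 2) ^ 3 - (1 - 3 / 2 * μ)) * I -
    Complex.log (1 - μ) / 2 / 2

lemma norm_phaseError_le {σ : ℝ} (hσ : σ = 1 ∨ σ = -1) {f : ℝ} (hf : 0 < f) (k : ℂ) {μ : ℂ}
    (hμ : ‖μ‖ ≤ 1 / 2) :
    ‖phaseError σ f k μ‖ ≤ 4 / 3 * (‖k‖ ^ 3 / f * ‖μ‖ ^ 2) + ‖μ‖ := by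
  set m := Complex.log (1 - μ) / 2 with hm_def
  have hm : ‖m‖ ≤ ‖μ‖ := norm_half_log_one_sub_le hμ
  have hμ₀ : 1 - μ ≠ 0 := fun h => by
    rw [← sub_eq_zero.1 h, norm_one] at hμ
    norm_num at hμ
  have hre : 0 ≤ (Complex.exp m).re := by
    have him := abs_le.1 ((Complex.abs_im_le_norm m).trans (hm.trans hμ))
    have hcos : 0 ≤ Real.cos m.im := Real.cos_nonneg_of_mem_Icc
      ⟨by linarith [Real.pi_gt_three], by linarith [Real.pi_gt_three]⟩
    rw [Complex.exp_re]
    positivity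
  have hcube := norm_cube_sub_le hre (exp_half_log_sq hμ₀) hμ
  have hσ' : ‖(σ : ℂ)‖ = 1 := by rcases hσ with rfl | rfl <;> simp
  have hcoef : ‖(σ : ℂ) * (2 / 3 * (k ^ 3 / f))‖ = 2 / 3 * (‖k‖ ^ 3 / f) := by
    rw [norm_mul, norm_mul, norm_div, norm_div, norm_pow, hσ', Complex.norm_real,
      Real.norm_of_nonneg hf.le, Complex.norm_ofNat, Complex.norm_ofNat, one_mul]
  calc ‖phaseError σ f k μ‖
      ≤ 2 / 3 * (‖k‖ ^ 3 / f) * ‖Complex.exp m ^ 3 - (1 - 3 / 2 * μ)‖ + ‖m‖ / 2 := by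
        refine (norm_sub_le _ _).trans_eq ?_
        rw [norm_mul, norm_mul, hcoef, Complex.norm_I, mul_one, norm_div, Complex.norm_ofNat]
    _ ≤ 2 / 3 * (‖k‖ ^ 3 / f) * (2 * ‖μ‖ ^ 2) + ‖μ‖ := by
        gcongr
        linarith [norm_nonneg m]
    _ = _ := by ring

/-- The recessive Airy functions of `z` at energy shift `a f`: `σ = 1` and `σ = -1` select the
arguments `-ω (z - a f) f^{-2/3}` and `-ω⁻¹ (z - a f) f^{-2/3}`. -/
def airyShift (σ a f : ℝ) (z : ℂ) : ℂ :=
  Ai (Complex.exp (-(σ * π * I / 3)) * (z - a * f) * ((f ^ (-(2 : ℝ) / 3) : ℝ) : ℂ))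

/-- The leading semiclassical term of `airyShift σ a f` at `z = e^{2p}`. -/
def airyParametrix (σ a f : ℝ) (p : ℂ) : ℂ :=
  Complex.exp (σ * π * I / 12) * ((f ^ ((1 : ℝ) / 6) : ℝ) : ℂ) * Complex.exp (-p / 2) *
    Complex.exp (σ * (2 / 3 * Complex.exp p ^ 3 / f - a * Complex.exp p) * I) / (2 * √π)

lemma airyParametrix_mul_exp_phaseError {σ : ℝ} (hσ : σ = 1 ∨ σ = -1) (a : ℝ) {f : ℝ}
    (hf : 0 < f) (p : ℂ) :
    airyParametrix σ a f p * Complex.exp (phaseError σ f (Complex.exp p)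
        (a * f / Complex.exp p ^ 2)) =
      Complex.exp (-(2 / 3) * Complex.exp (airyExponent σ f p (a * f / Complex.exp p ^ 2)) ^ 3) *
        Complex.exp (-airyExponent σ f p (a * f / Complex.exp p ^ 2) / 2) / (2 * √π) := by
  rw [exp_airyExponent_cube hσ hf, airyParametrix, Real.rpow_def_of_pos hf, Complex.ofReal_exp,
    div_mul_eq_mul_div]
  congr 1
  have hf₀ : (f : ℂ) ≠ 0 := by exact_mod_cast hf.ne'
  have hk : Complex.exp p ≠ 0 := Complex.exp_ne_zero p
  simp only [airyExponent, phaseError, ← Complex.exp_add]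
  generalize Complex.exp p = k at *
  have hμ : k ^ 3 / f * (a * f / k ^ 2) = a * k := by field_simp
  congr 1
  push_cast
  linear_combination (σ * I) * hμ

lemma norm_shift_le {a κ f : ℝ} (ha : |a| ≤ κ) (hf : 0 < f) (p : ℂ) :
    ‖(a * f / Complex.exp p ^ 2 : ℂ)‖ ≤ κ * (f / Real.exp p.re ^ 2) := by
  rw [norm_div, norm_mul, norm_pow, Complex.norm_exp, Complex.norm_real, Complex.norm_real,
    Real.norm_eq_abs, Real.norm_of_nonneg hf.le, mul_div_assoc]
  gcongr

lemma norm_phaseError_shift_le {σ : ℝ} (hσ : σ = 1 ∨ σ = -1) {a κ f : ℝ} (ha : |a| ≤ κ)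
    (hf : 0 < f) {p : ℂ} (hμ : ‖(a * f / Complex.exp p ^ 2 : ℂ)‖ ≤ 1 / 2) :
    ‖phaseError σ f (Complex.exp p) (a * f / Complex.exp p ^ 2)‖ ≤
      (2 * κ ^ 2 + κ) * relError f (Real.exp p.re) := by
  have hr : 0 < Real.exp p.re := Real.exp_pos _
  have hκ : 0 ≤ κ := (abs_nonneg a).trans ha
  have hμκ := norm_shift_le ha hf p
  calc _ ≤ 4 / 3 * (Real.exp p.re ^ 3 / f * (κ * (f / Real.exp p.re ^ 2)) ^ 2) +
          κ * (f / Real.exp p.re ^ 2) := by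
        refine (norm_phaseError_le hσ hf _ hμ).trans ?_
        rw [Complex.norm_exp]
        gcongr
    _ = 4 / 3 * κ ^ 2 * (f / Real.exp p.re) + κ * (f / Real.exp p.re ^ 2) := by field_simp
    _ ≤ 2 * κ ^ 2 * relError f (Real.exp p.re) + κ * relError f (Real.exp p.re) := by
        have := (relError_pos hf hr).le
        gcongr ?_ * κ ^ 2 * ?_ + κ * ?_
        · norm_num
        · exact div_le_relError hf hr
        · exact div_sq_le_relError hf hr
    _ = _ := by ring

theorem exists_airyShift_eq {κ : ℝ} (hκ : 0 < κ) :
    ∃ C > 0, ∃ c > 0, ∀ a : ℝ, |a| ≤ κ → ∀ σ : ℝ, σ = 1 ∨ σ = -1 → ∀ f : ℝ, 0 < f →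
      ∀ p : ℂ, |p.im| ≤ π / 4 → relError f (Real.exp p.re) ≤ c →
      ∃ X : ℂ, ‖X - 1‖ ≤ C * relError f (Real.exp p.re) ∧
        airyShift σ a f (Complex.exp p ^ 2) = airyParametrix σ a f p * X := by
  have hπ := Real.pi_pos
  obtain ⟨C, hC, hAi⟩ := exists_Ai_exp_sq_eq (c := Real.cos (11 * π / 24))
    (Real.cos_pos_of_mem_Ioo ⟨by linarith, by linarith⟩)
  set M : ℝ := 2 * κ ^ 2 + κ + C * Real.exp 3 with hM
  have hMpos : 0 < M := by positivity
  refine ⟨5 * M, by positivity, min (1 / (20 * κ)) (1 / M), by positivity,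
    fun a ha σ hσ f hf p hp hd => ?_⟩
  set d := relError f (Real.exp p.re) with hd_def
  have hd₀ : 0 < d := relError_pos hf (Real.exp_pos _)
  set μ : ℂ := a * f / Complex.exp p ^ 2 with hμ_def
  have hμ : ‖μ‖ ≤ 1 / 20 :=
    calc ‖μ‖ ≤ κ * (f / Real.exp p.re ^ 2) := norm_shift_le ha hf p
      _ ≤ κ * (1 / (20 * κ)) := by
          gcongr κ * ?_
          exact (div_sq_le_relError hf (Real.exp_pos _)).trans (hd.trans (min_le_left _ _))
      _ = 1 / 20 := by field_simp
  have hμ₀ : 1 - μ ≠ 0 := fun h => by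
    rw [← sub_eq_zero.1 h, norm_one] at hμ
    norm_num at hμ
  have him := abs_im_airyExponent_le hσ f hp hμ
  obtain ⟨ρ, hρ, hA⟩ := hAi (airyExponent σ f p μ)
    (by rw [← Real.cos_abs (airyExponent σ f p μ).im]
        exact Real.cos_le_cos_of_nonneg_of_le_pi (abs_nonneg _) (by linarith) him)
    (by linarith)
  have hρd : ‖ρ‖ ≤ M * d :=
    calc ‖ρ‖ ≤ C * (Real.exp 3 * (f / Real.exp p.re ^ 3)) := by
          grw [hρ, exp_neg_three_mul_re_airyExponent_le σ hf p (hμ.trans (by norm_num))]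
      _ ≤ C * (Real.exp 3 * d) := by grw [div_cube_le_relError hf (Real.exp_pos _)]
      _ ≤ M * d := by nlinarith [show 0 ≤ (2 * κ ^ 2 + κ) * d by positivity]
  have hyd : ‖phaseError σ f (Complex.exp p) μ‖ ≤ M * d := by
    grw [norm_phaseError_shift_le hσ ha hf (hμ.trans (by norm_num)), ← hd_def, hM,
      ← le_add_of_nonneg_right (by positivity)]
  refine ⟨Complex.exp (phaseError σ f (Complex.exp p) μ) * (1 + ρ), ?_, ?_⟩
  · rw [mul_assoc]
    exact norm_exp_mul_one_add_sub_one_le hyd hρd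
      ((le_div_iff₀' hMpos).1 (hd.trans (min_le_right _ _)))
  · have harg : Complex.exp p ^ 2 - a * f = Complex.exp p ^ 2 * (1 - μ) := by
      rw [hμ_def, mul_sub, mul_one, mul_div_cancel₀ _ (pow_ne_zero 2 (Complex.exp_ne_zero p))]
    rw [airyShift, harg, ← exp_airyExponent_sq σ hf p hμ₀, hA,
      ← airyParametrix_mul_exp_phaseError hσ a hf p, mul_assoc]

/-- The twelfth root `e^{iπ/12}` of `-1`, whose powers carry all the constant phases of the Airy
parametrices. -/
def phaseUnit : ℂ := Complex.exp (π * I / 12)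

lemma phaseUnit_pow_six : phaseUnit ^ 6 = I := by
  rw [phaseUnit, ← Complex.exp_nat_mul]
  conv_rhs => rw [← Complex.exp_pi_div_two_mul_I]
  congr 1
  push_cast
  ring

lemma ωc_eq_phaseUnit_pow : ωc = phaseUnit ^ 8 := by
  rw [phaseUnit, ← Complex.exp_nat_mul, ωc]
  congr 1
  push_cast
  ring

lemma ωc_inv_eq_neg_phaseUnit_pow : ωc⁻¹ = -phaseUnit ^ 4 := by
  rw [ωc_eq_phaseUnit_pow]
  apply inv_eq_of_mul_eq_one_right
  linear_combination (-phaseUnit ^ 6 - I) * phaseUnit_pow_six - Complex.I_sq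

lemma airyShift_one (a f : ℝ) (z : ℂ) :
    airyShift 1 a f z = Ai (-ωc * (z - a * f) * ((f ^ (-(2 : ℝ) / 3) : ℝ) : ℂ)) := by
  have h : Complex.exp (-(((1 : ℝ) : ℂ) * π * I / 3)) = -ωc := by
    rw [show -(((1 : ℝ) : ℂ) * π * I / 3) = 2 * π * I / 3 - π * I by push_cast; ring,
      Complex.exp_sub, Complex.exp_pi_mul_I, div_neg, div_one, ωc]
  rw [airyShift, h]

lemma airyShift_neg_one (a f : ℝ) (z : ℂ) :
    airyShift (-1) a f z = Ai (-ωc⁻¹ * (z - a * f) * ((f ^ (-(2 : ℝ) / 3) : ℝ) : ℂ)) := by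
  have h : Complex.exp (-(((-1 : ℝ) : ℂ) * π * I / 3)) = -ωc⁻¹ := by
    rw [show -(((-1 : ℝ) : ℂ) * π * I / 3) = -(2 * π * I / 3) + π * I by push_cast; ring,
      Complex.exp_add, Complex.exp_pi_mul_I, Complex.exp_neg, ωc, mul_neg_one]
  rw [airyShift, h]

lemma Ai_neg_shift (a f : ℝ) (z : ℂ) :
    Ai (-(z - a * f) * ((f ^ (-(2 : ℝ) / 3) : ℝ) : ℂ)) =
      -phaseUnit ^ 8 * airyShift 1 a f z + phaseUnit ^ 4 * airyShift (-1) a f z := by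
  have h := Ai_connection (-(z - a * f) * ((f ^ (-(2 : ℝ) / 3) : ℝ) : ℂ))
  have hone : ωc * (-(z - a * f) * ((f ^ (-(2 : ℝ) / 3) : ℝ) : ℂ)) =
      -ωc * (z - a * f) * ((f ^ (-(2 : ℝ) / 3) : ℝ) : ℂ) := by ring
  have hneg : ωc⁻¹ * (-(z - a * f) * ((f ^ (-(2 : ℝ) / 3) : ℝ) : ℂ)) =
      -ωc⁻¹ * (z - a * f) * ((f ^ (-(2 : ℝ) / 3) : ℝ) : ℂ) := by ring
  rw [hone, hneg, ← airyShift_one, ← airyShift_neg_one, ωc_inv_eq_neg_phaseUnit_pow,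
    ωc_eq_phaseUnit_pow] at h
  linear_combination h

lemma Wf_eq {f : ℝ} (hf : 0 < f) :
    Wf f = ((f ^ ((1 : ℝ) / 6) : ℝ) : ℂ) ^ 2 * (phaseUnit ^ 2)⁻¹ / (2 * (√π : ℂ) ^ 2) := by
  have hw : ((f ^ ((1 : ℝ) / 6) : ℝ) : ℂ) ^ 2 = ((f ^ ((1 : ℝ) / 3) : ℝ) : ℂ) := by
    rw [← Complex.ofReal_pow, ← Real.rpow_natCast, ← Real.rpow_mul hf.le]
    norm_num
  have hπ : (√π : ℂ) ^ 2 = π := by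
    rw [← Complex.ofReal_pow, Real.sq_sqrt Real.pi_pos.le]
  rw [hw, hπ, Wf, phaseUnit, ← Complex.exp_nat_mul, ← Complex.exp_neg]
  congr 3
  push_cast
  ring_nf

lemma airyParametrix_one (a f : ℝ) (p : ℂ) : airyParametrix 1 a f p =
    phaseUnit * ((f ^ ((1 : ℝ) / 6) : ℝ) : ℂ) * Complex.exp (-p / 2) *
      (Complex.exp (2 / 3 * Complex.exp p ^ 3 / f * I) *
        (Complex.exp (a * Complex.exp p * I))⁻¹) / (2 * √π) := by
  rw [airyParametrix, phaseUnit, ← Complex.exp_neg (a * Complex.exp p * I), ← Complex.exp_add,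
    Complex.ofReal_one, one_mul, one_mul]
  ring_nf

lemma airyParametrix_neg_one (a f : ℝ) (p : ℂ) : airyParametrix (-1) a f p =
    phaseUnit⁻¹ * ((f ^ ((1 : ℝ) / 6) : ℝ) : ℂ) * Complex.exp (-p / 2) *
      ((Complex.exp (2 / 3 * Complex.exp p ^ 3 / f * I))⁻¹ *
        Complex.exp (a * Complex.exp p * I)) / (2 * √π) := by
  rw [airyParametrix, phaseUnit, ← Complex.exp_neg, ← Complex.exp_neg, ← Complex.exp_add,
    Complex.ofReal_neg, Complex.ofReal_one, neg_one_mul]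
  ring_nf

/-- The non-oscillating part of `D_f` at wave number `k`, with `K = 2ηk` and `Λ = e^{2iκk}`. The
vector `x` holds the amplitude corrections to the Airy parametrices for the (direction, shift) pairs
`(1, κ)`, `(1, -κ)`, `(-1, κ)`, `(-1, -κ)`. -/
def steadyPart (K Λ : ℂ) (x : Fin 4 → ℂ) : ℂ :=
  1 + I / K * (x 0 * x 2 + x 1 * x 3) - x 1 * x 2 * (x 0 * x 3 - Λ ^ 2 * x 1 * x 2) / K ^ 2

/-- The coefficient of the rapidly oscillating factor `e^{4ik³/(3f)}` in `D_f`, with the same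
arguments as `steadyPart`. -/
def oscPart (K Λ : ℂ) (x : Fin 4 → ℂ) : ℂ :=
  (Λ⁻¹ * x 0 ^ 2 + Λ * x 1 ^ 2) / K +
    I / K ^ 2 * (x 0 * x 1 * (Λ⁻¹ * x 0 * x 3 - Λ * x 1 * x 2))

lemma steadyPart_one {K : ℂ} (hK : K ≠ 0) (Λ : ℂ) :
    steadyPart K Λ 1 = ((K + I) ^ 2 + Λ ^ 2) / K ^ 2 := by
  simp only [steadyPart, Pi.one_apply]
  field_simp
  linear_combination (-1 : ℂ) * Complex.I_sq

lemma oscPart_one {K : ℂ} (hK : K ≠ 0) (Λ : ℂ) :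
    oscPart K Λ 1 = (Λ⁻¹ * (K + I) + Λ * (K - I)) / K ^ 2 := by
  simp only [oscPart, Pi.one_apply]
  field_simp
  ring

/-- The phase `Λ = e^{2iκk}` accumulated between the two shifts at wave number `k`. -/
def shiftPhase (κ : ℝ) (k : ℂ) : ℂ := Complex.exp (2 * κ * k * I)

/-- The rapidly oscillating factor `e^{4ik³/(3f)}`. -/
def fastPhase (f : ℝ) (k : ℂ) : ℂ := Complex.exp (4 / 3 * k ^ 3 / f * I)

/-- The semiclassical expression for `D_f(k²)` with amplitude corrections `x`. -/
def semiclassicalDet (κ η f : ℝ) (k : ℂ) (x : Fin 4 → ℂ) : ℂ :=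
  steadyPart (2 * η * k) (shiftPhase κ k) x +
    fastPhase f k * oscPart (2 * η * k) (shiftPhase κ k) x

/-- `D_f` as a polynomial in the recessive Airy values `u₁, u₂` (`σ = 1`) and `v₁, v₂` (`σ = -1`)
at the two shifts, with `τ = e^{iπ/12}`. -/
def airyDeterminant (τ η W u₁ u₂ v₁ v₂ : ℂ) : ℂ :=
  1 + (u₁ * (-τ ^ 8 * u₁ + τ ^ 4 * v₁) + u₂ * (-τ ^ 8 * u₂ + τ ^ 4 * v₂)) / (η * W) +
    u₂ * (-τ ^ 8 * u₁ + τ ^ 4 * v₁) *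
      (u₁ * (-τ ^ 8 * u₂ + τ ^ 4 * v₂) - u₂ * (-τ ^ 8 * u₁ + τ ^ 4 * v₁)) / (η ^ 2 * W ^ 2)

lemma Df_eq_airyDeterminant (κ η f : ℝ) (z : ℂ) :
    Df κ η f z = airyDeterminant phaseUnit η (Wf f) (airyShift 1 κ f z) (airyShift 1 (-κ) f z)
      (airyShift (-1) κ f z) (airyShift (-1) (-κ) f z) := by
  have hκ : z + κ * f = z - (-κ : ℝ) * f := by push_cast; ring
  rw [airyDeterminant, ← Ai_neg_shift, ← Ai_neg_shift, airyShift_one, airyShift_one, Df, alphaP,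
    alphaM, betaP, betaM, hκ]

/-- Here `w = f^{1/6}`, `h = k^{-1/2}`, `s = √π`, `e = e^{2ik³/(3f)}` and `l = e^{iκk}`. -/
lemma airyDeterminant_parametrix {τ w h s e l k η x₁ x₂ y₁ y₂ : ℂ} (hτ : τ ^ 6 = I) (hw : w ≠ 0)
    (hhk : h ^ 2 * k = 1) (hs : s ≠ 0) (he : e ≠ 0) (hl : l ≠ 0) (hη : η ≠ 0) :
    airyDeterminant τ η (w ^ 2 * (τ ^ 2)⁻¹ / (2 * s ^ 2))
        (τ * w * h * (e * l⁻¹) / (2 * s) * x₁) (τ * w * h * (e * l) / (2 * s) * x₂)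
        (τ⁻¹ * w * h * (e⁻¹ * l) / (2 * s) * y₁) (τ⁻¹ * w * h * (e⁻¹ * l⁻¹) / (2 * s) * y₂) =
      steadyPart (2 * η * k) (l ^ 2) ![x₁, x₂, y₁, y₂] +
        e ^ 2 * oscPart (2 * η * k) (l ^ 2) ![x₁, x₂, y₁, y₂] := by
  have : τ ≠ 0 := by
    rintro rfl
    simp [eq_comm] at hτ
  have hh₀ : h ≠ 0 := by
    rintro rfl
    simp at hhk
  have hk : k = (h ^ 2)⁻¹ := eq_inv_of_mul_eq_one_right hhk
  have hτ₁₂ : τ ^ 12 = -1 := by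
    rw [show τ ^ 12 = (τ ^ 6) ^ 2 by ring, hτ, Complex.I_sq]
  have hlinear : ∀ u₁ u₂ v₁ v₂ : ℂ, u₁ = τ * w * h * (e * l⁻¹) / (2 * s) * x₁ →
      u₂ = τ * w * h * (e * l) / (2 * s) * x₂ → v₁ = τ⁻¹ * w * h * (e⁻¹ * l) / (2 * s) * y₁ →
      v₂ = τ⁻¹ * w * h * (e⁻¹ * l⁻¹) / (2 * s) * y₂ →
      (u₁ * (-τ ^ 8 * u₁ + τ ^ 4 * v₁) + u₂ * (-τ ^ 8 * u₂ + τ ^ 4 * v₂)) /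
          (η * (w ^ 2 * (τ ^ 2)⁻¹ / (2 * s ^ 2))) =
        I / (2 * η * k) * (x₁ * y₁ + x₂ * y₂) +
          e ^ 2 * (((l ^ 2)⁻¹ * x₁ ^ 2 + l ^ 2 * x₂ ^ 2) / (2 * η * k)) := by
    rintro _ _ _ _ rfl rfl rfl rfl
    rw [← hτ, hk]
    field_simp
    linear_combination (-e ^ 2 * (x₁ ^ 2 + l ^ 4 * x₂ ^ 2)) * hτ₁₂
  have hquadratic : ∀ u₁ u₂ v₁ v₂ : ℂ, u₁ = τ * w * h * (e * l⁻¹) / (2 * s) * x₁ →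
      u₂ = τ * w * h * (e * l) / (2 * s) * x₂ → v₁ = τ⁻¹ * w * h * (e⁻¹ * l) / (2 * s) * y₁ →
      v₂ = τ⁻¹ * w * h * (e⁻¹ * l⁻¹) / (2 * s) * y₂ →
      u₂ * (-τ ^ 8 * u₁ + τ ^ 4 * v₁) *
          (u₁ * (-τ ^ 8 * u₂ + τ ^ 4 * v₂) - u₂ * (-τ ^ 8 * u₁ + τ ^ 4 * v₁)) /
            (η ^ 2 * (w ^ 2 * (τ ^ 2)⁻¹ / (2 * s ^ 2)) ^ 2) =
        -(x₂ * y₁ * (x₁ * y₂ - (l ^ 2) ^ 2 * x₂ * y₁) / (2 * η * k) ^ 2) +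
          e ^ 2 * (I / (2 * η * k) ^ 2 *
            (x₁ * x₂ * ((l ^ 2)⁻¹ * x₁ * y₂ - l ^ 2 * x₂ * y₁))) := by
    rintro _ _ _ _ rfl rfl rfl rfl
    rw [← hτ, hk]
    field_simp
    linear_combination (x₂ * x₁ * l ^ 2 * y₁ * y₂ - x₂ ^ 2 * l ^ 6 * y₁ ^ 2 +
      τ ^ 6 * (x₂ ^ 2 * e ^ 2 * x₁ * l ^ 4 * y₁ - x₂ * e ^ 2 * x₁ ^ 2 * y₂)) * hτ₁₂
  rw [airyDeterminant, hlinear _ _ _ _ rfl rfl rfl rfl, hquadratic _ _ _ _ rfl rfl rfl rfl,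
    steadyPart, oscPart]
  simp only [Matrix.cons_val]
  ring

theorem exists_Df_eq_semiclassicalDet {κ η : ℝ} (hκ : 0 < κ) (hη : 0 < η) :
    ∃ C > 0, ∃ c > 0, ∀ f : ℝ, 0 < f → ∀ p : ℂ, |p.im| ≤ π / 4 →
      relError f (Real.exp p.re) ≤ c → ∃ x : Fin 4 → ℂ,
        ‖x - 1‖ ≤ C * relError f (Real.exp p.re) ∧
        Df κ η f (Complex.exp p ^ 2) = semiclassicalDet κ η f (Complex.exp p) x := by
  obtain ⟨C, hC, c, hc, H⟩ := exists_airyShift_eq hκ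
  refine ⟨C, hC, c, hc, fun f hf p hp hd => ?_⟩
  have hκ₁ : |κ| ≤ κ := (abs_of_pos hκ).le
  have hκ₂ : |-κ| ≤ κ := (abs_neg κ).trans_le hκ₁
  obtain ⟨x₁, hx₁, hu₁⟩ := H κ hκ₁ 1 (.inl rfl) f hf p hp hd
  obtain ⟨x₂, hx₂, hu₂⟩ := H (-κ) hκ₂ 1 (.inl rfl) f hf p hp hd
  obtain ⟨y₁, hy₁, hv₁⟩ := H κ hκ₁ (-1) (.inr rfl) f hf p hp hd
  obtain ⟨y₂, hy₂, hv₂⟩ := H (-κ) hκ₂ (-1) (.inr rfl) f hf p hp hd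
  refine ⟨![x₁, x₂, y₁, y₂], ?_, ?_⟩
  · rw [pi_norm_le_iff_of_nonneg ((norm_nonneg _).trans hx₁)]
    simp [Fin.forall_fin_succ, hx₁, hx₂, hy₁, hy₂]
  · have hneg : Complex.exp ((-κ : ℝ) * Complex.exp p * I) =
        (Complex.exp (κ * Complex.exp p * I))⁻¹ := by
      rw [← Complex.exp_neg, Complex.ofReal_neg, neg_mul, neg_mul]
    have hΛ : shiftPhase κ (Complex.exp p) =
        Complex.exp (κ * Complex.exp p * I) ^ 2 := by
      rw [shiftPhase, ← Complex.exp_nat_mul]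
      congr 1
      push_cast
      ring
    have hE : fastPhase f (Complex.exp p) =
        Complex.exp (2 / 3 * Complex.exp p ^ 3 / f * I) ^ 2 := by
      rw [fastPhase, ← Complex.exp_nat_mul (2 / 3 * Complex.exp p ^ 3 / f * I)]
      congr 1
      push_cast
      ring
    have hhk : Complex.exp (-p / 2) ^ 2 * Complex.exp p = 1 := by
      rw [← Complex.exp_nat_mul, ← Complex.exp_add, ← Complex.exp_zero]
      ring_nf
    have hw : ((f ^ ((1 : ℝ) / 6) : ℝ) : ℂ) ≠ 0 := by
      exact_mod_cast (Real.rpow_pos_of_pos hf _).ne'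
    have hs : (√π : ℂ) ≠ 0 := by exact_mod_cast (Real.sqrt_pos.2 Real.pi_pos).ne'
    rw [Df_eq_airyDeterminant, hu₁, hu₂, hv₁, hv₂, airyParametrix_one, airyParametrix_one,
      airyParametrix_neg_one, airyParametrix_neg_one, hneg, inv_inv, Wf_eq hf,
      semiclassicalDet, hΛ, hE]
    exact airyDeterminant_parametrix phaseUnit_pow_six hw hhk hs (Complex.exp_ne_zero _)
      (Complex.exp_ne_zero _) (by exact_mod_cast hη.ne')

/-! ### The dominant part away from the positive real axis -/

section AmplitudePerturbation

lemma norm_mul_sub_one_le {a b : ℂ} {d e : ℝ} (ha : ‖a - 1‖ ≤ d) (hb : ‖b - 1‖ ≤ e) :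
    ‖a * b - 1‖ ≤ d + e + d * e := by
  have hd : 0 ≤ d := (norm_nonneg _).trans ha
  calc ‖a * b - 1‖ = ‖(a - 1) + (b - 1) + (a - 1) * (b - 1)‖ := by ring_nf
    _ ≤ ‖a - 1‖ + ‖b - 1‖ + ‖a - 1‖ * ‖b - 1‖ := by
      rw [← norm_mul]
      exact norm_add₃_le
    _ ≤ d + e + d * e := by gcongr

variable {ι : Type*} [Fintype ι] {x : ι → ℂ} {d : ℝ}

lemma norm_mul_apply_sub_one_le (hd : d ≤ 1) (hx : ‖x - 1‖ ≤ d) (i j : ι) :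
    ‖x i * x j - 1‖ ≤ 3 * d := by
  have hd₀ : 0 ≤ d := (norm_nonneg _).trans hx
  have hcoord (i : ι) : ‖x i - 1‖ ≤ d := (norm_le_pi_norm (x - 1) i).trans hx
  nlinarith [norm_mul_sub_one_le (hcoord i) (hcoord j)]

lemma norm_mul_mul_mul_apply_sub_one_le (hd : d ≤ 1) (hx : ‖x - 1‖ ≤ d) (i j l m : ι) :
    ‖x i * x j * (x l * x m) - 1‖ ≤ 15 * d := by
  have hd₀ : 0 ≤ d := (norm_nonneg _).trans hx
  nlinarith [norm_mul_sub_one_le (norm_mul_apply_sub_one_le hd hx i j)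
    (norm_mul_apply_sub_one_le hd hx l m)]

end AmplitudePerturbation

section PartBounds

/-- The size `1/|K| + 1/|K|²` of the coefficients of `steadyPart` and `oscPart`. -/
def invSize (K : ℂ) : ℝ := 1 / ‖K‖ + 1 / ‖K‖ ^ 2

lemma invSize_nonneg (K : ℂ) : 0 ≤ invSize K := by
  unfold invSize
  positivity

lemma invSize_pos {K : ℂ} (hK : K ≠ 0) : 0 < invSize K := by
  unfold invSize
  positivity

variable {K Λ : ℂ} {x : Fin 4 → ℂ} {d : ℝ}

lemma norm_steadyPart_sub_le (hd : d ≤ 1) (hx : ‖x - 1‖ ≤ d) :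
    ‖steadyPart K Λ x - steadyPart K Λ 1‖ ≤ 15 * d * ((1 + ‖Λ‖ ^ 2) * invSize K) := by
  have hd₀ : 0 ≤ d := (norm_nonneg _).trans hx
  have hsplit : steadyPart K Λ x - steadyPart K Λ 1 =
      I / K * ((x 0 * x 2 - 1) + (x 1 * x 3 - 1)) -
        (x 1 * x 2 * (x 0 * x 3) - 1 - Λ ^ 2 * (x 1 * x 2 * (x 1 * x 2) - 1)) / K ^ 2 := by
    simp only [steadyPart, Pi.one_apply]
    ring
  have hpair := norm_mul_apply_sub_one_le hd hx
  have hquad := norm_mul_mul_mul_apply_sub_one_le hd hx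
  rw [hsplit]
  calc _ ≤ 1 / ‖K‖ * (3 * d + 3 * d) + (15 * d + ‖Λ‖ ^ 2 * (15 * d)) / ‖K‖ ^ 2 := by
        refine (norm_sub_le _ _).trans ?_
        rw [norm_mul, norm_div, norm_div, Complex.norm_I, norm_pow]
        gcongr
        · exact norm_add_le_of_le (hpair 0 2) (hpair 1 3)
        · refine norm_sub_le_of_le (hquad 1 2 0 3) ?_
          rw [norm_mul, norm_pow]
          gcongr
          exact hquad 1 2 1 2
    _ ≤ 15 * d * ((1 + ‖Λ‖ ^ 2) * invSize K) := by
        have hgap : 15 * d * ((1 + ‖Λ‖ ^ 2) * invSize K) = 1 / ‖K‖ * (3 * d + 3 * d) +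
            (15 * d + ‖Λ‖ ^ 2 * (15 * d)) / ‖K‖ ^ 2 + (9 * d + 15 * d * ‖Λ‖ ^ 2) * (1 / ‖K‖) := by
          rw [invSize]
          ring
        rw [hgap, le_add_iff_nonneg_right]
        positivity

lemma norm_oscPart_sub_le (hd : d ≤ 1) (hx : ‖x - 1‖ ≤ d) :
    ‖oscPart K Λ x - oscPart K Λ 1‖ ≤ 15 * d * ((‖Λ‖⁻¹ + ‖Λ‖) * invSize K) := by
  have hd₀ : 0 ≤ d := (norm_nonneg _).trans hx
  have hsplit : oscPart K Λ x - oscPart K Λ 1 =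
      (Λ⁻¹ * (x 0 * x 0 - 1) + Λ * (x 1 * x 1 - 1)) / K +
        I / K ^ 2 * (Λ⁻¹ * (x 0 * x 1 * (x 0 * x 3) - 1) -
          Λ * (x 0 * x 1 * (x 1 * x 2) - 1)) := by
    simp only [oscPart, Pi.one_apply]
    ring
  have hpair := norm_mul_apply_sub_one_le hd hx
  have hquad := norm_mul_mul_mul_apply_sub_one_le hd hx
  rw [hsplit]
  calc _ ≤ (‖Λ‖⁻¹ * (3 * d) + ‖Λ‖ * (3 * d)) / ‖K‖ +
        1 / ‖K‖ ^ 2 * (‖Λ‖⁻¹ * (15 * d) + ‖Λ‖ * (15 * d)) := by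
        refine (norm_add_le _ _).trans ?_
        rw [norm_mul, norm_div, norm_div, Complex.norm_I, norm_pow]
        gcongr
        · apply norm_add_le_of_le <;> rw [norm_mul]
          · rw [norm_inv]
            gcongr
            exact hpair 0 0
          · gcongr
            exact hpair 1 1
        · apply norm_sub_le_of_le <;> rw [norm_mul]
          · rw [norm_inv]
            gcongr
            exact hquad 0 1 0 3
          · gcongr
            exact hquad 0 1 1 2
    _ ≤ 15 * d * ((‖Λ‖⁻¹ + ‖Λ‖) * invSize K) := by
        have hgap : 15 * d * ((‖Λ‖⁻¹ + ‖Λ‖) * invSize K) =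
            (‖Λ‖⁻¹ * (3 * d) + ‖Λ‖ * (3 * d)) / ‖K‖ +
              1 / ‖K‖ ^ 2 * (‖Λ‖⁻¹ * (15 * d) + ‖Λ‖ * (15 * d)) +
              12 * d * ((‖Λ‖⁻¹ + ‖Λ‖) * (1 / ‖K‖)) := by
          rw [invSize]
          ring
        rw [hgap, le_add_iff_nonneg_right]
        positivity

lemma norm_steadyPart_one_le : ‖steadyPart K Λ 1‖ ≤ 1 + 2 * ((1 + ‖Λ‖ ^ 2) * invSize K) := by
  have hsplit : steadyPart K Λ 1 = 1 + (I / K * 2 - (1 - Λ ^ 2) / K ^ 2) := by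
    simp only [steadyPart, Pi.one_apply]
    ring
  rw [hsplit]
  calc _ ≤ 1 + (1 / ‖K‖ * 2 + (1 + ‖Λ‖ ^ 2) / ‖K‖ ^ 2) := by
        refine norm_add_le_of_le norm_one.le ((norm_sub_le _ _).trans ?_)
        rw [norm_mul, norm_div, norm_div, Complex.norm_I, norm_pow, Complex.norm_ofNat]
        gcongr
        exact norm_sub_le_of_le norm_one.le (norm_pow _ _).le
    _ ≤ 1 + 2 * ((1 + ‖Λ‖ ^ 2) * invSize K) := by
        have : 0 ≤ 2 * ‖Λ‖ ^ 2 * (1 / ‖K‖) + (1 + ‖Λ‖ ^ 2) / ‖K‖ ^ 2 := by positivity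
        rw [invSize]
        linarith [mul_one_div (1 + ‖Λ‖ ^ 2) (‖K‖ ^ 2)]

lemma norm_oscPart_one_le : ‖oscPart K Λ 1‖ ≤ (‖Λ‖⁻¹ + ‖Λ‖) * invSize K := by
  have hsplit : oscPart K Λ 1 = (Λ⁻¹ + Λ) / K + I / K ^ 2 * (Λ⁻¹ - Λ) := by
    simp only [oscPart, Pi.one_apply]
    ring
  rw [hsplit]
  calc _ ≤ (‖Λ‖⁻¹ + ‖Λ‖) / ‖K‖ + 1 / ‖K‖ ^ 2 * (‖Λ‖⁻¹ + ‖Λ‖) := by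
        refine (norm_add_le _ _).trans ?_
        rw [norm_mul, norm_div, norm_div, Complex.norm_I, norm_pow, ← norm_inv]
        gcongr
        · exact norm_add_le _ _
        · exact norm_sub_le _ _
    _ = (‖Λ‖⁻¹ + ‖Λ‖) * invSize K := by
        rw [invSize]
        ring

lemma norm_steadyPart_le (hx : ‖x - 1‖ ≤ 1) :
    ‖steadyPart K Λ x‖ ≤ 1 + 17 * ((1 + ‖Λ‖ ^ 2) * invSize K) := by
  linarith [norm_steadyPart_sub_le (K := K) (Λ := Λ) le_rfl hx,
    norm_steadyPart_one_le (K := K) (Λ := Λ),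
    norm_sub_norm_le (steadyPart K Λ x) (steadyPart K Λ 1)]

lemma norm_oscPart_le (hx : ‖x - 1‖ ≤ 1) :
    ‖oscPart K Λ x‖ ≤ 16 * ((‖Λ‖⁻¹ + ‖Λ‖) * invSize K) := by
  linarith [norm_oscPart_sub_le (K := K) (Λ := Λ) le_rfl hx,
    norm_oscPart_one_le (K := K) (Λ := Λ), norm_sub_norm_le (oscPart K Λ x) (oscPart K Λ 1)]

end PartBounds

section ModelLowerBounds

lemma norm_add_I_sq (K : ℂ) : ‖K + I‖ ^ 2 = ‖K‖ ^ 2 + 2 * K.im + 1 := by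
  rw [Complex.sq_norm, Complex.sq_norm, Complex.normSq_add]
  simp
  ring

lemma norm_sub_I_sq (K : ℂ) : ‖K - I‖ ^ 2 = ‖K‖ ^ 2 - 2 * K.im + 1 := by
  rw [Complex.sq_norm, Complex.sq_norm, Complex.normSq_sub]
  simp
  ring

variable {K Λ : ℂ}

lemma one_le_norm_steadyPart_one (hK : K ≠ 0) (hKim : 0 ≤ K.im) (hΛ : ‖Λ‖ ≤ 1) :
    1 ≤ ‖steadyPart K Λ 1‖ := by
  have : 0 < ‖K‖ := norm_pos_iff.2 hK
  rw [steadyPart_one hK, norm_div, norm_pow, one_le_div (by positivity)]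
  have htriangle := norm_sub_norm_le ((K + I) ^ 2) (-Λ ^ 2)
  rw [sub_neg_eq_add, norm_neg, norm_pow, norm_pow, norm_add_I_sq] at htriangle
  have : ‖Λ‖ ^ 2 ≤ 1 := pow_le_one₀ (norm_nonneg _) hΛ
  linarith

lemma norm_add_I_le_norm_sub_I (hK : K.im ≤ 0) : ‖K + I‖ ≤ ‖K - I‖ := by
  apply le_of_sq_le_sq _ (norm_nonneg _)
  rw [norm_add_I_sq, norm_sub_I_sq]
  linarith

lemma one_add_norm_le_norm_sub_I (hK : K.im ≤ 0) : (1 + ‖K‖) / 2 ≤ ‖K - I‖ := by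
  apply le_of_sq_le_sq _ (norm_nonneg _)
  rw [norm_sub_I_sq]
  nlinarith [sq_nonneg (‖K‖ - 1), norm_nonneg K]

lemma le_norm_oscPart_one (hK : K ≠ 0) (hKim : K.im ≤ 0) (hΛ : 1 ≤ ‖Λ‖) :
    ‖Λ‖ * (1 - (‖Λ‖ ^ 2)⁻¹) * (invSize K / 2) ≤ ‖oscPart K Λ 1‖ := by
  have : 0 < ‖K‖ := norm_pos_iff.2 hK
  have : 0 < ‖Λ‖ := by linarith
  have htriangle := norm_sub_norm_le (Λ * (K - I)) (-(Λ⁻¹ * (K + I)))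
  rw [sub_neg_eq_add, norm_neg, norm_mul, norm_mul, norm_inv, add_comm (Λ * _)] at htriangle
  have hfactor : ‖Λ‖ * (1 - (‖Λ‖ ^ 2)⁻¹) = ‖Λ‖ - ‖Λ‖⁻¹ := by field_simp
  have : 0 ≤ ‖Λ‖ - ‖Λ‖⁻¹ := by linarith [inv_le_one_of_one_le₀ hΛ]
  rw [oscPart_one hK, norm_div, norm_pow, hfactor]
  calc (‖Λ‖ - ‖Λ‖⁻¹) * (invSize K / 2)
      = (‖Λ‖ - ‖Λ‖⁻¹) * ((1 + ‖K‖) / 2) / ‖K‖ ^ 2 := by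
        rw [invSize]
        field_simp
        ring
    _ ≤ (‖Λ‖ - ‖Λ‖⁻¹) * ‖K - I‖ / ‖K‖ ^ 2 := by
        gcongr
        exact one_add_norm_le_norm_sub_I hKim
    _ ≤ ‖Λ⁻¹ * (K + I) + Λ * (K - I)‖ / ‖K‖ ^ 2 := by
        gcongr
        have : ‖Λ‖⁻¹ * ‖K + I‖ ≤ ‖Λ‖⁻¹ * ‖K - I‖ := by
          gcongr
          exact norm_add_I_le_norm_sub_I hKim
        linarith

end ModelLowerBounds

section PhaseGrowth

lemma norm_shiftPhase (κ : ℝ) (k : ℂ) : ‖shiftPhase κ k‖ = Real.exp (-(2 * κ * k.im)) := by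
  rw [shiftPhase, Complex.norm_exp]
  simp

lemma norm_fastPhase (f : ℝ) (k : ℂ) :
    ‖fastPhase f k‖ = Real.exp (-(4 / 3 * (k ^ 3).im / f)) := by
  have hre : (4 / 3 * k ^ 3 / f * I : ℂ).re = -(4 / 3 * (k ^ 3).im / f) := by
    rw [show (4 / 3 * k ^ 3 / f * I : ℂ) = ((4 / 3 / f : ℝ) : ℂ) * k ^ 3 * I by
      push_cast; ring, Complex.mul_I_re, Complex.im_ofReal_mul]
    ring
  rw [fastPhase, Complex.norm_exp, hre]

lemma im_cube (k : ℂ) : (k ^ 3).im = k.im * (3 * k.re ^ 2 - k.im ^ 2) := by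
  simp only [pow_succ, pow_zero, one_mul, Complex.mul_im, Complex.mul_re]
  ring

lemma norm_sq_le_three_re_sq_sub {k : ℂ} (hk : |k.im| ≤ k.re) :
    ‖k‖ ^ 2 ≤ 3 * k.re ^ 2 - k.im ^ 2 := by
  have : k.im ^ 2 ≤ k.re ^ 2 := sq_le_sq' (abs_le.1 hk).1 (abs_le.1 hk).2
  rw [Complex.sq_norm, Complex.normSq_apply]
  linarith

lemma sq_div_two_le_sq_div_one_add {t r : ℝ} (ht : 0 < t) (ht1 : t ≤ 1) (hr : t ≤ r) :
    t ^ 2 / 2 ≤ r ^ 2 / (1 + r) := by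
  rw [div_le_div_iff₀ (by norm_num) (by linarith)]
  nlinarith [mul_nonneg (sub_nonneg.2 hr) (sub_nonneg.2 ht1), mul_nonneg (sub_nonneg.2 hr) ht.le,
    mul_nonneg (mul_nonneg (sub_nonneg.2 hr) ht.le) (sub_nonneg.2 ht1), sq_nonneg (r - t)]

/-- Half of the guaranteed growth exponent of `fastPhase` for `f = t ^ 100` on the curve
`|Im k| = t ^ 80 / (1 + |k|)` separating the region where `D_f` is described by its dominant part
from the strip around the positive axis. -/
def growthExponent (t : ℝ) (k : ℂ) : ℝ := t ^ 80 / (1 + ‖k‖) * (‖k‖ ^ 2 / t ^ 100)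

variable {κ t : ℝ} {k : ℂ}

lemma growthExponent_add_le (ht : 0 < t) (ht1 : t ≤ 1) (htκ : 6 * κ * t ≤ 1)
    (hk : t ≤ ‖k‖) (hsector : |k.im| ≤ k.re) (him : t ^ 80 / (1 + ‖k‖) ≤ |k.im|) :
    growthExponent t k + 2 * κ * |k.im| ≤
      4 / 3 * (|k.im| * (3 * k.re ^ 2 - k.im ^ 2)) / t ^ 100 := by
  have hshift : 6 * κ ≤ ‖k‖ ^ 2 / t ^ 100 := by
    rw [le_div_iff₀ (by positivity)]
    calc 6 * κ * t ^ 100 = (6 * κ * t) * t ^ 97 * t ^ 2 := by ring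
      _ ≤ 1 * 1 * ‖k‖ ^ 2 := by
          gcongr
          exact pow_le_one₀ ht.le ht1
      _ = ‖k‖ ^ 2 := by ring
  calc growthExponent t k + 2 * κ * |k.im|
      ≤ |k.im| * (‖k‖ ^ 2 / t ^ 100) + |k.im| * (‖k‖ ^ 2 / t ^ 100) / 3 := by
        have hκim : |k.im| * (6 * κ) ≤ |k.im| * (‖k‖ ^ 2 / t ^ 100) := by gcongr
        have : growthExponent t k ≤ |k.im| * (‖k‖ ^ 2 / t ^ 100) := by
          unfold growthExponent
          gcongr
        linarith
    _ = 4 / 3 * (|k.im| * ‖k‖ ^ 2) / t ^ 100 := by ring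
    _ ≤ _ := by
        gcongr
        exact norm_sq_le_three_re_sq_sub hsector

lemma norm_fastPhase_mul_inv_norm_shiftPhase_le (ht : 0 < t) (ht1 : t ≤ 1) (htκ : 6 * κ * t ≤ 1)
    (hk : t ≤ ‖k‖) (hsector : k.im ≤ k.re) (him : t ^ 80 / (1 + ‖k‖) ≤ k.im) :
    ‖fastPhase (t ^ 100) k‖ * ‖shiftPhase κ k‖⁻¹ ≤ 2 * t ^ 18 := by
  have him₀ : 0 ≤ k.im := le_trans (by positivity) him
  have hgrowth := growthExponent_add_le ht ht1 htκ hk (by rwa [abs_of_nonneg him₀])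
    (by rwa [abs_of_nonneg him₀])
  rw [abs_of_nonneg him₀, ← im_cube] at hgrowth
  have hlarge : (2 * t ^ 18)⁻¹ ≤ growthExponent t k := by
    calc (2 * t ^ 18)⁻¹ = t ^ 2 / 2 / t ^ 20 := by field_simp
      _ ≤ ‖k‖ ^ 2 / (1 + ‖k‖) / t ^ 20 := by
          gcongr ?_ / _
          exact sq_div_two_le_sq_div_one_add ht ht1 hk
      _ = growthExponent t k := by
          rw [growthExponent]
          field_simp
  rw [norm_fastPhase, norm_shiftPhase, ← Real.exp_neg, ← Real.exp_add]
  calc _ ≤ Real.exp (-(2 * t ^ 18)⁻¹) := by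
        gcongr
        linarith
    _ ≤ 2 * t ^ 18 := by
        rw [Real.exp_neg]
        apply inv_le_of_inv_le₀ (by positivity)
        linarith [Real.add_one_le_exp ((2 * t ^ 18)⁻¹)]

lemma exp_growthExponent_mul_norm_shiftPhase_le (ht : 0 < t) (ht1 : t ≤ 1) (htκ : 6 * κ * t ≤ 1)
    (hk : t ≤ ‖k‖) (hsector : -k.im ≤ k.re) (him : k.im ≤ -(t ^ 80 / (1 + ‖k‖))) :
    Real.exp (growthExponent t k) * ‖shiftPhase κ k‖ ≤ ‖fastPhase (t ^ 100) k‖ := by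
  have him₀ : k.im ≤ 0 := him.trans (neg_nonpos.2 (by positivity))
  have hgrowth := growthExponent_add_le ht ht1 htκ hk (by rwa [abs_of_nonpos him₀])
    (by rw [abs_of_nonpos him₀]; linarith)
  rw [abs_of_nonpos him₀, neg_mul, ← im_cube] at hgrowth
  rw [norm_fastPhase, norm_shiftPhase, ← Real.exp_add]
  gcongr
  have hneg : -(4 / 3 * (k ^ 3).im / t ^ 100) = 4 / 3 * -(k ^ 3).im / t ^ 100 := by ring
  rw [hneg]
  linarith

lemma mul_one_add_norm_lt_exp_growthExponent {A : ℝ} (ht : 0 < t) (ht1 : t ≤ 1)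
    (hk : t ≤ ‖k‖) (hA : 0 ≤ A) (hAt : 40000 * A * t < κ) :
    A * (1 + ‖k‖) < Real.exp (growthExponent t k) * (κ * (t ^ 80 / (1 + ‖k‖))) / 2 := by
  have hv : 0 ≤ growthExponent t k := by
    unfold growthExponent
    positivity
  have hκ : 0 < κ := lt_of_le_of_lt (by positivity) hAt
  have hexp : growthExponent t k ^ 5 / 120 ≤ Real.exp (growthExponent t k) := by
    simpa [Nat.factorial] using Real.pow_div_factorial_le_exp _ hv 5
  have hpow : (1 + ‖k‖) * (1 / (128 * t ^ 10)) ≤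
      growthExponent t k ^ 5 * (t ^ 80 / (1 + ‖k‖)) := by
    have hquot : t / 2 ≤ ‖k‖ / (1 + ‖k‖) := by
      rw [div_le_div_iff₀ (by norm_num) (by positivity)]
      nlinarith [norm_nonneg k]
    calc (1 + ‖k‖) * (1 / (128 * t ^ 10))
        = (1 + ‖k‖) * ((t ^ 2 / 2) ^ 3 * (t / 2) ^ 4 / t ^ 20) := by
          field_simp
          norm_num
      _ ≤ (1 + ‖k‖) * ((‖k‖ ^ 2 / (1 + ‖k‖)) ^ 3 * (‖k‖ / (1 + ‖k‖)) ^ 4 / t ^ 20) := by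
          gcongr _ * (?_ ^ 3 * ?_ ^ 4 / _)
          exact sq_div_two_le_sq_div_one_add ht ht1 hk
      _ = _ := by
          rw [growthExponent]
          field_simp
  have hsmall : 30720 * A * t ^ 10 < κ := by
    calc 30720 * A * t ^ 10 ≤ 40000 * A * t := by
          gcongr
          · norm_num
          · exact pow_le_of_le_one ht.le ht1 (by norm_num)
      _ < κ := hAt
  calc A * (1 + ‖k‖)
      = (30720 * A * t ^ 10) * ((1 + ‖k‖) * (1 / (128 * t ^ 10))) / 240 := by
        field_simp
        ring
    _ < κ * ((1 + ‖k‖) * (1 / (128 * t ^ 10))) / 240 := by gcongr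
    _ ≤ κ * (growthExponent t k ^ 5 * (t ^ 80 / (1 + ‖k‖))) / 240 := by gcongr
    _ = growthExponent t k ^ 5 / 120 * (κ * (t ^ 80 / (1 + ‖k‖))) / 2 := by ring
    _ ≤ _ := by gcongr

end PhaseGrowth

section DominantPart

/-- The steady part of `D_f` at wave number `k` with all amplitude corrections removed. -/
def modelSteady (κ η : ℝ) (k : ℂ) : ℂ := steadyPart (2 * η * k) (shiftPhase κ k) 1

/-- The oscillating part of `D_f` at wave number `k` with all amplitude corrections removed. -/
def modelOsc (κ η : ℝ) (k : ℂ) : ℂ := oscPart (2 * η * k) (shiftPhase κ k) 1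

variable {κ η t : ℝ} {k : ℂ} {x : Fin 4 → ℂ}

lemma norm_two_mul_mul (hη : 0 ≤ η) (k : ℂ) : ‖2 * (η : ℂ) * k‖ = 2 * η * ‖k‖ := by
  rw [norm_mul, norm_mul, Complex.norm_ofNat, Complex.norm_real, Real.norm_of_nonneg hη]

lemma im_two_mul_mul (η : ℝ) (k : ℂ) : (2 * (η : ℂ) * k).im = 2 * η * k.im := by
  rw [← Complex.ofReal_ofNat, ← Complex.ofReal_mul, Complex.im_ofReal_mul]

lemma two_mul_mul_ne_zero (hη : η ≠ 0) (hk : k ≠ 0) : 2 * (η : ℂ) * k ≠ 0 :=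
  mul_ne_zero (mul_ne_zero two_ne_zero (Complex.ofReal_ne_zero.2 hη)) hk

lemma invSize_two_mul_mul_le (hη : 0 < η) (ht : 0 < t) (ht1 : t ≤ 1) (hk : t ≤ ‖k‖) :
    invSize (2 * η * k) ≤ (1 / (2 * η) + 1 / (4 * η ^ 2)) / t ^ 2 := by
  rw [invSize, norm_two_mul_mul hη.le]
  calc _ ≤ 1 / (2 * η * t) + 1 / (2 * η * t) ^ 2 := by gcongr
    _ ≤ 1 / (2 * η * t ^ 2) + 1 / (2 * η * t) ^ 2 := by
        gcongr
        nlinarith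
    _ = _ := by
        field_simp
        ring

lemma half_le_one_sub_exp_neg {v : ℝ} (hv : 0 ≤ v) (hv1 : v ≤ 1) :
    v / 2 ≤ 1 - Real.exp (-v) := by
  have hexp : Real.exp (-v) ≤ (1 + v)⁻¹ := by
    rw [Real.exp_neg]
    exact inv_anti₀ (by linarith) (by linarith [Real.add_one_le_exp v])
  have hinv : (1 + v)⁻¹ ≤ 1 - v / 2 := by
    rw [inv_le_iff_one_le_mul₀ (by linarith)]
    nlinarith
  linarith

lemma norm_shiftPhase_le_one (hκ : 0 ≤ κ) (him : 0 ≤ k.im) : ‖shiftPhase κ k‖ ≤ 1 := by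
  rw [norm_shiftPhase, Real.exp_le_one_iff, neg_nonpos]
  positivity

lemma one_le_norm_shiftPhase (hκ : 0 ≤ κ) (him : k.im ≤ 0) : 1 ≤ ‖shiftPhase κ k‖ := by
  rw [norm_shiftPhase]
  apply Real.one_le_exp
  linarith [mul_nonpos_of_nonneg_of_nonpos hκ him]

lemma one_le_norm_modelSteady (hκ : 0 ≤ κ) (hη : 0 < η) (hk : k ≠ 0) (him : 0 ≤ k.im) :
    1 ≤ ‖modelSteady κ η k‖ := by
  refine one_le_norm_steadyPart_one (two_mul_mul_ne_zero hη.ne' hk) ?_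
    (norm_shiftPhase_le_one hκ him)
  rw [im_two_mul_mul]
  positivity

lemma norm_steadyPart_sub_modelSteady_le (hκ : 0 ≤ κ) (hη : 0 < η) (ht : 0 < t) (ht1 : t ≤ 1)
    (htη : 120 * ((1 / (2 * η) + 1 / (4 * η ^ 2)) * t) ≤ 1) (hk : t ≤ ‖k‖) (him : 0 ≤ k.im)
    (hx : ‖x - 1‖ ≤ t ^ 96 / (1 + ‖k‖)) :
    ‖steadyPart (2 * η * k) (shiftPhase κ k) x - modelSteady κ η k‖ ≤ 1 / 4 := by
  set h₀ : ℝ := 1 / (2 * η) + 1 / (4 * η ^ 2)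
  have hd : t ^ 96 / (1 + ‖k‖) ≤ t ^ 96 := div_le_self (by positivity) (by simp)
  have hx' : ‖x - 1‖ ≤ t ^ 96 := hx.trans hd
  have : 0 ≤ h₀ := by positivity
  have := invSize_nonneg (2 * η * k)
  calc ‖steadyPart (2 * η * k) (shiftPhase κ k) x - modelSteady κ η k‖
      ≤ 15 * t ^ 96 * ((1 + ‖shiftPhase κ k‖ ^ 2) * invSize (2 * η * k)) :=
        norm_steadyPart_sub_le (pow_le_one₀ ht.le ht1) hx'
    _ ≤ 15 * t ^ 96 * ((1 + 1) * (h₀ / t ^ 2)) := by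
        gcongr
        · exact pow_le_one₀ (norm_nonneg _) (norm_shiftPhase_le_one hκ him)
        · exact invSize_two_mul_mul_le hη ht ht1 hk
    _ = 30 * (h₀ * t) * t ^ 93 := by
        field_simp
        ring
    _ ≤ 30 * (h₀ * t) * 1 := by
        gcongr
        exact pow_le_one₀ ht.le ht1
    _ ≤ 1 / 4 := by linarith

lemma norm_fastPhase_mul_oscPart_le (hκ : 0 ≤ κ) (hη : 0 < η) (ht : 0 < t) (ht1 : t ≤ 1)
    (htκ : 6 * κ * t ≤ 1) (htη : 256 * ((1 / (2 * η) + 1 / (4 * η ^ 2)) * t) ≤ 1)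
    (hk : t ≤ ‖k‖) (hsector : k.im ≤ k.re) (him : t ^ 80 / (1 + ‖k‖) ≤ k.im) (hx : ‖x - 1‖ ≤ 1) :
    ‖fastPhase (t ^ 100) k * oscPart (2 * η * k) (shiftPhase κ k) x‖ ≤ 1 / 4 := by
  set h₀ : ℝ := 1 / (2 * η) + 1 / (4 * η ^ 2)
  have : 0 ≤ h₀ := by positivity
  have him₀ : 0 ≤ k.im := le_trans (by positivity) him
  set Λ := shiftPhase κ k
  have hΛ : ‖Λ‖ ≤ ‖Λ‖⁻¹ := by
    have hΛ₁ : ‖Λ‖ ≤ 1 := norm_shiftPhase_le_one hκ him₀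
    have hΛ₀ : 0 < ‖Λ‖ := norm_pos_iff.2 (Complex.exp_ne_zero _)
    exact hΛ₁.trans ((one_le_inv₀ hΛ₀).2 hΛ₁)
  have := invSize_nonneg (2 * η * k)
  rw [norm_mul]
  calc _ ≤ ‖fastPhase (t ^ 100) k‖ * (16 * ((‖Λ‖⁻¹ + ‖Λ‖⁻¹) * (h₀ / t ^ 2))) := by
        gcongr
        refine (norm_oscPart_le hx).trans ?_
        gcongr
        exact invSize_two_mul_mul_le hη ht ht1 hk
    _ = (‖fastPhase (t ^ 100) k‖ * ‖Λ‖⁻¹) * (32 * (h₀ / t ^ 2)) := by ring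
    _ ≤ (2 * t ^ 18) * (32 * (h₀ / t ^ 2)) := by
        gcongr ?_ * _
        exact norm_fastPhase_mul_inv_norm_shiftPhase_le ht ht1 htκ hk hsector him
    _ = 64 * (h₀ * t) * t ^ 15 := by
        field_simp
        ring
    _ ≤ 64 * (h₀ * t) * 1 := by
        gcongr
        exact pow_le_one₀ ht.le ht1
    _ ≤ 1 / 4 := by linarith

theorem norm_semiclassicalDet_sub_modelSteady_lt (hκ : 0 < κ) (hη : 0 < η) :
    ∃ M > 0, ∀ t > 0, M * t ≤ 1 → ∀ k : ℂ, t ≤ ‖k‖ → t ^ 80 / (1 + ‖k‖) ≤ k.im →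
      k.im ≤ k.re → ∀ x : Fin 4 → ℂ, ‖x - 1‖ ≤ t ^ 96 / (1 + ‖k‖) →
      ‖semiclassicalDet κ η (t ^ 100) k x - modelSteady κ η k‖ < ‖modelSteady κ η k‖ := by
  set h₀ : ℝ := 1 / (2 * η) + 1 / (4 * η ^ 2)
  have hh₀_pos : 0 < h₀ := by positivity
  refine ⟨1 + 6 * κ + 256 * h₀, by positivity, fun t ht hMt k hk him hsector x hx ↦ ?_⟩
  have := mul_pos hκ ht
  have := mul_pos hh₀_pos ht
  have ht1 : t ≤ 1 := by linarith
  have him₀ : 0 ≤ k.im := le_trans (by positivity) him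
  have hx₁ : ‖x - 1‖ ≤ 1 :=
    hx.trans (div_le_one_of_le₀ ((pow_le_one₀ ht.le ht1).trans (by simp)) (by positivity))
  have hk₀ : k ≠ 0 := norm_pos_iff.1 (ht.trans_le hk)
  calc ‖semiclassicalDet κ η (t ^ 100) k x - modelSteady κ η k‖
      = ‖(steadyPart (2 * η * k) (shiftPhase κ k) x - modelSteady κ η k) +
          fastPhase (t ^ 100) k * oscPart (2 * η * k) (shiftPhase κ k) x‖ := by
        rw [semiclassicalDet, add_sub_right_comm]
    _ ≤ 1 / 4 + 1 / 4 := norm_add_le_of_le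
        (norm_steadyPart_sub_modelSteady_le hκ.le hη ht ht1 (by linarith) hk him₀ hx)
        (norm_fastPhase_mul_oscPart_le hκ.le hη ht ht1 (by linarith) (by linarith) hk hsector him
          hx₁)
    _ < ‖modelSteady κ η k‖ := by linarith [one_le_norm_modelSteady hκ.le hη hk₀ him₀]

lemma le_norm_modelOsc {y : ℝ} (hκ : 0 ≤ κ) (hη : 0 < η) (hk : k ≠ 0) (hy : 0 ≤ y)
    (hκy : 4 * κ * y ≤ 1) (him : k.im ≤ -y) :
    κ * y * (‖shiftPhase κ k‖ * invSize (2 * η * k)) ≤ ‖modelOsc κ η k‖ := by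
  set Λ := shiftPhase κ k with hΛ_def
  have him₀ : k.im ≤ 0 := by linarith
  have hinv : (‖Λ‖ ^ 2)⁻¹ ≤ Real.exp (-(4 * κ * y)) := by
    rw [hΛ_def, norm_shiftPhase, ← Real.exp_nat_mul, ← Real.exp_neg]
    apply Real.exp_le_exp.2
    push_cast
    linarith [mul_le_mul_of_nonneg_left him hκ]
  have hgap : 2 * κ * y ≤ 1 - (‖Λ‖ ^ 2)⁻¹ := by
    linarith [half_le_one_sub_exp_neg (v := 4 * κ * y) (by positivity) hκy]
  have := invSize_nonneg (2 * η * k)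
  calc κ * y * (‖Λ‖ * invSize (2 * η * k)) = ‖Λ‖ * (2 * κ * y) * (invSize (2 * η * k) / 2) := by
        ring
    _ ≤ ‖Λ‖ * (1 - (‖Λ‖ ^ 2)⁻¹) * (invSize (2 * η * k) / 2) := by gcongr
    _ ≤ ‖modelOsc κ η k‖ := by
        refine le_norm_oscPart_one (two_mul_mul_ne_zero hη.ne' hk) ?_
          (one_le_norm_shiftPhase hκ him₀)
        rw [im_two_mul_mul]
        exact mul_nonpos_of_nonneg_of_nonpos (by positivity) him₀

lemma norm_steadyPart_le_norm_shiftPhase_sq (hκ : 0 ≤ κ) (hη : 0 < η) (hk : k ≠ 0)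
    (him : k.im ≤ 0) (hx : ‖x - 1‖ ≤ 1) :
    ‖steadyPart (2 * η * k) (shiftPhase κ k) x‖ ≤
      ‖shiftPhase κ k‖ ^ 2 * ((2 * η + 34) * (1 + ‖k‖) * invSize (2 * η * k)) := by
  set Λ := shiftPhase κ k
  have := invSize_nonneg (2 * η * k)
  have hk_pos : 0 < ‖k‖ := norm_pos_iff.2 hk
  have hsize : 1 ≤ 2 * η * ‖k‖ * invSize (2 * η * k) := by
    have : 2 * η * ‖k‖ * invSize (2 * η * k) = 1 + 1 / (2 * η * ‖k‖) := by
      rw [invSize, norm_two_mul_mul hη.le]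
      field_simp
    rw [this, le_add_iff_nonneg_right]
    positivity
  have hΛ : 1 ≤ ‖Λ‖ ^ 2 := one_le_pow₀ (one_le_norm_shiftPhase hκ him)
  calc ‖steadyPart (2 * η * k) Λ x‖ ≤ 1 + 17 * ((1 + ‖Λ‖ ^ 2) * invSize (2 * η * k)) :=
        norm_steadyPart_le hx
    _ ≤ ‖Λ‖ ^ 2 * (2 * η * ‖k‖ * invSize (2 * η * k)) +
          17 * ((‖Λ‖ ^ 2 + ‖Λ‖ ^ 2) * invSize (2 * η * k)) := by
        gcongr
        exact one_le_mul_of_one_le_of_one_le hΛ hsize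
    _ = ‖Λ‖ ^ 2 * ((2 * η * ‖k‖ + 34) * invSize (2 * η * k)) := by ring
    _ ≤ _ := by
        gcongr
        nlinarith

lemma norm_steadyPart_lt (hκ : 0 < κ) (hη : 0 < η) (ht : 0 < t) (ht1 : t ≤ 1)
    (htκ : 6 * κ * t ≤ 1) (htη : 40000 * (2 * η + 34) * t < κ) (hk : t ≤ ‖k‖)
    (hsector : -k.im ≤ k.re) (him : k.im ≤ -(t ^ 80 / (1 + ‖k‖))) (hx : ‖x - 1‖ ≤ 1) :
    ‖steadyPart (2 * η * k) (shiftPhase κ k) x‖ <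
      ‖fastPhase (t ^ 100) k‖ * ‖modelOsc κ η k‖ / 2 := by
  set y := t ^ 80 / (1 + ‖k‖)
  set Λ := shiftPhase κ k
  set H := invSize (2 * η * k) with hH_def
  have hy : 0 ≤ y := by positivity
  have hyt : y ≤ t := (div_le_self (by positivity) (by simp)).trans
    (pow_le_of_le_one ht.le ht1 (by norm_num))
  have hk₀ : 0 < ‖k‖ := ht.trans_le hk
  have hH : 0 < H := by
    rw [hH_def, invSize, norm_two_mul_mul hη.le]
    positivity
  have hΛ : 0 < ‖Λ‖ := norm_pos_iff.2 (Complex.exp_ne_zero _)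
  have hosc : κ * y * (‖Λ‖ * H) ≤ ‖modelOsc κ η k‖ :=
    le_norm_modelOsc hκ.le hη (norm_pos_iff.1 hk₀) hy (by nlinarith) him
  calc ‖steadyPart (2 * η * k) Λ x‖ ≤ ‖Λ‖ ^ 2 * ((2 * η + 34) * (1 + ‖k‖) * H) :=
        norm_steadyPart_le_norm_shiftPhase_sq hκ.le hη (norm_pos_iff.1 hk₀) (by linarith) hx
    _ < ‖Λ‖ ^ 2 * (Real.exp (growthExponent t k) * (κ * y) / 2 * H) := by
        gcongr
        exact mul_one_add_norm_lt_exp_growthExponent ht ht1 hk (by positivity) htη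
    _ = (Real.exp (growthExponent t k) * ‖Λ‖) * (κ * y * (‖Λ‖ * H)) / 2 := by ring
    _ ≤ ‖fastPhase (t ^ 100) k‖ * ‖modelOsc κ η k‖ / 2 := by
        gcongr
        exact exp_growthExponent_mul_norm_shiftPhase_le ht ht1 htκ hk hsector him

lemma norm_oscPart_sub_modelOsc_le (hκ : 0 < κ) (hη : 0 < η) (ht : 0 < t) (ht1 : t ≤ 1)
    (htκ : 6 * κ * t ≤ 1) (htκ' : 120 * t ≤ κ) (hk : t ≤ ‖k‖)
    (him : k.im ≤ -(t ^ 80 / (1 + ‖k‖))) (hx : ‖x - 1‖ ≤ t ^ 96 / (1 + ‖k‖)) :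
    ‖oscPart (2 * η * k) (shiftPhase κ k) x - modelOsc κ η k‖ ≤ ‖modelOsc κ η k‖ / 4 := by
  set y := t ^ 80 / (1 + ‖k‖) with hy_def
  set Λ := shiftPhase κ k
  have hy : 0 ≤ y := by positivity
  have hyt : y ≤ t := (div_le_self (by positivity) (by simp)).trans
    (pow_le_of_le_one ht.le ht1 (by norm_num))
  have hxy : ‖x - 1‖ ≤ t ^ 16 * y := hx.trans_eq (by rw [hy_def]; ring)
  have hosc : κ * y * (‖Λ‖ * invSize (2 * η * k)) ≤ ‖modelOsc κ η k‖ :=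
    le_norm_modelOsc hκ.le hη (norm_pos_iff.1 (ht.trans_le hk)) hy (by nlinarith) him
  have hΛ : ‖Λ‖⁻¹ ≤ ‖Λ‖ := by
    have hΛ₁ : 1 ≤ ‖Λ‖ := one_le_norm_shiftPhase hκ.le (by linarith)
    exact (inv_le_one_of_one_le₀ hΛ₁).trans hΛ₁
  have := invSize_nonneg (2 * η * k)
  have hpow : t ^ 16 ≤ t := pow_le_of_le_one ht.le ht1 (by norm_num)
  calc ‖oscPart (2 * η * k) Λ x - modelOsc κ η k‖
      ≤ 15 * (t ^ 16 * y) * ((‖Λ‖⁻¹ + ‖Λ‖) * invSize (2 * η * k)) :=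
        norm_oscPart_sub_le (by nlinarith) hxy
    _ ≤ 15 * (t ^ 16 * y) * ((‖Λ‖ + ‖Λ‖) * invSize (2 * η * k)) := by gcongr
    _ = (120 * t ^ 16) * y * (‖Λ‖ * invSize (2 * η * k)) / 4 := by ring
    _ ≤ κ * y * (‖Λ‖ * invSize (2 * η * k)) / 4 := by
        gcongr
        linarith
    _ ≤ ‖modelOsc κ η k‖ / 4 := by gcongr

theorem norm_semiclassicalDet_sub_modelOsc_lt (hκ : 0 < κ) (hη : 0 < η) :
    ∃ M > 0, ∀ t > 0, M * t ≤ 1 → ∀ k : ℂ, t ≤ ‖k‖ → k.im ≤ -(t ^ 80 / (1 + ‖k‖)) →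
      -k.im ≤ k.re → ∀ x : Fin 4 → ℂ, ‖x - 1‖ ≤ t ^ 96 / (1 + ‖k‖) →
      ‖semiclassicalDet κ η (t ^ 100) k x - fastPhase (t ^ 100) k * modelOsc κ η k‖ <
        ‖fastPhase (t ^ 100) k * modelOsc κ η k‖ := by
  set m₁ : ℝ := 120 / κ with hm₁
  set m₂ : ℝ := 40000 * (2 * η + 34) / κ with hm₂
  have hm₁_pos : 0 < m₁ := by positivity
  have hm₂_pos : 0 < m₂ := by positivity
  refine ⟨1 + 6 * κ + m₁ + m₂, by positivity, fun t ht hMt k hk him hsector x hx ↦ ?_⟩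
  have := mul_pos hκ ht
  have := mul_pos hm₁_pos ht
  have := mul_pos hm₂_pos ht
  have ht1 : t ≤ 1 := by linarith
  have htκ : 6 * κ * t ≤ 1 := by linarith
  have ht₁ : 120 * t ≤ κ := by
    have : m₁ * t ≤ 1 := by linarith
    rwa [hm₁, div_mul_eq_mul_div, div_le_one hκ] at this
  have ht₂ : 40000 * (2 * η + 34) * t < κ := by
    have : m₂ * t < 1 := by linarith
    rwa [hm₂, div_mul_eq_mul_div, div_lt_one hκ] at this
  have hx₁ : ‖x - 1‖ ≤ 1 :=
    hx.trans (div_le_one_of_le₀ ((pow_le_one₀ ht.le ht1).trans (by simp)) (by positivity))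
  calc ‖semiclassicalDet κ η (t ^ 100) k x - fastPhase (t ^ 100) k * modelOsc κ η k‖
      = ‖steadyPart (2 * η * k) (shiftPhase κ k) x + fastPhase (t ^ 100) k *
          (oscPart (2 * η * k) (shiftPhase κ k) x - modelOsc κ η k)‖ := by
        rw [semiclassicalDet, mul_sub, add_sub_assoc]
    _ < ‖fastPhase (t ^ 100) k‖ * ‖modelOsc κ η k‖ / 2 +
          ‖fastPhase (t ^ 100) k‖ * (‖modelOsc κ η k‖ / 4) := by
        refine (norm_add_le _ _).trans_lt (add_lt_add_of_lt_of_le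
          (norm_steadyPart_lt hκ hη ht ht1 htκ ht₂ hk hsector him hx₁) ?_)
        rw [norm_mul]
        gcongr
        exact norm_oscPart_sub_modelOsc_le hκ hη ht ht1 htκ ht₁ hk him hx
    _ ≤ ‖fastPhase (t ^ 100) k * modelOsc κ η k‖ := by
        rw [norm_mul]
        have : 0 ≤ ‖fastPhase (t ^ 100) k‖ * ‖modelOsc κ η k‖ := by positivity
        linarith

end DominantPart

/-! ### Circles on which both parts are in phase -/

section Rebase

/-- Amplitude corrections after rescaling the wave number by `s ^ 2` and the shift phase by
`l ^ 2`. -/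
def rescaleAmplitude (s l : ℂ) (x : Fin 4 → ℂ) : Fin 4 → ℂ :=
  ![s * l⁻¹ * x 0, s * l * x 1, s * l * x 2, s * l⁻¹ * x 3]

lemma steadyPart_rescaleAmplitude {s l : ℂ} (hs : s ≠ 0) (hl : l ≠ 0) (K Λ : ℂ) (x : Fin 4 → ℂ) :
    steadyPart (s ^ 2 * K) Λ (rescaleAmplitude s l x) = steadyPart K (Λ * l ^ 2) x := by
  simp only [steadyPart, rescaleAmplitude, Matrix.cons_val]
  field_simp

lemma oscPart_rescaleAmplitude {s l : ℂ} (hs : s ≠ 0) (hl : l ≠ 0) (K Λ : ℂ) (x : Fin 4 → ℂ) :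
    oscPart (s ^ 2 * K) Λ (rescaleAmplitude s l x) = oscPart K (Λ * l ^ 2) x := by
  simp only [oscPart, rescaleAmplitude, Matrix.cons_val]
  field_simp

lemma norm_rescaleAmplitude_sub_one_le {m n : ℂ} {x : Fin 4 → ℂ} {d : ℝ} (hadd : ‖m + n‖ ≤ d)
    (hsub : ‖m - n‖ ≤ d) (hx : ‖x - 1‖ ≤ d) (hd : d ≤ 1) :
    ‖rescaleAmplitude (Complex.exp m) (Complex.exp n) x - 1‖ ≤ 5 * d := by
  have hcoord (i : Fin 4) : ‖x i - 1‖ ≤ d := (norm_le_pi_norm (x - 1) i).trans hx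
  have hmul (i : Fin 4) : ‖Complex.exp m * Complex.exp n * x i - 1‖ ≤ 5 * d := by
    have := norm_exp_mul_one_add_sub_one_le hadd (hcoord i) hd
    rwa [add_sub_cancel, Complex.exp_add] at this
  have hdiv (i : Fin 4) : ‖Complex.exp m * (Complex.exp n)⁻¹ * x i - 1‖ ≤ 5 * d := by
    have := norm_exp_mul_one_add_sub_one_le hsub (hcoord i) hd
    rwa [add_sub_cancel, Complex.exp_sub, div_eq_mul_inv] at this
  rw [pi_norm_le_iff_of_nonneg (by linarith [(norm_nonneg _).trans hx])]
  intro i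
  fin_cases i
  exacts [hdiv 0, hmul 1, hmul 2, hdiv 3]

lemma exists_rebase {κ η d : ℝ} {k k₁ : ℂ} {x : Fin 4 → ℂ} (hκ : 0 ≤ κ) (hk : k ≠ 0)
    (hd : d ≤ 1 / 2) (hkk : ‖k - k₁‖ / ‖k‖ + κ * ‖k - k₁‖ ≤ d) (hx : ‖x - 1‖ ≤ d) :
    ∃ a : Fin 4 → ℂ, ‖a - 1‖ ≤ 5 * d ∧
      steadyPart (2 * η * k) (shiftPhase κ k) x = steadyPart (2 * η * k₁) (shiftPhase κ k₁) a ∧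
      oscPart (2 * η * k) (shiftPhase κ k) x = oscPart (2 * η * k₁) (shiftPhase κ k₁) a := by
  set μ : ℂ := (k - k₁) / k with hμ_def
  have hμ_norm : ‖μ‖ = ‖k - k₁‖ / ‖k‖ := norm_div _ _
  have hμ : ‖μ‖ ≤ 1 / 2 := by
    rw [hμ_norm]
    linarith [mul_nonneg hκ (norm_nonneg (k - k₁))]
  set m := Complex.log (1 - μ) / 2 with hm_def
  set n : ℂ := κ * (k - k₁) * I with hn_def
  have hm : ‖m‖ ≤ ‖k - k₁‖ / ‖k‖ := (norm_half_log_one_sub_le hμ).trans_eq hμ_norm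
  have hn : ‖n‖ ≤ κ * ‖k - k₁‖ := by
    rw [hn_def, norm_mul, norm_mul, Complex.norm_I, Complex.norm_real,
      Real.norm_of_nonneg hκ, mul_one]
  have hμ₀ : 1 - μ ≠ 0 := by
    intro h
    norm_num [← sub_eq_zero.1 h] at hμ
  have hk₁ : Complex.exp m ^ 2 * (2 * η * k) = 2 * η * k₁ := by
    rw [hm_def, exp_half_log_sq hμ₀, hμ_def]
    field_simp
    ring
  have hΛ : shiftPhase κ k = shiftPhase κ k₁ * Complex.exp n ^ 2 := by
    rw [shiftPhase, shiftPhase, ← Complex.exp_nat_mul, ← Complex.exp_add, hn_def]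
    congr 1
    push_cast
    ring
  refine ⟨rescaleAmplitude (Complex.exp m) (Complex.exp n) x,
    norm_rescaleAmplitude_sub_one_le ((norm_add_le_of_le hm hn).trans hkk)
      ((norm_sub_le_of_le hm hn).trans hkk) hx (by linarith), ?_, ?_⟩
  · rw [hΛ, ← hk₁, steadyPart_rescaleAmplitude (Complex.exp_ne_zero _) (Complex.exp_ne_zero _)]
  · rw [hΛ, ← hk₁, oscPart_rescaleAmplitude (Complex.exp_ne_zero _) (Complex.exp_ne_zero _)]

end Rebase

section InPhase

lemma re_div_pos_of_norm_sub_lt {a b : ℂ} (h : ‖a - b‖ < ‖b‖) : 0 < (a / b).re := by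
  have hb : b ≠ 0 := norm_pos_iff.1 ((norm_nonneg _).trans_lt h)
  have hclose : ‖1 - a / b‖ < 1 := by
    rwa [one_sub_div hb, norm_div, div_lt_one (norm_pos_iff.2 hb), norm_sub_rev]
  have := (Complex.re_le_norm _).trans_lt hclose
  rw [Complex.sub_re, Complex.one_re] at this
  linarith

lemma norm_div_sub_one_le {a b : ℂ} {c : ℝ} (hb : b ≠ 0) (h : ‖a - b‖ ≤ c * ‖b‖) :
    ‖a / b - 1‖ ≤ c := by
  rwa [div_sub_one hb, norm_div, div_le_iff₀ (norm_pos_iff.2 hb)]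

variable {a b s o u : ℂ}

lemma re_mul_div_mul_pos (ha : ‖a - 1‖ ≤ 1 / 10) (hb : ‖b - 1‖ ≤ 1 / 10) (hs : ‖s - 1‖ ≤ 1 / 10)
    (ho : ‖o - 1‖ ≤ 1 / 10) : 0 < (a * b / (s * o)).re := by
  apply re_div_pos_of_norm_sub_lt
  have hab := norm_mul_sub_one_le ha hb
  have hso := norm_mul_sub_one_le hs ho
  have hlower := norm_sub_norm_le (1 : ℂ) (1 - s * o)
  rw [sub_sub_cancel, norm_one, norm_sub_rev] at hlower
  have hupper := norm_sub_le (a * b - 1) (s * o - 1)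
  rw [sub_sub_sub_cancel_right] at hupper
  linarith

lemma re_add_ofReal_mul_div_pos {Q : ℝ} (hQ : 0 < Q) (hs : ‖s - 1‖ ≤ 1 / 10)
    (ho : ‖o - 1‖ ≤ 1 / 10) (hu : ‖u - 1‖ ≤ 1 / 10) (ha : ‖a - 1‖ ≤ 1 / 10)
    (hb : ‖b - 1‖ ≤ 1 / 10) :
    0 < ((s + Q * u * o) / a).re ∧ 0 < ((s + Q * u * o) / (Q * u * b)).re := by
  have h₁ : ‖(1 : ℂ) - 1‖ ≤ 1 / 10 := by norm_num
  have hne {z : ℂ} (hz : ‖z - 1‖ ≤ 1 / 10) : z ≠ 0 := by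
    rintro rfl
    norm_num at hz
  have := hne hu
  have := hne hb
  have hQ₀ : (Q : ℂ) ≠ 0 := Complex.ofReal_ne_zero.2 hQ.ne'
  have hsteady : (s + Q * u * o) / a = s * 1 / (a * 1) + Q * (u * o / (a * 1)) := by ring
  have hosc : (s + Q * u * o) / (Q * u * b) =
      ((Q⁻¹ : ℝ) : ℂ) * (s * 1 / (u * b)) + o * 1 / (b * 1) := by
    push_cast
    field_simp
  constructor
  · rw [hsteady, Complex.add_re, Complex.re_ofReal_mul]
    exact add_pos (re_mul_div_mul_pos hs h₁ ha h₁) (mul_pos hQ (re_mul_div_mul_pos hu ho ha h₁))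
  · rw [hosc, Complex.add_re, Complex.re_ofReal_mul]
    exact add_pos (mul_pos (inv_pos.2 hQ) (re_mul_div_mul_pos hs h₁ hu hb))
      (re_mul_div_mul_pos ho h₁ hb h₁)

lemma re_add_mul_div_pos_of_inPhase {S O A B E A₁ B₁ E₁ : ℂ} {P ρ : ℝ} (hA₁ : A₁ ≠ 0)
    (hB₁ : B₁ ≠ 0) (hP : 0 < P) (hρ : 0 < ρ) (hphase : E₁ * B₁ = P * A₁) (hE : E = E₁ * (ρ * u))
    (hu : ‖u - 1‖ ≤ 1 / 10) (hS : ‖S / A₁ - 1‖ ≤ 1 / 10) (hA : ‖A / A₁ - 1‖ ≤ 1 / 10)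
    (hO : ‖O / B₁ - 1‖ ≤ 1 / 10) (hB : ‖B / B₁ - 1‖ ≤ 1 / 10) :
    0 < ((S + E * O) / A).re ∧ 0 < ((S + E * O) / (E * B)).re := by
  have hpos := re_add_ofReal_mul_div_pos (mul_pos hρ hP) hS hO hu hA hB
  have hnormalize (Z : ℂ) : E * Z = A₁ * ((ρ * P : ℝ) * u * (Z / B₁)) := by
    rw [hE]
    push_cast
    field_simp
    linear_combination ρ * u * Z * hphase
  have hsum : S + E * O = A₁ * (S / A₁ + (ρ * P : ℝ) * u * (O / B₁)) := by
    rw [hnormalize, mul_add, mul_div_cancel₀ _ hA₁]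
  have hA_eq : A = A₁ * (A / A₁) := (mul_div_cancel₀ _ hA₁).symm
  rw [hsum, hnormalize B, mul_div_mul_left _ _ hA₁]
  refine ⟨?_, hpos.2⟩
  rw [hA_eq, mul_div_mul_left _ _ hA₁]
  exact hpos.1

end InPhase

section GoodRadius

/-- A radius `r` such that, for `f = t ^ 100`, the oscillating and the steady part of `D_f` have
the same argument at wave number `r` on the positive axis, up to replacing `r` by a nearby `r₁` in
the slowly varying factors. The lower bound on the oscillating part keeps `r₁` away from its
zeros. -/
def GoodRadius (κ η t r : ℝ) : Prop :=
  ∃ r₁ : ℝ, t ≤ r₁ ∧ r₁ ≤ r ∧ r - r₁ ≤ 2 * t ^ 100 / r₁ ^ 2 ∧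
    κ * t ^ 2 / 2 * invSize (2 * η * r₁) ≤ ‖modelOsc κ η r₁‖ ∧
    ∃ P > (0 : ℝ), fastPhase (t ^ 100) r * modelOsc κ η r₁ = P * modelSteady κ η r₁

lemma norm_sub_norm_self_le {k : ℂ} (hk : 0 ≤ k.re) : ‖k - ‖k‖‖ ≤ 2 * |k.im| := by
  have hre : |(k - ‖k‖).re| ≤ |k.im| := by
    have := Complex.norm_le_abs_re_add_abs_im k
    rw [abs_of_nonneg hk] at this
    rw [Complex.sub_re, Complex.ofReal_re, abs_sub_comm,
      abs_of_nonneg (sub_nonneg.2 (Complex.re_le_norm k))]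
    linarith
  calc ‖k - ‖k‖‖ ≤ |(k - ‖k‖).re| + |(k - ‖k‖).im| := Complex.norm_le_abs_re_add_abs_im _
    _ ≤ |k.im| + |k.im| := add_le_add hre (by rw [Complex.sub_im, Complex.ofReal_im, sub_zero])
    _ = 2 * |k.im| := by ring

lemma abs_norm_cube_sub_re_cube_le {k : ℂ} (hk : 0 ≤ k.re) :
    |‖k‖ ^ 3 - (k ^ 3).re| ≤ 5 * ‖k‖ * k.im ^ 2 := by
  have hr := Complex.re_le_norm k
  have hsq : ‖k‖ ^ 2 = k.re ^ 2 + k.im ^ 2 := by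
    rw [Complex.sq_norm, Complex.normSq_apply]
    ring
  have hre : (k ^ 3).re = k.re * (‖k‖ ^ 2 - 4 * k.im ^ 2) := by
    rw [hsq]
    simp [pow_succ]
    ring
  have hsplit : ‖k‖ ^ 3 - (k ^ 3).re =
      ‖k‖ * (‖k‖ * (‖k‖ - k.re)) + 4 * k.re * k.im ^ 2 := by
    rw [hre]
    ring
  have hgap : ‖k‖ * (‖k‖ - k.re) ≤ k.im ^ 2 := by nlinarith
  have : 0 ≤ ‖k‖ - k.re := by linarith
  rw [hsplit, abs_of_nonneg (by positivity)]
  calc ‖k‖ * (‖k‖ * (‖k‖ - k.re)) + 4 * k.re * k.im ^ 2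
      ≤ ‖k‖ * k.im ^ 2 + 4 * ‖k‖ * k.im ^ 2 := by gcongr
    _ = 5 * ‖k‖ * k.im ^ 2 := by ring

lemma exists_fastPhase_eq {f : ℝ} (hf : 0 < f) {k : ℂ} (hk : 0 ≤ k.re)
    (hsmall : 7 * ‖k‖ * k.im ^ 2 ≤ f / 20) :
    ∃ ρ > (0 : ℝ), ∃ u : ℂ, ‖u - 1‖ ≤ 1 / 10 ∧ fastPhase f k = fastPhase f ‖k‖ * (ρ * u) := by
  have hf₀ : (f : ℂ) ≠ 0 := Complex.ofReal_ne_zero.2 hf.ne'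
  set φ : ℝ := 4 / 3 * ((k ^ 3).re - ‖k‖ ^ 3) / f with hφ_def
  refine ⟨Real.exp (-(4 / 3 * (k ^ 3).im / f)), Real.exp_pos _, Complex.exp (φ * I), ?_, ?_⟩
  · have hφ : |φ| ≤ 1 / 20 := by
      have := abs_norm_cube_sub_re_cube_le hk
      have : 0 ≤ ‖k‖ * k.im ^ 2 := by positivity
      rw [hφ_def, abs_div, abs_mul, abs_sub_comm, abs_of_pos hf, div_le_iff₀ hf,
        abs_of_pos (by norm_num : (0 : ℝ) < 4 / 3)]
      linarith
    have hnorm : ‖(φ * I : ℂ)‖ = |φ| := by simp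
    have := Complex.norm_exp_sub_one_le (x := φ * I) (by rw [hnorm]; linarith)
    linarith
  · have hcube := (k ^ 3).re_add_im
    rw [fastPhase, fastPhase, Complex.ofReal_exp, ← Complex.exp_add, ← Complex.exp_add, hφ_def]
    congr 1
    push_cast
    field_simp
    linear_combination -I * hcube + ((k ^ 3).im : ℂ) * Complex.I_sq

variable {κ η t r₁ : ℝ} {k : ℂ}

lemma norm_sub_div_add_le (hκ : 0 ≤ κ) (ht : 0 < t) (ht8 : 8 * t ≤ 1) (htκ : 4 * κ * t ≤ 1)
    (hk : 0 ≤ k.re) (hr₁ : t ≤ r₁) (hr₁k : r₁ ≤ ‖k‖) (hgap : ‖k‖ - r₁ ≤ 2 * t ^ 100 / r₁ ^ 2)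
    (him : |k.im| ≤ t ^ 80 / (1 + ‖k‖)) :
    ‖k - r₁‖ / ‖k‖ + κ * ‖k - r₁‖ ≤ t ^ 78 := by
  have ht1 : t ≤ 1 := by linarith
  have hr₁_pos : 0 < r₁ := ht.trans_le hr₁
  have him80 : |k.im| ≤ t ^ 80 := him.trans (div_le_self (by positivity) (by simp))
  have hgap80 : ‖k‖ - r₁ ≤ 2 * t ^ 80 := by
    refine hgap.trans ?_
    rw [div_le_iff₀ (by positivity)]
    calc 2 * t ^ 100 = 2 * t ^ 80 * (t ^ 2 * t ^ 18) := by ring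
      _ ≤ 2 * t ^ 80 * (r₁ ^ 2 * 1) := by
          gcongr
          exact pow_le_one₀ ht.le ht1
      _ = 2 * t ^ 80 * r₁ ^ 2 := by ring
  have hdist : ‖k - r₁‖ ≤ 4 * t ^ 80 := by
    calc ‖k - r₁‖ = ‖(k - ‖k‖) + ((‖k‖ - r₁ : ℝ) : ℂ)‖ := by
          push_cast
          rw [sub_add_sub_cancel]
      _ ≤ ‖k - ‖k‖‖ + (‖k‖ - r₁) := by
          refine norm_add_le_of_le le_rfl ?_
          rw [Complex.norm_real, Real.norm_of_nonneg (by linarith)]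
      _ ≤ 4 * t ^ 80 := by linarith [norm_sub_norm_self_le hk]
  calc ‖k - r₁‖ / ‖k‖ + κ * ‖k - r₁‖ ≤ 4 * t ^ 80 / t + κ * (4 * t ^ 80) := by
        gcongr
        exact hr₁.trans hr₁k
    _ = (4 * t + 4 * κ * t * t) * t ^ 78 := by
        field_simp
    _ ≤ 1 * t ^ 78 := by
        gcongr
        nlinarith
    _ = t ^ 78 := one_mul _

lemma norm_shiftPhase_ofReal (κ r : ℝ) : ‖shiftPhase κ r‖ = 1 := by
  simp [norm_shiftPhase]

lemma norm_steadyPart_div_modelSteady_sub_one_le {a : Fin 4 → ℂ} (hκ : 0 ≤ κ) (hη : 0 < η)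
    (ht : 0 < t) (ht5 : 5 * t ≤ 1) (htη : 300 * ((1 / (2 * η) + 1 / (4 * η ^ 2)) * t) ≤ 1)
    (hr₁ : t ≤ r₁) (ha : ‖a - 1‖ ≤ 5 * t ^ 78) :
    ‖steadyPart (2 * η * r₁) (shiftPhase κ r₁) a / modelSteady κ η r₁ - 1‖ ≤ 1 / 10 := by
  have hr₁_pos : 0 < r₁ := ht.trans_le hr₁
  have hpow (n : ℕ) (hn : n ≠ 0) : t ^ n ≤ t := pow_le_of_le_one ht.le (by linarith) hn
  have hmodel : 1 ≤ ‖modelSteady κ η r₁‖ :=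
    one_le_norm_modelSteady hκ hη (Complex.ofReal_ne_zero.2 hr₁_pos.ne') (by simp)
  apply norm_div_sub_one_le (norm_pos_iff.1 (one_pos.trans_le hmodel))
  set h₀ := 1 / (2 * η) + 1 / (4 * η ^ 2)
  have hsize : invSize (2 * η * r₁) ≤ h₀ / t ^ 2 :=
    invSize_two_mul_mul_le hη ht (by linarith) (by rwa [Complex.norm_of_nonneg hr₁_pos.le])
  calc ‖steadyPart (2 * η * r₁) (shiftPhase κ r₁) a - modelSteady κ η r₁‖
      ≤ 15 * (5 * t ^ 78) * ((1 + ‖shiftPhase κ r₁‖ ^ 2) * invSize (2 * η * r₁)) :=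
        norm_steadyPart_sub_le (by linarith [hpow 78 (by norm_num)]) ha
    _ ≤ 15 * (5 * t ^ 78) * ((1 + 1 ^ 2) * (h₀ / t ^ 2)) := by
        rw [norm_shiftPhase_ofReal]
        gcongr
    _ = 300 * (h₀ * t) * t ^ 75 / 2 := by
        field_simp
        ring
    _ ≤ 1 * t ^ 75 / 2 := by gcongr
    _ ≤ 1 / 10 * 1 := by linarith [hpow 75 (by norm_num)]
    _ ≤ 1 / 10 * ‖modelSteady κ η r₁‖ := by gcongr

lemma norm_oscPart_div_modelOsc_sub_one_le {a : Fin 4 → ℂ} (ht : 0 < t) (ht5 : 5 * t ≤ 1)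
    (htκ : 600 * t ≤ κ) (hosc₀ : modelOsc κ η r₁ ≠ 0)
    (hosc : κ * t ^ 2 / 2 * invSize (2 * η * r₁) ≤ ‖modelOsc κ η r₁‖)
    (ha : ‖a - 1‖ ≤ 5 * t ^ 78) :
    ‖oscPart (2 * η * r₁) (shiftPhase κ r₁) a / modelOsc κ η r₁ - 1‖ ≤ 1 / 10 := by
  have hpow (n : ℕ) (hn : n ≠ 0) : t ^ n ≤ t := pow_le_of_le_one ht.le (by linarith) hn
  have hH := invSize_nonneg (2 * η * r₁)
  have h75 : t ^ 75 / 2 ≤ 1 / 10 := by linarith [hpow 75 (by norm_num)]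
  have : 0 < κ := by linarith
  apply norm_div_sub_one_le hosc₀
  set H := invSize (2 * η * r₁)
  calc ‖oscPart (2 * η * r₁) (shiftPhase κ r₁) a - modelOsc κ η r₁‖
      ≤ 15 * (5 * t ^ 78) * ((‖shiftPhase κ r₁‖⁻¹ + ‖shiftPhase κ r₁‖) * H) :=
        norm_oscPart_sub_le (by linarith [hpow 78 (by norm_num)]) ha
    _ = 600 * t * (t ^ 2 * H / 2) * (t ^ 75 / 2) := by
        rw [norm_shiftPhase_ofReal]
        ring
    _ ≤ κ * (t ^ 2 * H / 2) * (1 / 10) := by gcongr ?_ * _ * ?_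
    _ = 1 / 10 * (κ * t ^ 2 / 2 * H) := by ring
    _ ≤ 1 / 10 * ‖modelOsc κ η r₁‖ := by gcongr

lemma seven_mul_norm_mul_im_sq_le (ht : 0 < t) (ht140 : 140 * t ≤ 1)
    (him : |k.im| ≤ t ^ 80 / (1 + ‖k‖)) : 7 * ‖k‖ * k.im ^ 2 ≤ t ^ 100 / 20 := by
  have hratio : ‖k‖ / (1 + ‖k‖) ^ 2 ≤ 1 := by
    rw [div_le_one (by positivity)]
    nlinarith [norm_nonneg k]
  have h60 : t ^ 60 ≤ t := pow_le_of_le_one ht.le (by linarith) (by norm_num)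
  calc 7 * ‖k‖ * k.im ^ 2 ≤ 7 * ‖k‖ * (t ^ 80 / (1 + ‖k‖)) ^ 2 := by
        rw [← sq_abs k.im]
        gcongr
    _ = 140 * t ^ 60 * (‖k‖ / (1 + ‖k‖) ^ 2) * (t ^ 100 / 20) := by
        rw [div_pow]
        ring
    _ ≤ 1 * 1 * (t ^ 100 / 20) := by
        gcongr
        linarith
    _ = t ^ 100 / 20 := by ring

lemma exists_small_bound_goodRadius (hκ : 0 < κ) (hη : 0 < η) :
    ∃ M > 0, ∀ t > 0, M * t ≤ 1 → 140 * t ≤ 1 ∧ 4 * κ * t ≤ 1 ∧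
      300 * ((1 / (2 * η) + 1 / (4 * η ^ 2)) * t) ≤ 1 ∧ 600 * t ≤ κ := by
  refine ⟨140 + 4 * κ + 300 * (1 / (2 * η) + 1 / (4 * η ^ 2)) + 600 / κ, by positivity,
    fun t ht hMt ↦ ?_⟩
  have : 0 < 4 * κ * t := by positivity
  have : 0 < 300 * ((1 / (2 * η) + 1 / (4 * η ^ 2)) * t) := by positivity
  have hκt : 0 < 600 / κ * t := by positivity
  have hbound : 600 / κ * t ≤ 1 := by linarith
  rw [div_mul_eq_mul_div, div_le_one hκ] at hbound
  exact ⟨by linarith, by linarith, by linarith, hbound⟩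

theorem re_semiclassicalDet_div_model_pos_of_goodRadius (hκ : 0 < κ) (hη : 0 < η) :
    ∃ M > 0, ∀ t > 0, M * t ≤ 1 → ∀ k : ℂ, GoodRadius κ η t ‖k‖ →
      |k.im| ≤ t ^ 80 / (1 + ‖k‖) → 0 ≤ k.re → ∀ x : Fin 4 → ℂ, ‖x - 1‖ ≤ t ^ 96 / (1 + ‖k‖) →
      0 < (semiclassicalDet κ η (t ^ 100) k x / modelSteady κ η k).re ∧
      0 < (semiclassicalDet κ η (t ^ 100) k x / (fastPhase (t ^ 100) k * modelOsc κ η k)).re := by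
  obtain ⟨M, hM, hsmall⟩ := exists_small_bound_goodRadius hκ hη
  refine ⟨M, hM, fun t ht hMt k hgood him hre x hx ↦ ?_⟩
  obtain ⟨ht140, htκ, htη, htκ'⟩ := hsmall t ht hMt
  obtain ⟨r₁, hr₁, hr₁k, hgap, hosc, P, hP, hphase⟩ := hgood
  have hr₁_pos : 0 < r₁ := ht.trans_le hr₁
  have hr₁_ne : (r₁ : ℂ) ≠ 0 := Complex.ofReal_ne_zero.2 hr₁_pos.ne'
  have hk₀ : k ≠ 0 := norm_pos_iff.1 (hr₁_pos.trans_le hr₁k)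
  have h78 : t ^ 78 ≤ 1 / 2 :=
    (pow_le_of_le_one ht.le (by linarith) (by norm_num)).trans (by linarith)
  have hx78 : ‖x - 1‖ ≤ t ^ 78 := hx.trans ((div_le_self (by positivity) (by simp)).trans
    (pow_le_pow_of_le_one ht.le (by linarith) (by norm_num)))
  have hsteady₀ : modelSteady κ η r₁ ≠ 0 := norm_pos_iff.1
    (one_pos.trans_le (one_le_norm_modelSteady hκ.le hη hr₁_ne (by simp)))
  have hosc₀ : modelOsc κ η r₁ ≠ 0 := by
    refine norm_pos_iff.1 (lt_of_lt_of_le ?_ hosc)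
    have := invSize_pos (two_mul_mul_ne_zero hη.ne' hr₁_ne)
    positivity
  have hclose (x : Fin 4 → ℂ) (hx : ‖x - 1‖ ≤ t ^ 78) :
      ‖steadyPart (2 * η * k) (shiftPhase κ k) x / modelSteady κ η r₁ - 1‖ ≤ 1 / 10 ∧
      ‖oscPart (2 * η * k) (shiftPhase κ k) x / modelOsc κ η r₁ - 1‖ ≤ 1 / 10 := by
    obtain ⟨a, ha, hS, hO⟩ := exists_rebase (η := η) hκ.le hk₀ h78
      (norm_sub_div_add_le hκ.le ht (by linarith) htκ hre hr₁ hr₁k hgap him) hx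
    rw [hS, hO]
    exact ⟨norm_steadyPart_div_modelSteady_sub_one_le hκ.le hη ht (by linarith) htη hr₁ ha,
      norm_oscPart_div_modelOsc_sub_one_le ht (by linarith) htκ' hosc₀ hosc ha⟩
  have hmodel := hclose 1 (by rw [sub_self, norm_zero]; positivity)
  have hfull := hclose x hx78
  obtain ⟨ρ, hρ, u, hu, hE⟩ := exists_fastPhase_eq (pow_pos ht 100) hre
    (seven_mul_norm_mul_im_sq_le ht ht140 him)
  exact re_add_mul_div_pos_of_inPhase hsteady₀ hosc₀ hP hρ hphase hE hu hfull.1 hmodel.1 hfull.2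
    hmodel.2

end GoodRadius

section ExistsGoodRadius

lemma mul_cos_add_sin_eq (K x : ℝ) :
    K * Real.cos x + Real.sin x = √(1 + K ^ 2) * Real.sin (x + Real.arctan K) := by
  have : √(1 + K ^ 2) ≠ 0 := by positivity
  rw [Real.sin_add, Real.sin_arctan, Real.cos_arctan]
  field_simp
  ring

lemma modelOsc_ofReal (κ : ℝ) {η r : ℝ} (hη : η ≠ 0) (hr : r ≠ 0) :
    modelOsc κ η r = ((2 * (2 * η * r * Real.cos (2 * κ * r) + Real.sin (2 * κ * r)) /
      (2 * η * r) ^ 2 : ℝ) : ℂ) := by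
  rw [modelOsc, oscPart_one (two_mul_mul_ne_zero hη (Complex.ofReal_ne_zero.2 hr)), shiftPhase,
    ← Complex.exp_neg, ← neg_mul, Complex.exp_mul_I, Complex.exp_mul_I, Complex.cos_neg,
    Complex.sin_neg]
  push_cast
  congr 1
  linear_combination (-2 * (Complex.sin (2 * κ * r))) * Complex.I_sq

lemma mul_invSize_le_norm_modelOsc_ofReal {κ η r s : ℝ} (hη : 0 < η) (hr : 0 < r)
    (hs : s ≤ |Real.sin (2 * κ * r + Real.arctan (2 * η * r))|) :
    s * invSize (2 * η * r) ≤ ‖modelOsc κ η r‖ := by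
  rw [modelOsc_ofReal κ hη.ne' hr.ne', Complex.norm_real, mul_cos_add_sin_eq, Real.norm_eq_abs,
    invSize, norm_two_mul_mul hη.le, Complex.norm_of_nonneg hr.le]
  have hK : 0 < 2 * η * r := by positivity
  set K := 2 * η * r
  have hsqrt : (1 + K) / 2 ≤ √(1 + K ^ 2) := by
    apply Real.le_sqrt_of_sq_le
    nlinarith [sq_nonneg (1 - K)]
  rw [abs_div, abs_mul, abs_mul, abs_of_nonneg (Real.sqrt_nonneg _), abs_two,
    abs_of_pos (by positivity : 0 < K ^ 2), le_div_iff₀ (by positivity)]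
  calc s * (1 / K + 1 / K ^ 2) * K ^ 2 = s * (1 + K) := by
        field_simp
        ring
    _ ≤ |Real.sin (2 * κ * r + Real.arctan K)| * (1 + K) := by gcongr
    _ = 2 * ((1 + K) / 2 * |Real.sin (2 * κ * r + Real.arctan K)|) := by ring
    _ ≤ _ := by gcongr

lemma abs_sin_sub_le (x y : ℝ) : |Real.sin (x - y)| ≤ |Real.sin x| + |Real.sin y| := by
  rw [Real.sin_sub]
  refine (abs_sub _ _).trans ?_
  rw [abs_mul, abs_mul]
  exact add_le_add (mul_le_of_le_one_right (abs_nonneg _) (Real.abs_cos_le_one y))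
    (mul_le_of_le_one_left (abs_nonneg _) (Real.abs_cos_le_one x))

lemma arctan_sub_arctan_le {x y : ℝ} (h : x ≤ y) : Real.arctan y - Real.arctan x ≤ y - x := by
  have hderiv (z : ℝ) : deriv Real.arctan z ≤ 1 := by
    rw [Real.deriv_arctan]
    exact div_le_one_of_le₀ (by linarith [sq_nonneg z]) (by positivity)
  simpa using image_sub_le_mul_sub_of_deriv_le Real.differentiable_arctan hderiv h

lemma exists_exp_add_mul_I_eq {z : ℂ} (hz : z ≠ 0) (c : ℝ) :
    ∃ ψ : ℝ, 0 ≤ ψ ∧ ψ < 2 * π ∧ Complex.exp ((c + ψ) * I) = z / ‖z‖ := by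
  refine ⟨toIcoMod Real.two_pi_pos 0 (z.arg - c), left_le_toIcoMod _ _ _,
    by simpa using toIcoMod_lt_right Real.two_pi_pos 0 (z.arg - c), ?_⟩
  rw [eq_div_iff (by simpa using hz), mul_comm]
  nth_rw 3 [← Complex.norm_mul_exp_arg_mul_I z]
  congr 1
  rw [Complex.exp_eq_exp_iff_exists_int]
  refine ⟨-toIcoDiv Real.two_pi_pos 0 (z.arg - c), ?_⟩
  rw [toIcoMod, zsmul_eq_mul]
  push_cast
  ring

lemma exists_cube_eq_add {r δ : ℝ} (hr : 0 < r) (hδ : 0 ≤ δ) :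
    ∃ s, r ≤ s ∧ s - r ≤ δ / (3 * r ^ 2) ∧ s ^ 3 = r ^ 3 + δ := by
  have hnonneg : 0 ≤ r ^ 3 + δ := by positivity
  set s := (r ^ 3 + δ) ^ (((3 : ℕ) : ℝ)⁻¹)
  have hs₀ : 0 ≤ s := Real.rpow_nonneg hnonneg _
  have hs : s ^ 3 = r ^ 3 + δ := Real.rpow_inv_natCast_pow hnonneg (by norm_num)
  have hle : r ≤ s := le_of_pow_le_pow_left₀ (n := 3) (by norm_num) hs₀ (by linarith)
  refine ⟨s, hle, ?_, hs⟩
  rw [le_div_iff₀ (by positivity)]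
  calc (s - r) * (3 * r ^ 2) ≤ (s - r) * (s ^ 2 + s * r + r ^ 2) :=
        mul_le_mul_of_nonneg_left (by nlinarith) (sub_nonneg.2 hle)
    _ = δ := by linear_combination hs

lemma exists_fastPhase_mul_eq {f r₁ : ℝ} (hf : 0 < f) (hr₁ : 0 < r₁) {A B : ℂ} (hA : A ≠ 0)
    (hB : B ≠ 0) :
    ∃ r, r₁ ≤ r ∧ r - r₁ ≤ 2 * f / r₁ ^ 2 ∧ ∃ P > (0 : ℝ), fastPhase f r * B = P * A := by
  have hAB : A / B ≠ 0 := div_ne_zero hA hB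
  obtain ⟨ψ, hψ₀, hψ, hexp⟩ := exists_exp_add_mul_I_eq hAB (4 / 3 * r₁ ^ 3 / f)
  obtain ⟨r, hr, hgap, hcube⟩ := exists_cube_eq_add hr₁ (by positivity : 0 ≤ 3 * f / 4 * ψ)
  refine ⟨r, hr, hgap.trans ?_, ‖A / B‖⁻¹, inv_pos.2 (norm_pos_iff.2 hAB), ?_⟩
  · rw [div_le_div_iff₀ (by positivity) (by positivity)]
    have : f * r₁ ^ 2 * ψ ≤ f * r₁ ^ 2 * 8 := by
      gcongr
      linarith [Real.pi_le_four]
    linarith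
  · have hphase : fastPhase f r = A / B / ‖A / B‖ := by
      have hf₀ : (f : ℂ) ≠ 0 := Complex.ofReal_ne_zero.2 hf.ne'
      rw [← hexp, fastPhase, ← Complex.ofReal_pow, hcube]
      congr 1
      push_cast
      field_simp
    rw [hphase]
    push_cast
    field_simp

lemma exists_le_abs_sin_phase {κ η t : ℝ} (hκ : 0 < κ) (hη : 0 < η) (ht : 0 < t) (ht1 : t ≤ 1)
    (hsmall : 2 * (κ * t) + 2 * (η * t) ≤ 1) (r₀ : ℝ) :
    ∃ r₁, r₀ ≤ r₁ ∧ r₁ ≤ r₀ + t ^ 2 ∧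
      κ * t ^ 2 / 2 ≤ |Real.sin (2 * κ * r₁ + Real.arctan (2 * η * r₁))| := by
  set y : ℝ → ℝ := fun r ↦ 2 * κ * r + Real.arctan (2 * η * r) with hy
  have hle : 2 * η * r₀ ≤ 2 * η * (r₀ + t ^ 2) := by
    gcongr
    linarith [sq_nonneg t]
  set d := y (r₀ + t ^ 2) - y r₀ with hd
  have hd_lower : 2 * κ * t ^ 2 ≤ d := by
    have := Real.arctan_strictMono.monotone hle
    simp only [hd, hy]
    linarith
  have hd_upper : d ≤ 1 := by
    have := arctan_sub_arctan_le hle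
    calc d ≤ (2 * (κ * t) + 2 * (η * t)) * t := by
          simp only [hd, hy]
          linarith
      _ ≤ 1 := mul_le_one₀ hsmall ht.le ht1
  have hd₀ : 0 ≤ d := le_trans (by positivity) hd_lower
  have hsin : κ * t ^ 2 ≤ Real.sin d := by
    refine le_trans ?_ (Real.mul_le_sin hd₀ (by linarith [Real.pi_gt_three]))
    rw [div_mul_eq_mul_div, le_div_iff₀ Real.pi_pos]
    linarith [mul_le_mul_of_nonneg_left Real.pi_le_four (by positivity : 0 ≤ κ * t ^ 2)]
  have htriangle := hsin.trans ((le_abs_self _).trans (abs_sin_sub_le (y (r₀ + t ^ 2)) (y r₀)))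
  by_cases hcase : κ * t ^ 2 / 2 ≤ |Real.sin (y r₀)|
  · exact ⟨r₀, le_rfl, by linarith [sq_nonneg t], hcase⟩
  · exact ⟨r₀ + t ^ 2, by linarith [sq_nonneg t], le_rfl, by linarith⟩

theorem exists_goodRadius {κ η : ℝ} (hκ : 0 < κ) (hη : 0 < η) :
    ∃ M > 0, ∀ t > 0, M * t ≤ 1 → ∀ r₀, t ≤ r₀ →
      ∃ r, r₀ ≤ r ∧ r ≤ r₀ + 2 * t ^ 2 ∧ GoodRadius κ η t r := by
  refine ⟨2 + 2 * κ + 2 * η, by positivity, fun t ht hMt r₀ hr₀ ↦ ?_⟩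
  have := mul_pos hκ ht
  have := mul_pos hη ht
  have : t ≤ 1 / 2 := by linarith
  obtain ⟨r₁, hr₀₁, hr₁, hsin⟩ := exists_le_abs_sin_phase hκ hη ht (by linarith) (by linarith) r₀
  have htr₁ : t ≤ r₁ := hr₀.trans hr₀₁
  have hr₁_pos : 0 < r₁ := ht.trans_le htr₁
  have hr₁_ne : (r₁ : ℂ) ≠ 0 := Complex.ofReal_ne_zero.2 hr₁_pos.ne'
  have hosc := mul_invSize_le_norm_modelOsc_ofReal hη hr₁_pos hsin
  have hosc₀ : modelOsc κ η r₁ ≠ 0 := by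
    refine norm_pos_iff.1 (lt_of_lt_of_le ?_ hosc)
    have := invSize_pos (two_mul_mul_ne_zero hη.ne' hr₁_ne)
    positivity
  have hsteady₀ : modelSteady κ η r₁ ≠ 0 := norm_pos_iff.1
    (one_pos.trans_le (one_le_norm_modelSteady hκ.le hη hr₁_ne (by simp)))
  obtain ⟨r, hr, hgap, hphase⟩ :=
    exists_fastPhase_mul_eq (pow_pos ht 100) hr₁_pos hsteady₀ hosc₀
  have hgap_le : 2 * t ^ 100 / r₁ ^ 2 ≤ t ^ 2 := by
    have : t ^ 96 ≤ t := pow_le_of_le_one ht.le (by linarith) (by norm_num)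
    rw [div_le_iff₀ (by positivity)]
    calc 2 * t ^ 100 = t ^ 2 * (2 * t ^ 96 * t ^ 2) := by ring
      _ ≤ t ^ 2 * (1 * r₁ ^ 2) := by
          gcongr
          linarith
      _ = t ^ 2 * r₁ ^ 2 := by ring
  exact ⟨r, hr₀₁.trans hr, by linarith, r₁, htr₁, hr, hgap, hosc, hphase⟩

end ExistsGoodRadius

section SectorBoundary

lemma relError_pow_le {t r : ℝ} (ht : 0 < t) (ht1 : t ≤ 1) (hr : t ≤ r) :
    relError (t ^ 100) r ≤ 6 * t ^ 97 / (1 + r) := by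
  have hr₀ : 0 < r := ht.trans_le hr
  have hu : t / r ≤ 1 := (div_le_one hr₀).2 hr
  have : 0 ≤ t / r := by positivity
  rw [relError, le_div_iff₀ (by positivity)]
  calc (t ^ 100 / r + t ^ 100 / r ^ 2 + t ^ 100 / r ^ 3) * (1 + r)
      = (t ^ 3 + 2 * (t / r) * t ^ 2 + 2 * (t / r) ^ 2 * t + (t / r) ^ 3) * t ^ 97 := by
        field_simp
        ring
    _ ≤ (1 + 2 * 1 * 1 + 2 * 1 * 1 + 1) * t ^ 97 := by
        gcongr <;> exact pow_le_one₀ (by positivity) (by assumption)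
    _ = 6 * t ^ 97 := by ring

lemma abs_sin_le_cos {θ : ℝ} (hθ : |θ| ≤ π / 4) : |Real.sin θ| ≤ Real.cos θ := by
  have hpi := Real.pi_pos
  rw [← Real.cos_abs θ, Real.abs_sin_eq_sin_abs_of_abs_le_pi (by linarith)]
  calc Real.sin |θ| ≤ Real.sin (π / 4) :=
        Real.sin_le_sin_of_le_of_le_pi_div_two (by linarith [abs_nonneg θ]) (by linarith) hθ
    _ = Real.cos (π / 4) := by rw [Real.sin_pi_div_four, Real.cos_pi_div_four]
    _ ≤ Real.cos |θ| := Real.cos_le_cos_of_nonneg_of_le_pi (abs_nonneg θ) (by linarith) hθ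

variable {p : ℂ}

lemma abs_exp_im_le_exp_re (hp : |p.im| ≤ π / 4) :
    |(Complex.exp p).im| ≤ (Complex.exp p).re := by
  rw [Complex.exp_re, Complex.exp_im, abs_mul, abs_of_pos (Real.exp_pos _)]
  gcongr
  exact abs_sin_le_cos hp

lemma exp_im_nonneg (hp : |p.im| ≤ π / 4) (him : 0 ≤ p.im) : 0 ≤ (Complex.exp p).im := by
  rw [Complex.exp_im]
  exact mul_nonneg (Real.exp_pos _).le (Real.sin_nonneg_of_nonneg_of_le_pi him
    (by linarith [le_abs_self p.im, Real.pi_pos]))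

lemma exp_im_nonpos (hp : |p.im| ≤ π / 4) (him : p.im ≤ 0) : (Complex.exp p).im ≤ 0 := by
  rw [Complex.exp_im]
  exact mul_nonpos_of_nonneg_of_nonpos (Real.exp_pos _).le
    (Real.sin_nonpos_of_nonpos_of_neg_pi_le him (by linarith [neg_abs_le p.im, Real.pi_pos]))

lemma norm_div_two_le_abs_exp_im (hp : |p.im| = π / 4) :
    ‖Complex.exp p‖ / 2 ≤ |(Complex.exp p).im| := by
  have habs : |(Complex.exp p).im| = ‖Complex.exp p‖ * (√2 / 2) := by
    rw [Complex.exp_im, abs_mul, abs_of_pos (Real.exp_pos _), Complex.norm_exp,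
      Real.abs_sin_eq_sin_abs_of_abs_le_pi (by linarith [Real.pi_pos]), hp, Real.sin_pi_div_four]
  have : ‖Complex.exp p‖ * 1 ≤ ‖Complex.exp p‖ * √2 := by
    gcongr
    exact Real.one_le_sqrt.2 one_le_two
  linarith

lemma div_le_abs_exp_im {t : ℝ} (ht : 0 < t) (ht2 : t ≤ 1 / 2) (hp : |p.im| = π / 4)
    (htp : t ≤ ‖Complex.exp p‖) : t ^ 80 / (1 + ‖Complex.exp p‖) ≤ |(Complex.exp p).im| := by
  have h79 : t ^ 79 ≤ 1 / 2 :=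
    (pow_le_of_le_one ht.le (by linarith) (by norm_num)).trans ht2
  calc t ^ 80 / (1 + ‖Complex.exp p‖) ≤ t * t ^ 79 :=
        (div_le_self (by positivity) (by simp)).trans_eq (by ring)
    _ ≤ ‖Complex.exp p‖ * (1 / 2) := by gcongr
    _ ≤ _ := by linarith [norm_div_two_le_abs_exp_im hp]

lemma exists_Df_pow_eq_semiclassicalDet {κ η : ℝ} (hκ : 0 < κ) (hη : 0 < η) :
    ∃ M > 0, ∀ t > 0, M * t ≤ 1 → ∀ p : ℂ, |p.im| ≤ π / 4 → t ≤ ‖Complex.exp p‖ →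
      ∃ x : Fin 4 → ℂ, ‖x - 1‖ ≤ t ^ 96 / (1 + ‖Complex.exp p‖) ∧
        Df κ η (t ^ 100) (Complex.exp p ^ 2) =
          semiclassicalDet κ η (t ^ 100) (Complex.exp p) x := by
  obtain ⟨C, hC, c, hc, hD⟩ := exists_Df_eq_semiclassicalDet hκ hη
  refine ⟨1 + 6 * C + 6 / c, by positivity, fun t ht hMt p hp htp ↦ ?_⟩
  rw [Complex.norm_exp] at htp ⊢
  have hCt := mul_pos hC ht
  have hct : 0 < 6 / c * t := by positivity
  have ht1 : t ≤ 1 := by linarith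
  have hrel := relError_pow_le ht ht1 htp
  set r := Real.exp p.re
  have : 0 < r := Real.exp_pos _
  have hrel_le : relError (t ^ 100) r ≤ c := by
    have h97 : t ^ 97 ≤ t := pow_le_of_le_one ht.le ht1 (by norm_num)
    have hbound : 6 / c * t ≤ 1 := by linarith
    rw [div_mul_eq_mul_div, div_le_one hc] at hbound
    calc relError (t ^ 100) r ≤ 6 * t ^ 97 :=
          hrel.trans (div_le_self (by positivity) (by linarith))
      _ ≤ c := by linarith
  have hrel_small : C * relError (t ^ 100) r ≤ t ^ 96 / (1 + r) := by
    calc C * relError (t ^ 100) r ≤ C * (6 * t ^ 97 / (1 + r)) := by gcongr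
      _ = 6 * (C * t) * t ^ 96 / (1 + r) := by ring
      _ ≤ 1 * t ^ 96 / (1 + r) := by
          gcongr
          linarith
      _ = t ^ 96 / (1 + r) := by rw [one_mul]
  obtain ⟨x, hx, hDx⟩ := hD (t ^ 100) (by positivity) p hp hrel_le
  exact ⟨x, hx.trans hrel_small, hDx⟩

theorem re_Df_div_model_pos {κ η : ℝ} (hκ : 0 < κ) (hη : 0 < η) :
    ∃ M > 0, ∀ t > 0, M * t ≤ 1 → ∀ p : ℂ, |p.im| ≤ π / 4 → t ≤ ‖Complex.exp p‖ →
      (GoodRadius κ η t ‖Complex.exp p‖ ∨ |p.im| = π / 4) →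
      (0 ≤ p.im →
        0 < (Df κ η (t ^ 100) (Complex.exp p ^ 2) / modelSteady κ η (Complex.exp p)).re) ∧
      (p.im ≤ 0 → 0 < (Df κ η (t ^ 100) (Complex.exp p ^ 2) /
        (fastPhase (t ^ 100) (Complex.exp p) * modelOsc κ η (Complex.exp p))).re) := by
  obtain ⟨M₀, hM₀, hD⟩ := exists_Df_pow_eq_semiclassicalDet hκ hη
  obtain ⟨M₁, hM₁, hsteady⟩ := norm_semiclassicalDet_sub_modelSteady_lt hκ hη
  obtain ⟨M₂, hM₂, hosc⟩ := norm_semiclassicalDet_sub_modelOsc_lt hκ hη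
  obtain ⟨M₃, hM₃, hgood⟩ := re_semiclassicalDet_div_model_pos_of_goodRadius hκ hη
  refine ⟨2 + M₀ + M₁ + M₂ + M₃, by positivity, fun t ht hMt p hp htp hcase ↦ ?_⟩
  have := mul_pos hM₀ ht
  have := mul_pos hM₁ ht
  have := mul_pos hM₂ ht
  have := mul_pos hM₃ ht
  obtain ⟨x, hx, hDx⟩ := hD t ht (by linarith) p hp htp
  rw [hDx]
  have hsector := abs_le.1 (abs_exp_im_le_exp_re hp)
  rcases le_or_gt (t ^ 80 / (1 + ‖Complex.exp p‖)) |(Complex.exp p).im| with hbig | hsmall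
  · refine ⟨fun him ↦ ?_, fun him ↦ ?_⟩ <;> apply re_div_pos_of_norm_sub_lt
    · rw [abs_of_nonneg (exp_im_nonneg hp him)] at hbig
      exact hsteady t ht (by linarith) _ htp hbig hsector.2 x hx
    · rw [abs_of_nonpos (exp_im_nonpos hp him)] at hbig
      exact hosc t ht (by linarith) _ htp (by linarith) (by linarith [hsector.1]) x hx
  · rcases hcase with hradius | hedge
    · have hmodel := hgood t ht (by linarith) _ hradius hsmall.le (by linarith) x hx
      exact ⟨fun _ ↦ hmodel.1, fun _ ↦ hmodel.2⟩
    · exact absurd (div_le_abs_exp_im ht (by linarith) hedge htp) (not_le.2 hsmall)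

end SectorBoundary

/-! ### The argument principle on a rectangle -/

section ArgumentPrinciple

/-- The closed rectangle `[a, b] × [-c, c]` in `ℂ`. -/
def closedRect (a b c : ℝ) : Set ℂ := {p | p.re ∈ Icc a b ∧ |p.im| ≤ c}

/-- The boundary of the rectangle `[a, b] × [-c, c]`, along which zeros are counted. -/
def rectBoundary (a b c : ℝ) : Set ℂ := {p ∈ closedRect a b c | p.re = a ∨ p.re = b ∨ |p.im| = c}

lemma integral_horizontal_eq_sub {L F : ℂ → ℂ} {a b y : ℝ} (hab : a ≤ b)
    (hL : ∀ x ∈ Icc a b, HasDerivAt L (F (x + y * I)) (x + y * I))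
    (hF : ContinuousOn (fun x : ℝ ↦ F (x + y * I)) (Icc a b)) :
    ∫ x in a..b, F (x + y * I) = L (b + y * I) - L (a + y * I) := by
  rw [← uIcc_of_le hab] at hL hF
  exact intervalIntegral.integral_eq_sub_of_hasDerivAt (f := fun x : ℝ ↦ L (x + y * I))
    (fun x hx ↦ ((hL x hx).comp_add_const _ _).comp_ofReal) hF.intervalIntegrable

lemma integral_vertical_eq_sub {L F : ℂ → ℂ} {x c d : ℝ} (hcd : c ≤ d)
    (hL : ∀ y ∈ Icc c d, HasDerivAt L (F (x + y * I)) (x + y * I))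
    (hF : ContinuousOn (fun y : ℝ ↦ F (x + y * I)) (Icc c d)) :
    I • ∫ y in c..d, F (x + y * I) = L (x + d * I) - L (x + c * I) := by
  rw [← uIcc_of_le hcd] at hL hF
  rw [← intervalIntegral.integral_smul]
  refine intervalIntegral.integral_eq_sub_of_hasDerivAt (f := fun y : ℝ ↦ L (x + y * I))
    (fun y hy ↦ ?_) (hF.const_smul I).intervalIntegrable
  have hline : HasDerivAt (fun z : ℂ ↦ (x : ℂ) + z * I) I (y : ℂ) := by
    simpa using ((hasDerivAt_id (y : ℂ)).mul_const I).const_add (x : ℂ)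
  rw [smul_eq_mul, mul_comm]
  exact (HasDerivAt.comp (y : ℂ) (h₂ := L) (hL y hy) hline).comp_ofReal

lemma integral_vertical_eq_sub_add_sub {L₁ L₂ F : ℂ → ℂ} {x c : ℝ} (hc : 0 ≤ c)
    (h₁ : ∀ y ∈ Icc (-c) 0, HasDerivAt L₁ (F (x + y * I)) (x + y * I))
    (h₂ : ∀ y ∈ Icc 0 c, HasDerivAt L₂ (F (x + y * I)) (x + y * I))
    (hF : ContinuousOn (fun y : ℝ ↦ F (x + y * I)) (Icc (-c) c)) :
    I • ∫ y in (-c)..c, F (x + y * I) =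
      (L₁ x - L₁ (x + (-c : ℝ) * I)) + (L₂ (x + c * I) - L₂ x) := by
  have hcneg : -c ≤ 0 := by linarith
  have hF₁ := hF.mono (Icc_subset_Icc_right hc)
  have hF₂ := hF.mono (Icc_subset_Icc_left hcneg)
  rw [← intervalIntegral.integral_add_adjacent_intervals (b := 0)
    (hF₁.intervalIntegrable_of_Icc hcneg) (hF₂.intervalIntegrable_of_Icc hc), smul_add,
    integral_vertical_eq_sub hcneg h₁ hF₁, integral_vertical_eq_sub hc h₂ hF₂,
    Complex.ofReal_zero, zero_mul, add_zero]

/-- Cauchy's theorem, with the boundary integral evaluated by one primitive on the lower half of the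
boundary and another one on the upper half. -/
theorem sub_add_sub_eq_zero_of_hasDerivAt {L₁ L₂ F : ℂ → ℂ} {a b c : ℝ} (hab : a ≤ b) (hc : 0 ≤ c)
    (hF : DifferentiableOn ℂ F (closedRect a b c))
    (h₁ : ∀ p ∈ rectBoundary a b c, p.im ≤ 0 → HasDerivAt L₁ (F p) p)
    (h₂ : ∀ p ∈ rectBoundary a b c, 0 ≤ p.im → HasDerivAt L₂ (F p) p) :
    L₁ b - L₁ a + (L₂ a - L₂ b) = 0 := by
  have hcc : -c ≤ c := by linarith
  have hrect {x y : ℝ} (hx : x ∈ Icc a b) (hy : |y| ≤ c) : (x + y * I : ℂ) ∈ closedRect a b c := by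
    simpa [closedRect] using ⟨hx, hy⟩
  have hside {x y : ℝ} (hx : x = a ∨ x = b) (hy : |y| ≤ c) :
      (x + y * I : ℂ) ∈ rectBoundary a b c := by
    refine ⟨hrect ?_ hy, by simpa using hx.imp_right Or.inl⟩
    rcases hx with rfl | rfl
    exacts [left_mem_Icc.2 hab, right_mem_Icc.2 hab]
  have hedge {x y : ℝ} (hx : x ∈ Icc a b) (hy : |y| = c) : (x + y * I : ℂ) ∈ rectBoundary a b c :=
    ⟨hrect hx hy.le, Or.inr (Or.inr (by simpa using hy))⟩
  have hvertical (x : ℝ) (hx : x = a ∨ x = b) :=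
    integral_vertical_eq_sub_add_sub (L₁ := L₁) (L₂ := L₂) (F := F) (x := x) hc
      (fun y hy ↦ h₁ _ (hside hx (abs_le.2 ⟨hy.1, hy.2.trans hc⟩)) (by simpa using hy.2))
      (fun y hy ↦ h₂ _ (hside hx (abs_le.2 ⟨by linarith [hy.1], hy.2⟩)) (by simpa using hy.1))
      (hF.continuousOn.comp (by fun_prop) fun y hy ↦ (hside hx (abs_le.2 hy)).1)
  have hhorizontal (y : ℝ) (hy : |y| = c) :
      ContinuousOn (fun x : ℝ ↦ F (x + y * I)) (Icc a b) :=
    hF.continuousOn.comp (by fun_prop) fun x hx ↦ hrect hx hy.le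
  have hc_abs : |c| = c := abs_of_nonneg hc
  have hnegc_abs : |-c| = c := by rw [abs_neg, hc_abs]
  have hbottom := integral_horizontal_eq_sub (L := L₁) hab
    (fun x hx ↦ h₁ _ (hedge hx hnegc_abs) (by simpa using hc)) (hhorizontal _ hnegc_abs)
  have htop := integral_horizontal_eq_sub (L := L₂) hab
    (fun x hx ↦ h₂ _ (hedge hx hc_abs) (by simpa using hc)) (hhorizontal _ hc_abs)
  have hcauchy := Complex.integral_boundary_rect_eq_zero_of_differentiableOn F
    (a + (-c : ℝ) * I) (b + c * I) (hF.mono fun p hp ↦ by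
      rw [Complex.mem_reProdIm] at hp
      simpa [closedRect, uIcc_of_le hab, uIcc_of_le hcc, abs_le] using hp)
  simp only [Complex.add_re, Complex.ofReal_re, Complex.re_ofReal_mul, Complex.I_re, mul_zero,
    add_zero, Complex.add_im, Complex.ofReal_im, Complex.im_ofReal_mul, Complex.I_im, mul_one,
    zero_add, hbottom, htop, hvertical a (Or.inl rfl), hvertical b (Or.inr rfl)] at hcauchy
  linear_combination hcauchy

lemma log_sub_log_neg {v : ℂ} (hv : 0 < v.im) : Complex.log v - Complex.log (-v) = π * I := by
  rw [Complex.log, Complex.log, norm_neg, Complex.arg_neg_eq_arg_sub_pi_of_im_pos hv]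
  push_cast
  ring

lemma log_I_mul_sub_winding {a b ρ : ℂ} (ha : a.re < ρ.re) (hb : ρ.re < b.re) :
    Complex.log (I * (b - ρ)) - Complex.log (I * (a - ρ)) +
      (Complex.log (-I * (a - ρ)) - Complex.log (-I * (b - ρ))) = 2 * π * I := by
  have hlog_b := log_sub_log_neg (v := I * (b - ρ)) (by simpa using hb)
  have hlog_a := log_sub_log_neg (v := -I * (a - ρ)) (by simpa using ha)
  rw [← neg_mul] at hlog_b
  rw [neg_mul, neg_neg, ← neg_mul] at hlog_a
  linear_combination hlog_a + hlog_b

lemma hasDerivAt_log_const_mul_sub {ρ m p : ℂ} (h : m * (p - ρ) ∈ Complex.slitPlane) :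
    HasDerivAt (fun q ↦ Complex.log (m * (q - ρ))) (1 / (p - ρ)) p := by
  have hne := Complex.slitPlane_ne_zero h
  have hm := left_ne_zero_of_mul hne
  have := right_ne_zero_of_mul hne
  have hlin : HasDerivAt (fun q ↦ m * (q - ρ)) m p := by
    simpa using ((hasDerivAt_id p).sub_const ρ).const_mul m
  convert hlin.clog h using 1
  field_simp

section Slit

variable {a b c : ℝ} {ρ p : ℂ}

lemma I_mul_sub_mem_slitPlane (hρ : ρ.re ∈ Ioo a b) (hρc : |ρ.im| < c)
    (hp : p ∈ rectBoundary a b c) (him : p.im ≤ 0) : I * (p - ρ) ∈ Complex.slitPlane := by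
  have := (abs_lt.1 hρc).1
  simp only [Complex.mem_slitPlane_iff, Complex.I_mul_re, Complex.I_mul_im, Complex.sub_re,
    Complex.sub_im]
  rcases hp.2 with h | h | h
  · exact Or.inr (by linarith [hρ.1] : p.re - ρ.re < 0).ne
  · exact Or.inr (by linarith [hρ.2] : 0 < p.re - ρ.re).ne'
  · rw [abs_of_nonpos him] at h
    exact Or.inl (by linarith)

lemma neg_I_mul_sub_mem_slitPlane (hρ : ρ.re ∈ Ioo a b) (hρc : |ρ.im| < c)
    (hp : p ∈ rectBoundary a b c) (him : 0 ≤ p.im) : -I * (p - ρ) ∈ Complex.slitPlane := by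
  have := (abs_lt.1 hρc).2
  simp only [Complex.mem_slitPlane_iff, neg_mul, Complex.neg_re, Complex.neg_im, Complex.I_mul_re,
    Complex.I_mul_im, Complex.sub_re, Complex.sub_im, neg_neg]
  rcases hp.2 with h | h | h
  · exact Or.inr (by linarith [hρ.1] : 0 < -(p.re - ρ.re)).ne'
  · exact Or.inr (by linarith [hρ.2] : -(p.re - ρ.re) < 0).ne
  · rw [abs_of_nonneg him] at h
    exact Or.inl (by linarith)

end Slit

lemma analyticOrderAt_ne_top_of_ne_zero {g : ℂ → ℂ} (hg : Differentiable ℂ g) {w : ℂ}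
    (hw : g w ≠ 0) (z : ℂ) : analyticOrderAt g z ≠ ⊤ := fun htop ↦
  hw (congrFun
    ((AnalyticOnNhd.analyticOrderAt_eq_top_iff_eq_zero z fun z₀ ↦ hg.analyticAt z₀).1 htop) w)

lemma exists_eq_sub_pow_mul {σ : ℂ} {n : ℕ} {g : ℂ → ℂ} (hg : Differentiable ℂ g)
    (hn : analyticOrderAt g σ = n) :
    ∃ h : ℂ → ℂ, Differentiable ℂ h ∧ h σ ≠ 0 ∧ ∀ p, g p = (p - σ) ^ n * h p := by
  induction n generalizing g with
  | zero =>
    exact ⟨g, hg, (hg.analyticAt σ).analyticOrderAt_eq_zero.1 (by simpa using hn), by simp⟩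
  | succ n ih =>
    have hgσ : g σ = 0 := by
      by_contra hne
      rw [(hg.analyticAt σ).analyticOrderAt_eq_zero.2 hne] at hn
      exact absurd hn (by positivity : (0 : ℕ∞) < _).ne
    have hd : Differentiable ℂ (dslope g σ) := by
      rw [← differentiableOn_univ, Complex.differentiableOn_dslope univ_mem]
      exact hg.differentiableOn
    have hmul : g = (fun p ↦ p - σ) * dslope g σ := by
      ext p
      simpa [hgσ] using (sub_smul_dslope g σ p).symm
    have hdn : analyticOrderAt (dslope g σ) σ = n := by
      rw [hmul, analyticOrderAt_mul (by fun_prop) (hd.analyticAt σ),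
        analyticOrderAt_id_sub_const_self, Nat.cast_add_one, add_comm] at hn
      exact ENat.add_left_injective_of_ne_top ENat.one_ne_top hn
    obtain ⟨h, hh, hσ, hfac⟩ := ih hd hdn
    refine ⟨h, hh, hσ, fun p ↦ ?_⟩
    rw [hmul, Pi.mul_apply, hfac]
    ring

lemma exists_eq_prod_sub_pow_mul {g : ℂ → ℂ} (hg : Differentiable ℂ g) (S : Finset ℂ)
    (hS : ∀ ρ ∈ S, analyticOrderAt g ρ ≠ ⊤) :
    ∃ h : ℂ → ℂ, Differentiable ℂ h ∧ (∀ ρ ∈ S, h ρ ≠ 0) ∧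
      ∀ p, g p = (∏ ρ ∈ S, (p - ρ) ^ analyticOrderNatAt g ρ) * h p := by
  classical
  induction S using Finset.induction_on with
  | empty => exact ⟨g, hg, by simp, by simp⟩
  | insert σ S hσ ih =>
    obtain ⟨h, hh, hne, hfac⟩ := ih fun ρ hρ ↦ hS ρ (Finset.mem_insert_of_mem hρ)
    have hprod : Differentiable ℂ fun p ↦ ∏ ρ ∈ S, (p - ρ) ^ analyticOrderNatAt g ρ := by fun_prop
    have hprod₀ : ∏ ρ ∈ S, (σ - ρ) ^ analyticOrderNatAt g ρ ≠ 0 :=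
      Finset.prod_ne_zero_iff.2 fun ρ hρ ↦
        pow_ne_zero _ (sub_ne_zero.2 (ne_of_mem_of_not_mem hρ hσ).symm)
    have hord : analyticOrderAt h σ = analyticOrderNatAt g σ := by
      have hmul : g = (fun p ↦ ∏ ρ ∈ S, (p - ρ) ^ analyticOrderNatAt g ρ) * h := funext hfac
      rw [Nat.cast_analyticOrderNatAt (hS σ (Finset.mem_insert_self _ _))]
      conv_rhs => rw [hmul]
      rw [analyticOrderAt_mul (hprod.analyticAt σ) (hh.analyticAt σ),
        (hprod.analyticAt σ).analyticOrderAt_eq_zero.2 hprod₀, zero_add]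
    obtain ⟨u, hu, huσ, hfac'⟩ := exists_eq_sub_pow_mul hh hord
    refine ⟨u, hu, fun ρ hρ ↦ ?_, fun p ↦ ?_⟩
    · rcases Finset.mem_insert.1 hρ with rfl | hρ
      · exact huσ
      · exact right_ne_zero_of_mul (hfac' ρ ▸ hne ρ hρ)
    · rw [Finset.prod_insert hσ, hfac p, hfac' p]
      ring

lemma logDeriv_prod_sub_pow_mul {S : Finset ℂ} (n : ℂ → ℕ) {h : ℂ → ℂ} (hh : Differentiable ℂ h)
    {p : ℂ} (hp : (∏ ρ ∈ S, (p - ρ) ^ n ρ) * h p ≠ 0) :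
    logDeriv (fun p ↦ (∏ ρ ∈ S, (p - ρ) ^ n ρ) * h p) p =
      ∑ ρ ∈ S, (n ρ : ℂ) * (1 / (p - ρ)) + logDeriv h p := by
  have hprod := left_ne_zero_of_mul hp
  rw [logDeriv_mul p hprod (right_ne_zero_of_mul hp) (by fun_prop) (hh p),
    logDeriv_prod (f := fun ρ p ↦ (p - ρ) ^ n ρ) (fun ρ hρ ↦ Finset.prod_ne_zero_iff.1 hprod ρ hρ)
      (fun ρ _ ↦ by fun_prop)]
  congr 1
  refine Finset.sum_congr rfl fun ρ _ ↦ ?_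
  rw [logDeriv_fun_pow (by fun_prop)]
  simp [logDeriv_apply]

lemma left_mem_rectBoundary {a b c : ℝ} (hab : a ≤ b) (hc : 0 ≤ c) :
    (a : ℂ) ∈ rectBoundary a b c := by
  simp [rectBoundary, closedRect, hab, hc]

lemma right_mem_rectBoundary {a b c : ℝ} (hab : a ≤ b) (hc : 0 ≤ c) :
    (b : ℂ) ∈ rectBoundary a b c := by
  simp [rectBoundary, closedRect, hab, hc]

theorem two_pi_I_mul_sum_analyticOrderNatAt {g L₁ L₂ : ℂ → ℂ} {a b c : ℝ} (hab : a ≤ b)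
    (hc : 0 ≤ c) (hg : Differentiable ℂ g) (hne : ∀ p ∈ rectBoundary a b c, g p ≠ 0)
    (h₁ : ∀ p ∈ rectBoundary a b c, p.im ≤ 0 → HasDerivAt L₁ (logDeriv g p) p)
    (h₂ : ∀ p ∈ rectBoundary a b c, 0 ≤ p.im → HasDerivAt L₂ (logDeriv g p) p)
    {S : Finset ℂ} (hS : ∀ ρ, ρ ∈ S ↔ ρ.re ∈ Ioo a b ∧ |ρ.im| < c ∧ g ρ = 0) :
    L₁ b - L₁ a + (L₂ a - L₂ b) = 2 * π * I * ∑ ρ ∈ S, (analyticOrderNatAt g ρ : ℂ) := by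
  obtain ⟨h, hh, hhS, hfac⟩ := exists_eq_prod_sub_pow_mul hg S fun ρ _ ↦
    analyticOrderAt_ne_top_of_ne_zero hg (hne _ (left_mem_rectBoundary hab hc)) ρ
  set n := analyticOrderNatAt g
  have hh₀ : ∀ p ∈ closedRect a b c, h p ≠ 0 := by
    intro p hp hhp
    have hgp : g p = 0 := by rw [hfac, hhp, mul_zero]
    have hpb : p ∉ rectBoundary a b c := fun hpb ↦ hne p hpb hgp
    simp only [rectBoundary, mem_ofPred_eq, not_and, not_or] at hpb
    obtain ⟨hpa, hpb, hpc⟩ := hpb hp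
    exact hhS p ((hS p).2 ⟨⟨hp.1.1.lt_of_ne' hpa, hp.1.2.lt_of_ne hpb⟩, hp.2.lt_of_ne hpc, hgp⟩) hhp
  have hlog : ∀ p ∈ rectBoundary a b c,
      logDeriv h p = logDeriv g p - ∑ ρ ∈ S, (n ρ : ℂ) * (1 / (p - ρ)) := by
    intro p hp
    rw [funext hfac, logDeriv_prod_sub_pow_mul n hh (hfac p ▸ hne p hp), add_sub_cancel_left]
  have hcauchy := sub_add_sub_eq_zero_of_hasDerivAt (F := logDeriv h)
    (L₁ := fun p ↦ L₁ p - ∑ ρ ∈ S, (n ρ : ℂ) * Complex.log (I * (p - ρ)))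
    (L₂ := fun p ↦ L₂ p - ∑ ρ ∈ S, (n ρ : ℂ) * Complex.log (-I * (p - ρ))) hab hc
    (fun p hp ↦ ((hh.deriv p).div (hh p) (hh₀ p hp)).differentiableWithinAt)
    (fun p hp him ↦ hlog p hp ▸ (h₁ p hp him).sub (HasDerivAt.fun_sum fun ρ hρ ↦
      (hasDerivAt_log_const_mul_sub (I_mul_sub_mem_slitPlane ((hS ρ).1 hρ).1 ((hS ρ).1 hρ).2.1 hp
        him)).const_mul _))
    (fun p hp him ↦ hlog p hp ▸ (h₂ p hp him).sub (HasDerivAt.fun_sum fun ρ hρ ↦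
      (hasDerivAt_log_const_mul_sub (neg_I_mul_sub_mem_slitPlane ((hS ρ).1 hρ).1
        ((hS ρ).1 hρ).2.1 hp him)).const_mul _))
  have hwinding : 2 * π * I * ∑ ρ ∈ S, (n ρ : ℂ) =
      ∑ ρ ∈ S, (n ρ : ℂ) * Complex.log (I * (b - ρ)) -
        ∑ ρ ∈ S, (n ρ : ℂ) * Complex.log (I * (a - ρ)) +
      (∑ ρ ∈ S, (n ρ : ℂ) * Complex.log (-I * (a - ρ)) -
        ∑ ρ ∈ S, (n ρ : ℂ) * Complex.log (-I * (b - ρ))) := by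
    simp_rw [Finset.mul_sum, ← Finset.sum_sub_distrib, ← Finset.sum_add_distrib]
    refine Finset.sum_congr rfl fun ρ hρ ↦ ?_
    have hturn := log_I_mul_sub_winding (a := a) (b := b) ((hS ρ).1 hρ).1.1 ((hS ρ).1 hρ).1.2
    linear_combination -(n ρ : ℂ) * hturn
  linear_combination hcauchy - hwinding

end ArgumentPrinciple

/-! ### Logarithms of the two parts -/

section ModelLog

lemma abs_log_im_le {z : ℂ} (hz : 0 ≤ z.re) : |(Complex.log z).im| ≤ π / 2 := by
  rw [Complex.log_im]
  exact Complex.abs_arg_le_pi_div_two_iff.2 hz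

lemma re_add_I_div_pos {K : ℂ} (hK : K ≠ 0) (him : 0 ≤ K.im) : 0 < ((K + I) / K).re := by
  rw [add_div, div_self hK, Complex.add_re, Complex.one_re, Complex.div_re]
  simp only [Complex.I_re, Complex.I_im, zero_mul, zero_div, one_mul, zero_add]
  linarith [div_nonneg him (Complex.normSq_nonneg K)]

lemma re_sub_I_div_pos {K : ℂ} (hK : K ≠ 0) (him : K.im ≤ 0) : 0 < ((K - I) / K).re := by
  rw [sub_div, div_self hK, Complex.sub_re, Complex.one_re, Complex.div_re]
  simp only [Complex.I_re, Complex.I_im, zero_mul, zero_div, one_mul, zero_add]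
  linarith [div_nonpos_of_nonpos_of_nonneg him (Complex.normSq_nonneg K)]

lemma re_one_add_pos {b : ℂ} (hb : ‖b‖ ≤ 1) (hne : 1 + b ≠ 0) : 0 < (1 + b).re := by
  have hsq : b.re ^ 2 + b.im ^ 2 ≤ 1 := by
    have := pow_le_one₀ (n := 2) (norm_nonneg b) hb
    rw [← Complex.normSq_eq_norm_sq, Complex.normSq_apply] at this
    nlinarith
  rw [Complex.add_re, Complex.one_re]
  by_contra! hre
  have hre_eq : b.re = -1 := by nlinarith [sq_nonneg b.im, sq_nonneg (b.re + 1)]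
  have him_eq : b.im = 0 := by
    rw [hre_eq] at hsq
    exact pow_eq_zero_iff two_ne_zero |>.1 (by nlinarith [sq_nonneg b.im])
  exact hne (Complex.ext (by simp [hre_eq]) (by simp [him_eq]))

lemma hasDerivAt_of_exp_eventuallyEq {L g : ℂ → ℂ} {p : ℂ} (hL : DifferentiableAt ℂ L p)
    (hexp : ∀ᶠ q in 𝓝 p, Complex.exp (L q) = g q) : HasDerivAt L (logDeriv g p) p := by
  have hderiv : deriv g p = Complex.exp (L p) * deriv L p :=
    (EventuallyEq.deriv_eq hexp).symm.trans hL.hasDerivAt.cexp.deriv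
  rw [logDeriv_apply, hderiv, ← hexp.self_of_nhds,
    mul_div_cancel_left₀ _ (Complex.exp_ne_zero _)]
  exact hL.hasDerivAt

/-- A logarithm of `g`, obtained from a logarithm `ℓ` of a model `m` of `g` by adding the principal
logarithm of `g / m`. -/
def correctedLog (ℓ m g : ℂ → ℂ) (p : ℂ) : ℂ := ℓ p + Complex.log (g p / m p)

lemma abs_correctedLog_im_sub_le {ℓ m g : ℂ → ℂ} {p : ℂ} (hpos : 0 < (g p / m p).re) :
    |(correctedLog ℓ m g p).im - (ℓ p).im| ≤ π / 2 := by
  rw [correctedLog, Complex.add_im, add_sub_cancel_left]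
  exact abs_log_im_le hpos.le

lemma hasDerivAt_correctedLog {ℓ m g : ℂ → ℂ} {p : ℂ} (hℓ : DifferentiableAt ℂ ℓ p)
    (hexp : ∀ᶠ q in 𝓝 p, Complex.exp (ℓ q) = m q) (hg : DifferentiableAt ℂ g p)
    (hpos : 0 < (g p / m p).re) :
    HasDerivAt (correctedLog ℓ m g) (logDeriv g p) p := by
  have hm : DifferentiableAt ℂ m p := hℓ.cexp.congr_of_eventuallyEq (EventuallyEq.symm hexp)
  have hslit : g p / m p ∈ Complex.slitPlane := Or.inl hpos
  have hne := Complex.slitPlane_ne_zero hslit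
  have hdiv : DifferentiableAt ℂ (fun q ↦ g q / m q) p := hg.div hm (div_ne_zero_iff.1 hne).2
  refine hasDerivAt_of_exp_eventuallyEq (hℓ.add (hdiv.clog hslit)) ?_
  filter_upwards [hexp, hdiv.continuousAt.eventually_ne hne] with q hq hq₀
  rw [correctedLog, Complex.exp_add, hq, Complex.exp_log hq₀,
    mul_div_cancel₀ _ (div_ne_zero_iff.1 hq₀).2]

lemma hasDerivAt_correctedLog_comp_exp {ℓ m g : ℂ → ℂ} {p : ℂ}
    (hℓ : DifferentiableAt ℂ ℓ (Complex.exp p) ∧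
      ∀ᶠ k in 𝓝 (Complex.exp p), Complex.exp (ℓ k) = m k)
    (hg : DifferentiableAt ℂ g p) (hpos : 0 < (g p / m (Complex.exp p)).re) :
    HasDerivAt (correctedLog (fun q ↦ ℓ (Complex.exp q)) (fun q ↦ m (Complex.exp q)) g)
      (logDeriv g p) p :=
  hasDerivAt_correctedLog (hℓ.1.comp p Complex.differentiableAt_exp)
    (Complex.continuous_exp.continuousAt.eventually hℓ.2) hg hpos

/-- A logarithm of `modelSteady κ η k`, for `k` in the closed upper half-plane. -/
def steadyLog (κ η : ℝ) (k : ℂ) : ℂ :=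
  2 * Complex.log ((2 * η * k + I) / (2 * η * k)) +
    Complex.log (1 + (shiftPhase κ k / (2 * η * k + I)) ^ 2)

/-- A logarithm of `fastPhase f k * modelOsc κ η k`, for `k` in the closed lower half-plane. -/
def oscLog (κ η f : ℝ) (k : ℂ) : ℂ :=
  (4 / 3 * k ^ 3 / f + 2 * κ * k) * I - Complex.log k - Real.log (2 * η) +
    Complex.log ((2 * η * k - I) / (2 * η * k)) +
    Complex.log (1 + (2 * η * k + I) / (shiftPhase κ k ^ 2 * (2 * η * k - I)))

variable {κ η f : ℝ} {k : ℂ}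

lemma modelSteady_eq_mul (hη : η ≠ 0) (hk : k ≠ 0) (hKI : 2 * η * k + I ≠ 0) :
    modelSteady κ η k = ((2 * η * k + I) / (2 * η * k)) ^ 2 *
      (1 + (shiftPhase κ k / (2 * η * k + I)) ^ 2) := by
  rw [modelSteady, steadyPart_one (two_mul_mul_ne_zero hη hk)]
  field_simp

lemma modelOsc_eq_mul (hη : η ≠ 0) (hk : k ≠ 0) (hKI : 2 * η * k - I ≠ 0) :
    modelOsc κ η k = shiftPhase κ k / (2 * η * k) * ((2 * η * k - I) / (2 * η * k)) *
      (1 + (2 * η * k + I) / (shiftPhase κ k ^ 2 * (2 * η * k - I))) := by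
  have hK := two_mul_mul_ne_zero hη hk
  have hΛ : shiftPhase κ k ≠ 0 := Complex.exp_ne_zero _
  rw [modelOsc, oscPart_one hK]
  field_simp
  ring

lemma one_le_norm_add_I {K : ℂ} (him : 0 ≤ K.im) : 1 ≤ ‖K + I‖ :=
  calc (1 : ℝ) ≤ (K + I).im := by simpa using him
    _ ≤ ‖K + I‖ := Complex.im_le_norm _

lemma re_steadyFactor_pos (hκ : 0 ≤ κ) (hη : 0 < η) (hk : k ≠ 0) (him : 0 ≤ k.im) :
    0 < (1 + (shiftPhase κ k / (2 * η * k + I)) ^ 2).re := by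
  have hKim : 0 ≤ (2 * η * k).im := by rw [im_two_mul_mul]; positivity
  have hnorm := one_le_norm_add_I hKim
  have hKI : 2 * η * k + I ≠ 0 := norm_pos_iff.1 (by linarith)
  have hne : modelSteady κ η k ≠ 0 :=
    norm_pos_iff.1 (one_pos.trans_le (one_le_norm_modelSteady hκ hη hk him))
  rw [modelSteady_eq_mul hη.ne' hk hKI] at hne
  refine re_one_add_pos ?_ (right_ne_zero_of_mul hne)
  rw [norm_pow, norm_div]
  exact pow_le_one₀ (by positivity)
    (div_le_one_of_le₀ ((norm_shiftPhase_le_one hκ him).trans hnorm) (norm_nonneg _))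

lemma sub_I_ne_zero {K : ℂ} (him : K.im ≤ 0) : K - I ≠ 0 := by
  intro h
  have := congrArg Complex.im h
  simp only [Complex.sub_im, Complex.I_im, Complex.zero_im] at this
  linarith

lemma re_oscFactor_pos (hκ : 0 ≤ κ) (hη : 0 < η) (hk : k ≠ 0) (him : k.im ≤ 0)
    (hne : modelOsc κ η k ≠ 0) :
    0 < (1 + (2 * η * k + I) / (shiftPhase κ k ^ 2 * (2 * η * k - I))).re := by
  have hKim : (2 * η * k).im ≤ 0 := by
    rw [im_two_mul_mul]
    exact mul_nonpos_of_nonneg_of_nonpos (by positivity) him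
  rw [modelOsc_eq_mul hη.ne' hk (sub_I_ne_zero hKim)] at hne
  refine re_one_add_pos ?_ (right_ne_zero_of_mul hne)
  rw [norm_div, norm_mul, norm_pow]
  refine div_le_one_of_le₀ ((norm_add_I_le_norm_sub_I hKim).trans ?_) (by positivity)
  exact le_mul_of_one_le_left (norm_nonneg _) (one_le_pow₀ (one_le_norm_shiftPhase hκ him))

lemma differentiableAt_steadyLog_and_eventually_exp_eq (hκ : 0 ≤ κ) (hη : 0 < η) (hk : k ≠ 0)
    (him : 0 ≤ k.im) : DifferentiableAt ℂ (steadyLog κ η) k ∧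
      ∀ᶠ q in 𝓝 k, Complex.exp (steadyLog κ η q) = modelSteady κ η q := by
  have hKim : 0 ≤ (2 * η * k).im := by rw [im_two_mul_mul]; positivity
  have hK := two_mul_mul_ne_zero hη.ne' hk
  have hKI : 2 * η * k + I ≠ 0 := norm_pos_iff.1 (one_pos.trans_le (one_le_norm_add_I hKim))
  have hu : (2 * η * k + I) / (2 * η * k) ∈ Complex.slitPlane := Or.inl (re_add_I_div_pos hK hKim)
  have hv : 1 + (shiftPhase κ k / (2 * η * k + I)) ^ 2 ∈ Complex.slitPlane :=
    Or.inl (re_steadyFactor_pos hκ hη hk him)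
  have hdu : DifferentiableAt ℂ (fun q : ℂ ↦ (2 * η * q + I) / (2 * η * q)) k := by
    fun_prop (disch := exact hK)
  have hdv : DifferentiableAt ℂ
      (fun q : ℂ ↦ 1 + (shiftPhase κ q / (2 * η * q + I)) ^ 2) k := by
    unfold shiftPhase
    fun_prop (disch := exact hKI)
  refine ⟨((hdu.clog hu).const_mul 2).add (hdv.clog hv), ?_⟩
  filter_upwards [eventually_ne_nhds hk,
    hdu.continuousAt.eventually_ne (Complex.slitPlane_ne_zero hu),
    hdv.continuousAt.eventually_ne (Complex.slitPlane_ne_zero hv)] with q hq hqu hqv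
  rw [steadyLog, Complex.exp_add, two_mul, Complex.exp_add, Complex.exp_log hqu,
    Complex.exp_log hqv, ← sq, modelSteady_eq_mul hη.ne' hq (div_ne_zero_iff.1 hqu).1]

lemma differentiableAt_oscLog_and_eventually_exp_eq (hκ : 0 ≤ κ) (hη : 0 < η)
    (hk : k ∈ Complex.slitPlane) (him : k.im ≤ 0) (hne : modelOsc κ η k ≠ 0) :
    DifferentiableAt ℂ (oscLog κ η f) k ∧
      ∀ᶠ q in 𝓝 k, Complex.exp (oscLog κ η f q) = fastPhase f q * modelOsc κ η q := by
  have hk₀ := Complex.slitPlane_ne_zero hk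
  have hKim : (2 * η * k).im ≤ 0 := by
    rw [im_two_mul_mul]
    exact mul_nonpos_of_nonneg_of_nonpos (by positivity) him
  have hK := two_mul_mul_ne_zero hη.ne' hk₀
  have hKI := sub_I_ne_zero hKim
  have hΛKI : shiftPhase κ k ^ 2 * (2 * η * k - I) ≠ 0 :=
    mul_ne_zero (pow_ne_zero _ (Complex.exp_ne_zero _)) hKI
  have hu : (2 * η * k - I) / (2 * η * k) ∈ Complex.slitPlane := Or.inl (re_sub_I_div_pos hK hKim)
  have hv : 1 + (2 * η * k + I) / (shiftPhase κ k ^ 2 * (2 * η * k - I)) ∈ Complex.slitPlane :=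
    Or.inl (re_oscFactor_pos hκ hη hk₀ him hne)
  have hdu : DifferentiableAt ℂ (fun q : ℂ ↦ (2 * η * q - I) / (2 * η * q)) k := by
    fun_prop (disch := exact hK)
  have hdv : DifferentiableAt ℂ
      (fun q : ℂ ↦ 1 + (2 * η * q + I) / (shiftPhase κ q ^ 2 * (2 * η * q - I))) k := by
    unfold shiftPhase at hΛKI ⊢
    fun_prop (disch := exact hΛKI)
  refine ⟨((DifferentiableAt.sub_const ((by fun_prop : DifferentiableAt ℂ
    (fun q : ℂ ↦ (4 / 3 * q ^ 3 / f + 2 * κ * q) * I) k).sub (differentiableAt_id.clog hk)) _).add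
      (hdu.clog hu)).add (hdv.clog hv), ?_⟩
  filter_upwards [eventually_ne_nhds hk₀,
    hdu.continuousAt.eventually_ne (Complex.slitPlane_ne_zero hu),
    hdv.continuousAt.eventually_ne (Complex.slitPlane_ne_zero hv)] with q hq hqu hqv
  rw [oscLog, Complex.exp_add, Complex.exp_add, Complex.exp_sub, Complex.exp_sub, add_mul,
    Complex.exp_add, Complex.exp_log hq, Complex.exp_log hqu, Complex.exp_log hqv,
    ← Complex.ofReal_exp, Real.exp_log (by positivity),
    modelOsc_eq_mul hη.ne' hq (div_ne_zero_iff.1 hqu).1, fastPhase, shiftPhase]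
  push_cast
  ring

lemma abs_steadyLog_im_le (hκ : 0 ≤ κ) (hη : 0 < η) (hk : k ≠ 0) (him : 0 ≤ k.im) :
    |(steadyLog κ η k).im| ≤ 3 * π / 2 := by
  have hKim : 0 ≤ (2 * η * k).im := by rw [im_two_mul_mul]; positivity
  have hu := abs_le.1 (abs_log_im_le (re_add_I_div_pos (two_mul_mul_ne_zero hη.ne' hk) hKim).le)
  have hv := abs_le.1 (abs_log_im_le (re_steadyFactor_pos hκ hη hk him).le)
  rw [steadyLog, Complex.add_im, two_mul, Complex.add_im, abs_le]
  constructor <;> linarith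

lemma abs_oscLog_im_sub_le {r : ℝ} (hκ : 0 ≤ κ) (hη : 0 < η) (hr : 0 < r)
    (hne : modelOsc κ η r ≠ 0) :
    |(oscLog κ η f r).im - (4 / 3 * r ^ 3 / f + 2 * κ * r)| ≤ π := by
  have hr₀ : (r : ℂ) ≠ 0 := Complex.ofReal_ne_zero.2 hr.ne'
  have him : (r : ℂ).im = 0 := Complex.ofReal_im r
  have hK := two_mul_mul_ne_zero hη.ne' hr₀
  have hu := abs_le.1 (abs_log_im_le (re_sub_I_div_pos hK (by simp)).le)
  have hv := abs_le.1 (abs_log_im_le (re_oscFactor_pos hκ hη hr₀ him.le hne).le)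
  have hphase : ((4 / 3 * (r : ℂ) ^ 3 / f + 2 * κ * r) * I - Complex.log r - Real.log (2 * η)).im =
      4 / 3 * r ^ 3 / f + 2 * κ * r := by
    rw [← Complex.ofReal_log hr.le, show (4 / 3 * (r : ℂ) ^ 3 / f + 2 * κ * r) =
      ((4 / 3 * r ^ 3 / f + 2 * κ * r : ℝ) : ℂ) by push_cast; ring]
    simp only [Complex.sub_im, Complex.im_ofReal_mul, Complex.ofReal_im,
      Complex.I_im, mul_one, sub_zero]
  rw [oscLog, Complex.add_im, Complex.add_im, hphase, abs_le]
  constructor <;> linarith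

end ModelLog

/-! ### Counting zeros in a half-annulus -/

section HalfAnnulus

lemma finite_zeros_norm_lt {g : ℂ → ℂ} (hg : Differentiable ℂ g) {w : ℂ} (hw : g w ≠ 0) (R : ℝ) :
    {z | ‖z‖ < R ∧ g z = 0}.Finite := by
  have hcodisc := codiscreteWithin_mono (subset_univ (Metric.closedBall 0 R))
    (AnalyticOnNhd.preimage_zero_mem_codiscrete (fun z _ ↦ hg.analyticAt z) hw)
  refine ((isCompact_closedBall 0 R).finite_sdiff_of_mem_codiscreteWithin hcodisc).subset ?_
  exact fun z hz ↦ ⟨mem_closedBall_zero_iff.2 hz.1.le, fun hz' ↦ hz' hz.2⟩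

lemma vanishingOrder_eq_analyticOrderNatAt {g : ℂ → ℂ} {z : ℂ} (hg : AnalyticAt ℂ g z)
    (hz : analyticOrderAt g z ≠ ⊤) : vanishingOrder g z = analyticOrderNatAt g z := by
  obtain ⟨hbelow, hat⟩ := (analyticOrderAt_eq_nat_iff_iteratedDeriv_eq_zero hg).1
    (Nat.cast_analyticOrderNatAt hz).symm
  refine le_antisymm (Nat.sInf_le hat) (le_csInf ⟨_, hat⟩ fun n hn ↦ ?_)
  by_contra! hlt
  exact hn (hbelow n hlt)

lemma analyticOrderNatAt_comp_exp_sq (g : ℂ → ℂ) (p : ℂ) :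
    analyticOrderNatAt (fun q ↦ g (Complex.exp q ^ 2)) p =
      analyticOrderNatAt g (Complex.exp p ^ 2) := by
  have hsq : Differentiable ℂ fun q ↦ Complex.exp q ^ 2 := by fun_prop
  have hderiv : deriv (fun q ↦ Complex.exp q ^ 2) p ≠ 0 := by
    rw [((Complex.hasDerivAt_exp p).fun_pow 2).deriv]
    simp
  exact congrArg ENat.toNat (analyticOrderAt_comp_of_deriv_ne_zero (hsq.analyticAt p) hderiv)

lemma exp_log_half_sq {z : ℂ} (hz : z ≠ 0) : Complex.exp (Complex.log z / 2) ^ 2 = z := by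
  rw [← Complex.exp_nat_mul, Nat.cast_ofNat, mul_div_cancel₀ _ two_ne_zero, Complex.exp_log hz]

lemma log_exp_sq_half {ρ : ℂ} (hρ : |ρ.im| < π / 4) : Complex.log (Complex.exp ρ ^ 2) / 2 = ρ := by
  have him : (2 * ρ).im = 2 * ρ.im := by simp
  have := abs_lt.1 hρ
  rw [← Complex.exp_nat_mul, Nat.cast_ofNat, Complex.log_exp (by linarith) (by linarith),
    mul_div_cancel_left₀ _ two_ne_zero]

lemma log_half_re (z : ℂ) : (Complex.log z / 2).re = Real.log ‖z‖ / 2 := by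
  rw [Complex.div_ofNat_re, Complex.log_re]

lemma abs_log_half_im_lt {z : ℂ} (hz : 0 < z.re) : |(Complex.log z / 2).im| < π / 4 := by
  have := Complex.abs_arg_lt_pi_div_two_iff.2 (Or.inl hz)
  rw [Complex.div_ofNat_im, Complex.log_im, abs_div, abs_two]
  linarith

lemma exp_sq_re_pos {ρ : ℂ} (hρ : |ρ.im| < π / 4) : 0 < (Complex.exp ρ ^ 2).re := by
  have := abs_lt.1 hρ
  have him : (2 * ρ).im = 2 * ρ.im := by simp
  rw [← Complex.exp_nat_mul, Nat.cast_ofNat, Complex.exp_re, him]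
  exact mul_pos (Real.exp_pos _) (Real.cos_pos_of_mem_Ioo ⟨by linarith, by linarith⟩)

variable {D L₁ L₂ : ℂ → ℂ} {a b : ℝ}

lemma mem_image_log_half_iff (ha : 0 < a) (hb : 0 < b)
    (hfin : {z : ℂ | 0 < z.re ∧ a ^ 2 < ‖z‖ ∧ ‖z‖ < b ^ 2 ∧ D z = 0}.Finite) (ρ : ℂ) :
    ρ ∈ hfin.toFinset.image (fun z ↦ Complex.log z / 2) ↔
      ρ.re ∈ Ioo (Real.log a) (Real.log b) ∧ |ρ.im| < π / 4 ∧ D (Complex.exp ρ ^ 2) = 0 := by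
  simp only [Finset.mem_image, Finite.mem_toFinset, mem_ofPred_eq]
  have hlog {r : ℝ} : Real.log (r ^ 2) = 2 * Real.log r := by simp
  constructor
  · rintro ⟨z, ⟨hre, haz, hzb, hz⟩, rfl⟩
    have hz₀ : z ≠ 0 := fun h ↦ by simp [h] at hre
    have hlo := Real.log_lt_log (by positivity) haz
    have hhi := Real.log_lt_log (norm_pos_iff.2 hz₀) hzb
    rw [hlog] at hlo hhi
    rw [log_half_re, exp_log_half_sq hz₀]
    exact ⟨⟨by linarith, by linarith⟩, abs_log_half_im_lt hre, hz⟩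
  · rintro ⟨⟨hlo, hhi⟩, him, hz⟩
    refine ⟨Complex.exp ρ ^ 2, ⟨exp_sq_re_pos him, ?_, ?_, hz⟩, log_exp_sq_half him⟩ <;>
      rw [norm_pow, Complex.norm_exp]
    · exact pow_lt_pow_left₀ ((Real.log_lt_iff_lt_exp ha).1 hlo) ha.le two_ne_zero
    · exact pow_lt_pow_left₀ ((Real.lt_log_iff_exp_lt hb).1 hhi) (Real.exp_pos _).le two_ne_zero

lemma sum_image_log_half_analyticOrderNatAt (hD : Differentiable ℂ D) {w : ℂ} (hw : D w ≠ 0)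
    {Z : Finset ℂ} (hZ : ∀ z ∈ Z, z ≠ 0) :
    ∑ ρ ∈ Z.image (fun z ↦ Complex.log z / 2),
      analyticOrderNatAt (fun q ↦ D (Complex.exp q ^ 2)) ρ = ∑ z ∈ Z, vanishingOrder D z := by
  rw [Finset.sum_image]
  · refine Finset.sum_congr rfl fun z hz ↦ ?_
    rw [analyticOrderNatAt_comp_exp_sq, exp_log_half_sq (hZ z hz),
      vanishingOrder_eq_analyticOrderNatAt (hD.analyticAt z)
        (analyticOrderAt_ne_top_of_ne_zero hD hw z)]
  · intro z hz w hw hzw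
    rw [← exp_log_half_sq (hZ z hz), ← exp_log_half_sq (hZ w hw)]
    exact congrArg (fun u ↦ Complex.exp u ^ 2) hzw

/-- The argument principle in the coordinate `p = log z / 2`, which maps the half-annulus to a
rectangle. -/
theorem two_pi_I_mul_sum_vanishingOrder (hD : Differentiable ℂ D) (ha : 0 < a) (hab : a ≤ b)
    (hne : ∀ p ∈ rectBoundary (Real.log a) (Real.log b) (π / 4), D (Complex.exp p ^ 2) ≠ 0)
    (h₁ : ∀ p ∈ rectBoundary (Real.log a) (Real.log b) (π / 4), p.im ≤ 0 →
      HasDerivAt L₁ (logDeriv (fun q ↦ D (Complex.exp q ^ 2)) p) p)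
    (h₂ : ∀ p ∈ rectBoundary (Real.log a) (Real.log b) (π / 4), 0 ≤ p.im →
      HasDerivAt L₂ (logDeriv (fun q ↦ D (Complex.exp q ^ 2)) p) p)
    (hfin : {z : ℂ | 0 < z.re ∧ a ^ 2 < ‖z‖ ∧ ‖z‖ < b ^ 2 ∧ D z = 0}.Finite) :
    L₁ (Real.log b) - L₁ (Real.log a) + (L₂ (Real.log a) - L₂ (Real.log b)) =
      2 * π * I * ∑ z ∈ hfin.toFinset, (vanishingOrder D z : ℂ) := by
  have hlog := Real.log_le_log ha hab
  have hπ : 0 ≤ π / 4 := by positivity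
  have hw := hne _ (left_mem_rectBoundary hlog hπ)
  rw [two_pi_I_mul_sum_analyticOrderNatAt hlog hπ (hD.comp (by fun_prop)) hne h₁ h₂
    (mem_image_log_half_iff ha (ha.trans_le hab) hfin), ← Nat.cast_sum, ← Nat.cast_sum]
  congr 2
  refine sum_image_log_half_analyticOrderNatAt hD hw fun z hz h₀ ↦ ?_
  simp [h₀] at hz

end HalfAnnulus

section Resonances

variable {κ η f : ℝ}

lemma differentiable_Df (κ η f : ℝ) : Differentiable ℂ (Df κ η f) := by
  have := differentiable_Ai
  unfold Df alphaP alphaM betaP betaM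
  fun_prop

lemma mem_rectBoundary_log {a b c : ℝ} (ha : 0 < a) (hb : 0 < b) {p : ℂ}
    (hp : p ∈ rectBoundary (Real.log a) (Real.log b) c) :
    a ≤ ‖Complex.exp p‖ ∧ |p.im| ≤ c ∧
      (‖Complex.exp p‖ = a ∨ ‖Complex.exp p‖ = b ∨ |p.im| = c) := by
  obtain ⟨⟨⟨hre, -⟩, him⟩, hside⟩ := hp
  rw [Complex.norm_exp]
  refine ⟨(Real.log_le_iff_le_exp ha).1 hre, him, ?_⟩
  refine hside.imp (fun h ↦ ?_) (Or.imp_left fun h ↦ ?_)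
  · rw [h, Real.exp_log ha]
  · rw [h, Real.exp_log hb]

lemma re_Df_div_model_pos_of_mem_rectBoundary (hκ : 0 < κ) (hη : 0 < η) :
    ∃ M > 0, ∀ t > 0, M * t ≤ 1 → ∀ a b : ℝ, t ≤ a → a ≤ b →
      GoodRadius κ η t a → GoodRadius κ η t b →
      ∀ p ∈ rectBoundary (Real.log a) (Real.log b) (π / 4),
        (0 ≤ p.im →
          0 < (Df κ η (t ^ 100) (Complex.exp p ^ 2) / modelSteady κ η (Complex.exp p)).re) ∧
        (p.im ≤ 0 → 0 < (Df κ η (t ^ 100) (Complex.exp p ^ 2) /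
          (fastPhase (t ^ 100) (Complex.exp p) * modelOsc κ η (Complex.exp p))).re) := by
  obtain ⟨M, hM, hmodel⟩ := re_Df_div_model_pos hκ hη
  refine ⟨M, hM, fun t ht hMt a b hta hab hga hgb p hp ↦ ?_⟩
  have ha := ht.trans_le hta
  obtain ⟨hnorm, him, hside⟩ := mem_rectBoundary_log ha (ha.trans_le hab) hp
  refine hmodel t ht hMt p him (hta.trans hnorm) ?_
  rcases hside with h | h | h
  exacts [Or.inl (h ▸ hga), Or.inl (h ▸ hgb), Or.inr h]

lemma exp_mem_slitPlane {p : ℂ} (hp : |p.im| ≤ π / 4) : Complex.exp p ∈ Complex.slitPlane := by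
  have := abs_le.1 hp
  refine Or.inl ?_
  rw [Complex.exp_re]
  exact mul_pos (Real.exp_pos _)
    (Real.cos_pos_of_mem_Ioo ⟨by linarith [Real.pi_pos], by linarith [Real.pi_pos]⟩)

lemma ne_zero_of_re_div_pos {z w : ℂ} (h : 0 < (z / w).re) : z ≠ 0 ∧ w ≠ 0 :=
  div_ne_zero_iff.1 (Complex.slitPlane_ne_zero (Or.inl h))

/-- The branch of `log D_f(e^{2p})` used where `e^p` is in the closed upper half-plane. -/
def upperLog (κ η f : ℝ) : ℂ → ℂ :=
  correctedLog (fun p ↦ steadyLog κ η (Complex.exp p)) (fun p ↦ modelSteady κ η (Complex.exp p))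
    fun p ↦ Df κ η f (Complex.exp p ^ 2)

/-- The branch of `log D_f(e^{2p})` used where `e^p` is in the closed lower half-plane. -/
def lowerLog (κ η f : ℝ) : ℂ → ℂ :=
  correctedLog (fun p ↦ oscLog κ η f (Complex.exp p))
    (fun p ↦ fastPhase f (Complex.exp p) * modelOsc κ η (Complex.exp p))
    fun p ↦ Df κ η f (Complex.exp p ^ 2)

lemma hasDerivAt_upperLog {p : ℂ} (hκ : 0 ≤ κ) (hη : 0 < η) (him : 0 ≤ (Complex.exp p).im)
    (hpos : 0 < (Df κ η f (Complex.exp p ^ 2) / modelSteady κ η (Complex.exp p)).re) :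
    HasDerivAt (upperLog κ η f) (logDeriv (fun q ↦ Df κ η f (Complex.exp q ^ 2)) p) p :=
  hasDerivAt_correctedLog_comp_exp
    (differentiableAt_steadyLog_and_eventually_exp_eq hκ hη (Complex.exp_ne_zero p) him)
    ((differentiable_Df κ η f).comp (by fun_prop) p) hpos

lemma hasDerivAt_lowerLog {p : ℂ} (hκ : 0 ≤ κ) (hη : 0 < η)
    (hp : Complex.exp p ∈ Complex.slitPlane) (him : (Complex.exp p).im ≤ 0)
    (hpos : 0 < (Df κ η f (Complex.exp p ^ 2) /
      (fastPhase f (Complex.exp p) * modelOsc κ η (Complex.exp p))).re) :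
    HasDerivAt (lowerLog κ η f) (logDeriv (fun q ↦ Df κ η f (Complex.exp q ^ 2)) p) p :=
  hasDerivAt_correctedLog_comp_exp (m := fun k ↦ fastPhase f k * modelOsc κ η k)
    (differentiableAt_oscLog_and_eventually_exp_eq hκ hη hp him
      (right_ne_zero_of_mul (ne_zero_of_re_div_pos hpos).2))
    ((differentiable_Df κ η f).comp (by fun_prop) p) hpos

lemma abs_upperLog_im_le {p : ℂ} (hκ : 0 ≤ κ) (hη : 0 < η) (him : 0 ≤ (Complex.exp p).im)
    (hpos : 0 < (Df κ η f (Complex.exp p ^ 2) / modelSteady κ η (Complex.exp p)).re) :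
    |(upperLog κ η f p).im| ≤ 2 * π := by
  have hlog := abs_le.1 (abs_steadyLog_im_le hκ hη (Complex.exp_ne_zero p) him)
  have hcorr := abs_le.1 (abs_correctedLog_im_sub_le
    (ℓ := fun q ↦ steadyLog κ η (Complex.exp q)) (m := fun q ↦ modelSteady κ η (Complex.exp q))
    (g := fun q ↦ Df κ η f (Complex.exp q ^ 2)) hpos)
  rw [upperLog, abs_le]
  constructor <;> linarith

lemma abs_lowerLog_im_sub_le {r : ℝ} (hκ : 0 ≤ κ) (hη : 0 < η) (hr : 0 < r)
    (hpos : 0 < (Df κ η f (Complex.exp (Real.log r) ^ 2) /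
      (fastPhase f (Complex.exp (Real.log r)) * modelOsc κ η (Complex.exp (Real.log r)))).re) :
    |(lowerLog κ η f (Real.log r)).im - (4 / 3 * r ^ 3 / f + 2 * κ * r)| ≤ 3 * π / 2 := by
  have hcorr := abs_le.1 (abs_correctedLog_im_sub_le
    (ℓ := fun q ↦ oscLog κ η f (Complex.exp q))
    (m := fun q ↦ fastPhase f (Complex.exp q) * modelOsc κ η (Complex.exp q))
    (g := fun q ↦ Df κ η f (Complex.exp q ^ 2)) hpos)
  have hne := right_ne_zero_of_mul (ne_zero_of_re_div_pos hpos).2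
  have hexp : Complex.exp (Real.log r) = r := by rw [← Complex.ofReal_exp, Real.exp_log hr]
  rw [hexp] at hne hcorr
  have hlog := abs_le.1 (abs_oscLog_im_sub_le (f := f) hκ hη hr hne)
  rw [lowerLog, abs_le]
  constructor <;> linarith

lemma abs_two_pi_mul_sum_vanishingOrder_sub_le {a b : ℝ} (hκ : 0 ≤ κ) (hη : 0 < η) (ha : 0 < a)
    (hab : a ≤ b)
    (hsteady : ∀ p ∈ rectBoundary (Real.log a) (Real.log b) (π / 4), 0 ≤ p.im →
      0 < (Df κ η f (Complex.exp p ^ 2) / modelSteady κ η (Complex.exp p)).re)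
    (hosc : ∀ p ∈ rectBoundary (Real.log a) (Real.log b) (π / 4), p.im ≤ 0 →
      0 < (Df κ η f (Complex.exp p ^ 2) /
        (fastPhase f (Complex.exp p) * modelOsc κ η (Complex.exp p))).re)
    (hfin : {z : ℂ | 0 < z.re ∧ a ^ 2 < ‖z‖ ∧ ‖z‖ < b ^ 2 ∧ Df κ η f z = 0}.Finite) :
    |2 * π * (∑ z ∈ hfin.toFinset, (vanishingOrder (Df κ η f) z : ℝ)) -
      (4 / 3 * b ^ 3 / f + 2 * κ * b - (4 / 3 * a ^ 3 / f + 2 * κ * a))| ≤ 7 * π := by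
  have hlog := Real.log_le_log ha hab
  have hcorner_a := left_mem_rectBoundary (c := π / 4) hlog (by positivity)
  have hcorner_b := right_mem_rectBoundary (c := π / 4) hlog (by positivity)
  have hcount := two_pi_I_mul_sum_vanishingOrder (differentiable_Df κ η f) ha hab
    (fun p hp ↦ (le_total 0 p.im).elim
      (fun h ↦ (ne_zero_of_re_div_pos (hsteady p hp h)).1)
      (fun h ↦ (ne_zero_of_re_div_pos (hosc p hp h)).1))
    (fun p hp h ↦ hasDerivAt_lowerLog hκ hη (exp_mem_slitPlane hp.1.2)
      (exp_im_nonpos hp.1.2 h) (hosc p hp h))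
    (fun p hp h ↦ hasDerivAt_upperLog hκ hη (exp_im_nonneg hp.1.2 h) (hsteady p hp h)) hfin
  have hreal (r : ℝ) : (r : ℂ).im = 0 := Complex.ofReal_im r
  have hupper {r : ℝ} (hr : (r : ℂ) ∈ rectBoundary (Real.log a) (Real.log b) (π / 4)) :=
    abs_le.1 (abs_upperLog_im_le hκ hη (exp_im_nonneg hr.1.2 (hreal r).ge)
      (hsteady _ hr (hreal r).ge))
  have := hupper hcorner_a
  have := hupper hcorner_b
  have := abs_le.1 (abs_lowerLog_im_sub_le hκ hη ha (hosc _ hcorner_a (hreal _).le))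
  have := abs_le.1
    (abs_lowerLog_im_sub_le hκ hη (ha.trans_le hab) (hosc _ hcorner_b (hreal _).le))
  have him := congrArg Complex.im hcount
  rw [show 2 * π * I * ∑ z ∈ hfin.toFinset, (vanishingOrder (Df κ η f) z : ℂ) =
    ((2 * π * ∑ z ∈ hfin.toFinset, (vanishingOrder (Df κ η f) z : ℝ) : ℝ) : ℂ) * I by
      push_cast; ring, Complex.im_ofReal_mul, Complex.I_im, mul_one] at him
  simp only [Complex.add_im, Complex.sub_im] at him
  rw [abs_le]
  constructor <;> linarith

theorem exists_finite_abs_two_pi_mul_sum_vanishingOrder_sub_le (hκ : 0 < κ) (hη : 0 < η) :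
    ∃ M > 0, ∀ t > 0, M * t ≤ 1 → ∀ a b : ℝ, t ≤ a → a ≤ b →
      GoodRadius κ η t a → GoodRadius κ η t b →
      ∃ hfin : {z : ℂ | 0 < z.re ∧ a ^ 2 < ‖z‖ ∧ ‖z‖ < b ^ 2 ∧ Df κ η (t ^ 100) z = 0}.Finite,
        |2 * π * (∑ z ∈ hfin.toFinset, (vanishingOrder (Df κ η (t ^ 100)) z : ℝ)) -
          (4 / 3 * b ^ 3 / t ^ 100 + 2 * κ * b - (4 / 3 * a ^ 3 / t ^ 100 + 2 * κ * a))| ≤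
          7 * π := by
  obtain ⟨M, hM, hpos⟩ := re_Df_div_model_pos_of_mem_rectBoundary hκ hη
  refine ⟨M, hM, fun t ht hMt a b hta hab hga hgb ↦ ?_⟩
  have ha := ht.trans_le hta
  replace hpos := hpos t ht hMt a b hta hab hga hgb
  have hcorner := left_mem_rectBoundary (c := π / 4) (Real.log_le_log ha hab) (by positivity)
  have hcorner_ne := (ne_zero_of_re_div_pos ((hpos _ hcorner).1 (Complex.ofReal_im _).ge)).1
  have hfin : {z : ℂ | 0 < z.re ∧ a ^ 2 < ‖z‖ ∧ ‖z‖ < b ^ 2 ∧ Df κ η (t ^ 100) z = 0}.Finite :=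
    (finite_zeros_norm_lt (differentiable_Df κ η _) hcorner_ne (b ^ 2)).subset fun z hz ↦ hz.2.2
  exact ⟨hfin, abs_two_pi_mul_sum_vanishingOrder_sub_le hκ.le hη ha hab
    (fun p hp ↦ (hpos p hp).1) (fun p hp ↦ (hpos p hp).2) hfin⟩

end Resonances

section Counting

variable {κ η : ℝ}

lemma abs_cube_sub_cube_le {r s : ℝ} (hs : 0 ≤ s) (hr : |r - s| ≤ s / 100000) :
    |r ^ 3 - s ^ 3| ≤ s ^ 3 / 10000 := by
  obtain ⟨hlo, hhi⟩ := abs_le.1 hr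
  have hs3 : 0 ≤ s ^ 3 := by positivity
  have hlo3 : (s * (1 - 1 / 100000)) ^ 3 ≤ r ^ 3 := pow_le_pow_left₀ (by linarith) (by linarith) 3
  have hhi3 : r ^ 3 ≤ (s * (1 + 1 / 100000)) ^ 3 := pow_le_pow_left₀ (by linarith) (by linarith) 3
  rw [mul_pow] at hlo3 hhi3
  norm_num at hlo3 hhi3
  rw [abs_le]
  constructor <;> linarith

lemma hundred_mul_le_of_lt_sq {t s : ℝ} (ht : 0 ≤ t) (ht' : t ≤ 1 / 10000) (hs : 0 ≤ s)
    (h : t < s ^ 2) : 100 * t ≤ s :=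
  le_of_sq_le_sq (by nlinarith) hs

lemma exists_goodRadius_lt_and_ge (hκ : 0 < κ) (hη : 0 < η) :
    ∃ M > 0, ∀ t > 0, M * t ≤ 1 → ∀ r, 100 * t ≤ r →
      (∃ a < r, |a - r| ≤ r / 100000 ∧ GoodRadius κ η t a) ∧
        ∃ b ≥ r, |b - r| ≤ r / 100000 ∧ GoodRadius κ η t b := by
  obtain ⟨M, hM, hgood⟩ := exists_goodRadius hκ hη
  refine ⟨M + 10000, by positivity, fun t ht hMt r hr ↦ ?_⟩
  have := mul_pos hM ht
  have hsq : t ^ 2 ≤ t / 10000 := by nlinarith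
  have : 0 < t ^ 2 := by positivity
  obtain ⟨a, ha₁, ha₂, ha⟩ := hgood t ht (by linarith) (r - 3 * t ^ 2) (by linarith)
  obtain ⟨b, hb₁, hb₂, hb⟩ := hgood t ht (by linarith) r (by linarith)
  exact ⟨⟨a, by linarith, abs_le.2 ⟨by linarith, by linarith⟩, ha⟩,
    ⟨b, hb₁, abs_le.2 ⟨by linarith, by linarith⟩, hb⟩⟩

lemma abs_two_pi_mul_mul_sub_le {f s S a b N : ℝ} (hκ : 0 ≤ κ) (hf : 0 < f) (hs : 0 ≤ s)
    (hsS : s ≤ S) (ha : |a - s| ≤ s / 100000) (hb : |b - S| ≤ S / 100000)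
    (hκf : κ * f ≤ S ^ 2 / 1000) (hπf : 7 * π * f ≤ S ^ 3 / 100)
    (hN : |2 * π * N - (4 / 3 * b ^ 3 / f + 2 * κ * b - (4 / 3 * a ^ 3 / f + 2 * κ * a))| ≤
      7 * π) :
    |2 * π * f * N - 4 / 3 * (S ^ 3 - s ^ 3)| ≤ S ^ 3 / 40 := by
  have hS := hs.trans hsS
  have hshift : |2 * (κ * f) * (b - a)| ≤ S ^ 3 / 250 := by
    have hba : |b - a| ≤ 2 * S := by
      rw [abs_le] at *
      constructor <;> linarith
    calc |2 * (κ * f) * (b - a)| = 2 * (κ * f) * |b - a| := by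
          rw [abs_mul, abs_of_nonneg (by positivity)]
      _ ≤ 2 * (S ^ 2 / 1000) * (2 * S) := by gcongr
      _ = S ^ 3 / 250 := by ring
  have hscaled : |2 * π * f * N - 4 / 3 * (b ^ 3 - a ^ 3) - 2 * (κ * f) * (b - a)| ≤
      S ^ 3 / 100 :=
    calc |2 * π * f * N - 4 / 3 * (b ^ 3 - a ^ 3) - 2 * (κ * f) * (b - a)|
        = |2 * π * N - (4 / 3 * b ^ 3 / f + 2 * κ * b - (4 / 3 * a ^ 3 / f + 2 * κ * a))| * f := by
          rw [← abs_of_pos hf, ← abs_mul, abs_of_pos hf]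
          congr 1
          field_simp
          ring
      _ ≤ 7 * π * f := by gcongr
      _ ≤ S ^ 3 / 100 := hπf
  have hcube : s ^ 3 ≤ S ^ 3 := by gcongr
  have ha3 := abs_cube_sub_cube_le hs ha
  have hb3 := abs_cube_sub_cube_le hS hb
  rw [abs_le] at *
  constructor <;> linarith

lemma exists_finite_abs_two_pi_mul_pow_mul_sum_sub_le (hκ : 0 < κ) (hη : 0 < η) :
    ∃ M > 0, ∀ t > 0, M * t ≤ 1 → ∀ s S a b : ℝ, 0 ≤ s → s ≤ S → t < s ^ 2 → a ≤ b →
      |a - s| ≤ s / 100000 → |b - S| ≤ S / 100000 → GoodRadius κ η t a → GoodRadius κ η t b →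
      ∃ hfin : {z : ℂ | 0 < z.re ∧ a ^ 2 < ‖z‖ ∧ ‖z‖ < b ^ 2 ∧ Df κ η (t ^ 100) z = 0}.Finite,
        |2 * π * t ^ 100 * (∑ z ∈ hfin.toFinset, (vanishingOrder (Df κ η (t ^ 100)) z : ℝ)) -
          4 / 3 * (S ^ 3 - s ^ 3)| ≤ S ^ 3 / 40 := by
  obtain ⟨M, hM, hcount⟩ := exists_finite_abs_two_pi_mul_sum_vanishingOrder_sub_le hκ hη
  refine ⟨M + 1000 * κ + 10000, by positivity,
    fun t ht hMt s S a b hs hsS hts hab ha hb hga hgb ↦ ?_⟩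
  have := mul_pos hM ht
  have := mul_pos hκ ht
  have ht₁ : t ≤ 1 / 10000 := by linarith
  have hst := hundred_mul_le_of_lt_sq ht.le ht₁ hs hts
  have hpow {n : ℕ} (hn : n ≤ 100) : t ^ 100 ≤ t ^ n :=
    pow_le_pow_of_le_one ht.le (by linarith) hn
  obtain ⟨hfin, hN⟩ := hcount t ht (by linarith) a b (by linarith [abs_le.1 ha]) hab hga hgb
  refine ⟨hfin, abs_two_pi_mul_mul_sub_le hκ.le (by positivity) hs hsS ha hb ?_ ?_ hN⟩
  · calc κ * t ^ 100 ≤ κ * t ^ 2 := by gcongr ?_ * ?_; exact hpow (by norm_num)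
      _ = κ * t * t := by ring
      _ ≤ 1 / 1000 * S ^ 2 := by
        gcongr
        · linarith
        · exact hts.le.trans (by gcongr)
      _ = S ^ 2 / 1000 := by ring
  · calc 7 * π * t ^ 100 ≤ 7 * 4 * t ^ 3 :=
          mul_le_mul (by linarith [Real.pi_le_four]) (hpow (by norm_num)) (by positivity)
            (by norm_num)
      _ ≤ (100 * t) ^ 3 / 100 := by
        have : 0 < t ^ 3 := by positivity
        linarith
      _ ≤ S ^ 3 / 100 := by
        gcongr
        exact hst.trans hsS

lemma exists_finite_sum_between (m : ℂ → ℕ) {P : ℂ → Prop} {r₁ r r₂ R₁ R R₂ : ℝ} (hr₁ : r₁ < r)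
    (hr₂ : r ≤ r₂) (hR₁ : R₁ ≤ R) (hR₂ : R ≤ R₂)
    (hin : {z : ℂ | 0 < z.re ∧ r₂ < ‖z‖ ∧ ‖z‖ < R₁ ∧ P z}.Finite)
    (hout : {z : ℂ | 0 < z.re ∧ r₁ < ‖z‖ ∧ ‖z‖ < R₂ ∧ P z}.Finite) :
    ∃ hfin : {z : ℂ | 0 < z.re ∧ r ≤ ‖z‖ ∧ ‖z‖ < R ∧ P z}.Finite,
      ∑ z ∈ hin.toFinset, (m z : ℝ) ≤ ∑ z ∈ hfin.toFinset, (m z : ℝ) ∧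
        ∑ z ∈ hfin.toFinset, (m z : ℝ) ≤ ∑ z ∈ hout.toFinset, (m z : ℝ) := by
  have hsub_in : {z : ℂ | 0 < z.re ∧ r₂ < ‖z‖ ∧ ‖z‖ < R₁ ∧ P z} ⊆
      {z : ℂ | 0 < z.re ∧ r ≤ ‖z‖ ∧ ‖z‖ < R ∧ P z} :=
    fun z ⟨hre, hlo, hhi, hz⟩ ↦ ⟨hre, hr₂.trans hlo.le, hhi.trans_le hR₁, hz⟩
  have hsub_out : {z : ℂ | 0 < z.re ∧ r ≤ ‖z‖ ∧ ‖z‖ < R ∧ P z} ⊆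
      {z : ℂ | 0 < z.re ∧ r₁ < ‖z‖ ∧ ‖z‖ < R₂ ∧ P z} :=
    fun z ⟨hre, hlo, hhi, hz⟩ ↦ ⟨hre, hr₁.trans_le hlo, hhi.trans_le hR₂, hz⟩
  have hmono {U V : Set ℂ} (hU : U.Finite) (hV : V.Finite) (hUV : U ⊆ V) :
      ∑ z ∈ hU.toFinset, (m z : ℝ) ≤ ∑ z ∈ hV.toFinset, (m z : ℝ) :=
    Finset.sum_le_sum_of_subset_of_nonneg (Finite.toFinset_subset_toFinset.2 hUV)
      fun _ _ _ ↦ Nat.cast_nonneg _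
  exact ⟨hout.subset hsub_out, hmono _ _ hsub_in, hmono _ _ hsub_out⟩

theorem exists_finite_two_pi_mul_pow_mul_sum_mem_Ioo (hκ : 0 < κ) (hη : 0 < η) :
    ∃ M > 0, ∀ t > 0, M * t ≤ 1 → ∀ s S : ℝ, 0 ≤ s → 0 ≤ S → t < s ^ 2 → 2 * s ^ 2 < S ^ 2 →
      ∃ hfin : {z : ℂ | 0 < z.re ∧ s ^ 2 ≤ ‖z‖ ∧ ‖z‖ < S ^ 2 ∧ Df κ η (t ^ 100) z = 0}.Finite,
        2 * π * t ^ 100 * (∑ z ∈ hfin.toFinset, (vanishingOrder (Df κ η (t ^ 100)) z : ℝ)) ∈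
          Ioo (S ^ 3 - 5 / 3 * s ^ 3) (5 / 3 * S ^ 3 - s ^ 3) := by
  obtain ⟨M₁, hM₁, hradius⟩ := exists_goodRadius_lt_and_ge hκ hη
  obtain ⟨M₂, hM₂, hcount⟩ := exists_finite_abs_two_pi_mul_pow_mul_sum_sub_le hκ hη
  refine ⟨M₁ + M₂ + 10000, by positivity, fun t ht hMt s S hs hS hts hsS ↦ ?_⟩
  have := mul_pos hM₁ ht
  have := mul_pos hM₂ ht
  have hst := hundred_mul_le_of_lt_sq ht.le (by linarith) hs hts
  have hsS' : 5 / 4 * s ≤ S := le_of_sq_le_sq (by nlinarith) hS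
  obtain ⟨⟨a, has, ha_near, ha⟩, b, hsb, hb_near, hb⟩ := hradius t ht (by linarith) s hst
  obtain ⟨⟨c, hcS, hc_near, hc⟩, d, hSd, hd_near, hd⟩ :=
    hradius t ht (by linarith) S (by linarith)
  have ha₀ : 0 ≤ a := by linarith [abs_le.1 ha_near]
  have hbc : b ≤ c := by linarith [abs_le.1 hb_near, abs_le.1 hc_near]
  have hc₀ : 0 ≤ c := by linarith
  obtain ⟨hfin_out, hout⟩ :=
    hcount t ht (by linarith) s S a d hs (by linarith) hts (by linarith) ha_near hd_near ha hd
  obtain ⟨hfin_in, hin⟩ :=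
    hcount t ht (by linarith) s S b c hs (by linarith) hts hbc hb_near hc_near hb hc
  obtain ⟨hfin, hle_in, hle_out⟩ := exists_finite_sum_between (vanishingOrder (Df κ η (t ^ 100)))
    (pow_lt_pow_left₀ has ha₀ two_ne_zero) (pow_le_pow_left₀ hs hsb 2)
    (pow_le_pow_left₀ hc₀ hcS.le 2) (pow_le_pow_left₀ hS hSd 2) hfin_in hfin_out
  have hπt : 0 ≤ 2 * π * t ^ 100 := by positivity
  have := mul_le_mul_of_nonneg_left hle_in hπt
  have := mul_le_mul_of_nonneg_left hle_out hπt
  have : 0 < S ^ 3 := pow_pos (by linarith) 3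
  have : 0 ≤ s ^ 3 := by positivity
  rw [abs_le] at hin hout
  exact ⟨hfin, by linarith, by linarith⟩

lemma rpow_three_halves {x : ℝ} (hx : 0 ≤ x) : x ^ (3 / 2 : ℝ) = √x ^ 3 := by
  rw [Real.sqrt_eq_rpow, ← Real.rpow_natCast, ← Real.rpow_mul hx]
  norm_num

lemma two_mul_rpow_three_halves_le {x y : ℝ} (hx : 0 ≤ x) (hxy : 2 * x ≤ y) :
    2 * x ^ (3 / 2 : ℝ) ≤ y ^ (3 / 2 : ℝ) :=
  calc 2 * x ^ (3 / 2 : ℝ) ≤ 2 ^ (3 / 2 : ℝ) * x ^ (3 / 2 : ℝ) := by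
        gcongr
        exact Real.self_le_rpow_of_one_le one_le_two (by norm_num)
    _ = (2 * x) ^ (3 / 2 : ℝ) := (Real.mul_rpow zero_le_two hx).symm
    _ ≤ y ^ (3 / 2 : ℝ) := by gcongr

lemma lt_and_lt_of_two_pi_mul_mem_Ioo {ε f x y N : ℝ} (hε : 0 ≤ ε) (hf : 0 < f) (hx : 0 ≤ x)
    (hxy : 2 * x ≤ y)
    (hN : 2 * π * f * N ∈ Ioo (y ^ (3 / 2 : ℝ) - 5 / 3 * x ^ (3 / 2 : ℝ))
      (5 / 3 * y ^ (3 / 2 : ℝ) - x ^ (3 / 2 : ℝ))) :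
    (1 - ε) / (2 * π * f) * (y ^ (3 / 2 : ℝ) - 5 / 3 * x ^ (3 / 2 : ℝ)) < N ∧
      N < (1 + ε) / (2 * π * f) * (5 / 3 * y ^ (3 / 2 : ℝ) - x ^ (3 / 2 : ℝ)) := by
  have hpow := two_mul_rpow_three_halves_le hx hxy
  have : 0 ≤ x ^ (3 / 2 : ℝ) := by positivity
  have : 0 ≤ ε * (y ^ (3 / 2 : ℝ) - 5 / 3 * x ^ (3 / 2 : ℝ)) := mul_nonneg hε (by linarith)
  have : 0 ≤ ε * (5 / 3 * y ^ (3 / 2 : ℝ) - x ^ (3 / 2 : ℝ)) := mul_nonneg hε (by linarith)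
  obtain ⟨hlo, hhi⟩ := hN
  constructor
  · rw [div_mul_eq_mul_div, div_lt_iff₀ (by positivity)]
    linarith
  · rw [div_mul_eq_mul_div, lt_div_iff₀ (by positivity)]
    linarith

theorem stmt11_general {κ η : ℝ} (hκ : 0 < κ) (hη : 0 < η) :
    ∃ f₀ > (0 : ℝ), ∀ f : ℝ, 0 < f → f < f₀ → ∀ Rl Ru : ℝ,
      f ^ ((1 : ℝ) / 100) < Rl → 2 * Rl < Ru →
      ∃ hfin : {z : ℂ | 0 < z.re ∧ Rl ≤ ‖z‖ ∧ ‖z‖ < Ru ∧ Df κ η f z = 0}.Finite,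
        2 * π * f * (∑ z ∈ hfin.toFinset, (vanishingOrder (Df κ η f) z : ℝ)) ∈
          Ioo (Ru ^ ((3 : ℝ) / 2) - 5 / 3 * Rl ^ ((3 : ℝ) / 2))
            (5 / 3 * Ru ^ ((3 : ℝ) / 2) - Rl ^ ((3 : ℝ) / 2)) := by
  obtain ⟨M, hM, hcount⟩ := exists_finite_two_pi_mul_pow_mul_sum_mem_Ioo hκ hη
  refine ⟨(1 / M) ^ 100, by positivity, fun f hf hf₀ Rl Ru hRl hRu ↦ ?_⟩
  obtain ⟨t, ht, rfl⟩ : ∃ t > 0, t ^ 100 = f :=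
    ⟨f ^ (1 / 100 : ℝ), Real.rpow_pos_of_pos hf _, by
      rw [← Real.rpow_natCast, ← Real.rpow_mul hf.le]; norm_num⟩
  have hMt : M * t ≤ 1 := by
    rw [mul_comm, ← le_div_iff₀ hM]
    exact (lt_of_pow_lt_pow_left₀ 100 (by positivity) hf₀).le
  have hroot : (t ^ 100) ^ ((1 : ℝ) / 100) = t := by
    rw [← Real.rpow_natCast, ← Real.rpow_mul ht.le]; norm_num
  rw [hroot] at hRl
  have hRl₀ : 0 ≤ Rl := by linarith
  have hRu₀ : 0 ≤ Ru := by linarith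
  have hbounds := hcount t ht hMt √Rl √Ru (Real.sqrt_nonneg _) (Real.sqrt_nonneg _)
  simp only [Real.sq_sqrt hRl₀, Real.sq_sqrt hRu₀] at hbounds
  rw [rpow_three_halves hRl₀, rpow_three_halves hRu₀]
  exact hbounds hRl hRu

end Counting

end

/-- Counting of the resonances of the Stark Hamiltonian in the right half-plane
annulus `{Rl ≤ |z| < Ru, Re z > 0}`: their number `N`, with multiplicity, is
finite and comparable with `R^{3/2}/f`. -/
theorem stmt11 (κ η : ℝ) (hκ : 0 < κ) (hη : 0 < η) (ε : ℝ) (hε : 0 < ε) :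
    ∃ f₀ > (0 : ℝ), ∀ f : ℝ, 0 < f → f < f₀ → ∀ Rl Ru : ℝ,
      f ^ ((1 : ℝ) / 100) < Rl → 2 * Rl < Ru →
      ∃ hfin : {z : ℂ | 0 < z.re ∧ Rl ≤ ‖z‖ ∧ ‖z‖ < Ru ∧
          Df κ η f z = 0}.Finite,
        ((1 - ε) / (2 * π * f)) * (Ru ^ ((3 : ℝ) / 2) - (5 / 3) * Rl ^ ((3 : ℝ) / 2)) <
          (∑ z ∈ hfin.toFinset, (vanishingOrder (Df κ η f) z : ℝ)) ∧
        (∑ z ∈ hfin.toFinset, (vanishingOrder (Df κ η f) z : ℝ)) <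
          ((1 + ε) / (2 * π * f)) * ((5 / 3) * Ru ^ ((3 : ℝ) / 2) - Rl ^ ((3 : ℝ) / 2)) := by
  obtain ⟨f₀, hf₀, hcount⟩ := stmt11_general hκ hη
  exact ⟨f₀, hf₀, fun f hf hff₀ Rl Ru hRl hRu ↦ (hcount f hf hff₀ Rl Ru hRl hRu).imp fun _ hN ↦
    lt_and_lt_of_two_pi_mul_mem_Ioo hε.le hf ((Real.rpow_nonneg hf.le _).trans hRl.le) hRu.le hN⟩
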